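/- Let S ∈ [0,T] and let B ⊆ ℝ^d be a Borel set such that for each x ∈ B there exists at most one solution γ of the ODE γ' = V(t,γ) on [0,T] with γ(S) = x. If μ is a probability measure concentrated on B, then there exists at most one nonnegative-measure-valued solution (μ_t) ∈ C([0,T], M⁺(ℝ^d)) of the continuity equation with μ_S = μ. -/

import Mathlib

open MeasureTheory Set
open scoped ENNReal NNReal Topology

noncomputable section

/-- A solution of the ODE `γ' = V(t,γ)` on `[0,T]`, in integral form. -/
def IsSolution {d : ℕ} (T : ℝ) (hT : 0 ≤ T)
    (V : ℝ → EuclideanSpace ℝ (Fin d) → EuclideanSpace ℝ (Fin d))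
    (γ : C(Set.Icc (0:ℝ) T, EuclideanSpace ℝ (Fin d))) : Prop :=
  ∀ t : Set.Icc (0:ℝ) T,
    γ t - γ ⟨0, Set.left_mem_Icc.mpr hT⟩ =
      ∫ s in (0:ℝ)..(t:ℝ), V s (γ (Set.projIcc 0 T hT s))

/-- A (nonnegative-)measure-valued solution of the continuity equation,
in weak (integral) form. -/
def IsMeasureSolution {d : ℕ} (T : ℝ)
    (V : ℝ → EuclideanSpace ℝ (Fin d) → EuclideanSpace ℝ (Fin d))
    (μ : ℝ → Measure (EuclideanSpace ℝ (Fin d))) : Prop :=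
  ∀ u : EuclideanSpace ℝ (Fin d) → ℝ, ContDiff ℝ (⊤ : ℕ∞) u → HasCompactSupport u →
    ∀ s ∈ Set.Icc (0:ℝ) T, ∀ t ∈ Set.Icc (0:ℝ) T,
      (∫ x, u x ∂μ t) - (∫ x, u x ∂μ s) =
        ∫ σ in s..t, ∫ x, fderiv ℝ u x (V σ x) ∂μ σ

namespace ContinuityEquation
open Filter ProbabilityTheory Metric
set_option linter.unusedSectionVars false

section Smoothing

variable {E : Type*} [NormedAddCommGroup E] [NormedSpace ℝ E] [FiniteDimensional ℝ E]

/-- A Lipschitz function is uniformly close to a smooth function with the same Lipschitz constant,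
and compactness of the support is preserved. -/
theorem exists_contDiff_lipschitzWith_approx {f : E → ℝ} {K : ℝ≥0} (hf : LipschitzWith K f)
    {ε : ℝ} (hε : 0 < ε) :
    ∃ u : E → ℝ, ContDiff ℝ (⊤ : ℕ∞) u ∧ LipschitzWith K u ∧ (∀ x, |u x - f x| ≤ ε) ∧
      (HasCompactSupport f → HasCompactSupport u) := by
  borelize E
  let μ : Measure E := Measure.addHaar
  have hK : (0 : ℝ) < K + 1 := by positivity
  have hr : 0 < ε / (K + 1) := by positivity
  let φ : ContDiffBump (0 : E) := ⟨ε / (K + 1) / 2, ε / (K + 1), half_pos hr, half_lt_self hr⟩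
  have hli : LocallyIntegrable f μ := hf.continuous.locallyIntegrable
  have hcs : HasCompactSupport (φ.normed μ) := φ.hasCompactSupport_normed
  have hce : ConvolutionExists (φ.normed μ) f (ContinuousLinearMap.lsmul ℝ ℝ) μ :=
    hcs.convolutionExists_left _ φ.continuous_normed hli
  refine ⟨_, hcs.contDiff_convolution_left (μ := μ) (.lsmul ℝ ℝ)
    φ.contDiff_normed hli, ?_, ?_, ?_⟩
  · refine LipschitzWith.of_dist_le_mul fun x y => ?_
    rw [Real.dist_eq, convolution_def, convolution_def, ← integral_sub (hce x) (hce y)]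
    calc _ ≤ ∫ t, φ.normed μ t * (K * dist x y) ∂μ := by
          rw [← Real.norm_eq_abs]
          refine norm_integral_le_of_norm_le (φ.integrable_normed.mul_const _)
            (Eventually.of_forall fun t => ?_)
          simp only [ContinuousLinearMap.lsmul_apply, smul_eq_mul]
          rw [← mul_sub, norm_mul, Real.norm_of_nonneg (φ.nonneg_normed t)]
          refine mul_le_mul_of_nonneg_left ?_ (φ.nonneg_normed t)
          have := hf.dist_le_mul (x - t) (y - t)
          rwa [dist_sub_right, Real.dist_eq] at this
      _ = K * dist x y := by rw [integral_mul_const, φ.integral_normed, one_mul]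
  · intro x
    have := φ.dist_normed_convolution_le (μ := μ) (x₀ := x) (ε := ε) hf.continuous.aestronglyMeasurable
      (g := f) (fun y hy => ?_)
    · rwa [Real.dist_eq] at this
    · refine (hf.dist_le_mul y x).trans ?_
      have h1 : dist y x ≤ ε / (K + 1) := (mem_ball.1 hy).le
      calc (K : ℝ) * dist y x ≤ (K + 1) * (ε / (K + 1)) := by gcongr; linarith
        _ = ε := by field_simp
  · intro h
    exact hcs.convolution _ h

/-- The indicator of an open set is a pointwise limit of test functions with values in `[0, 1]`. -/
theorem exists_test_tendsto_indicator {U : Set E} (hU : IsOpen U) :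
    ∃ u : ℕ → E → ℝ, (∀ n, ContDiff ℝ (⊤ : ℕ∞) (u n)) ∧ (∀ n, HasCompactSupport (u n)) ∧
      (∀ n x, u n x ∈ Icc (0 : ℝ) 1) ∧
      ∀ x, Tendsto (fun n => u n x) atTop (𝓝 (U.indicator (fun _ => (1 : ℝ)) x)) := by
  obtain ⟨f, hfs, hfc, hfr⟩ := hU.exists_contDiff_support_eq (n := (⊤ : ℕ∞))
  have hpos : ∀ n : ℕ, (0 : ℝ) < n + 1 := fun n => by positivity
  let χ : ∀ n : ℕ, ContDiffBump (0 : E) := fun n => ⟨n + 1, n + 2, hpos n, by linarith⟩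
  refine ⟨fun n x => χ n x * Real.smoothTransition (n * f x), fun n => ?_, fun n => ?_,
    fun n x => ?_, fun x => ?_⟩
  · exact (χ n).contDiff.mul (Real.smoothTransition.contDiff.comp (contDiff_const.mul hfc))
  · exact (χ n).hasCompactSupport.mul_right
  · exact ⟨mul_nonneg (χ n).nonneg (Real.smoothTransition.nonneg _),
      mul_le_one₀ (χ n).le_one (Real.smoothTransition.nonneg _) (Real.smoothTransition.le_one _)⟩
  · by_cases hx : x ∈ U
    · rw [indicator_of_mem hx]
      have hfx : 0 < f x := by
        rw [← hfs] at hx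
        exact lt_of_le_of_ne (hfr ⟨x, rfl⟩).1 (Ne.symm hx)
      refine tendsto_const_nhds.congr' ?_
      have h1 : ∀ᶠ n : ℕ in atTop, 1 ≤ n * f x :=
        (tendsto_natCast_atTop_atTop.atTop_mul_const hfx).eventually_ge_atTop 1
      have h2 : ∀ᶠ n : ℕ in atTop, ‖x‖ ≤ n := tendsto_natCast_atTop_atTop.eventually_ge_atTop _
      filter_upwards [h1, h2] with n hn1 hn2
      rw [Real.smoothTransition.one_of_one_le hn1, (χ n).one_of_mem_closedBall, mul_one]
      simp only [mem_closedBall, dist_zero_right, χ]; linarith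
    · rw [indicator_of_notMem hx]
      have : f x = 0 := by rw [← hfs] at hx; simpa using hx
      simp [this, Real.smoothTransition.zero_of_nonpos le_rfl]

variable [MeasurableSpace E] [BorelSpace E]

theorem tendsto_integral_test {U : Set E} (hU : IsOpen U) (μ : Measure E) [IsFiniteMeasure μ]
    {u : ℕ → E → ℝ} (hc : ∀ n, ContDiff ℝ (⊤ : ℕ∞) (u n)) (hI : ∀ n x, u n x ∈ Icc (0 : ℝ) 1)
    (hl : ∀ x, Tendsto (fun n => u n x) atTop (𝓝 (U.indicator (fun _ => (1 : ℝ)) x))) :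
    Tendsto (fun n => ∫ x, u n x ∂μ) atTop (𝓝 (μ.real U)) := by
  have h := tendsto_integral_of_dominated_convergence (μ := μ) (F := u) (fun _ => (1 : ℝ))
    (fun n => (hc n).continuous.aestronglyMeasurable) (integrable_const _)
    (fun n => Eventually.of_forall fun x => by
      rw [Real.norm_of_nonneg (hI n x).1]; exact (hI n x).2)
    (Eventually.of_forall hl)
  rwa [integral_indicator_const _ hU.measurableSet, smul_eq_mul, mul_one] at h

/-- Finite measures which agree on test functions are equal. -/
theorem measure_ext_of_test {μ ν : Measure E} [IsFiniteMeasure μ] [IsFiniteMeasure ν]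
    (h : ∀ u : E → ℝ, ContDiff ℝ (⊤ : ℕ∞) u → HasCompactSupport u → (∀ x, u x ∈ Icc (0 : ℝ) 1) →
      ∫ x, u x ∂μ = ∫ x, u x ∂ν) : μ = ν := by
  have key : ∀ U : Set E, IsOpen U → μ U = ν U := by
    intro U hU
    obtain ⟨u, hc, hs, hI, hl⟩ := exists_test_tendsto_indicator hU
    have h1 := tendsto_integral_test hU μ hc hI hl
    have h2 := tendsto_integral_test hU ν hc hI hl
    have h3 : μ.real U = ν.real U := tendsto_nhds_unique h1
      (h2.congr fun n => (h _ (hc n) (hs n) (hI n)).symm)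
    exact (measureReal_eq_measureReal_iff).1 h3
  refine ext_of_generate_finite _ (BorelSpace.measurable_eq (α := E)) isPiSystem_isOpen
    (fun U hU => key U hU) (key _ isOpen_univ)

/-- A family of finite measures is measurable if its integrals of test functions are. -/
theorem measurable_of_test {Ω : Type*} [MeasurableSpace Ω] {μ : Ω → Measure E}
    [∀ ω, IsFiniteMeasure (μ ω)]
    (h : ∀ u : E → ℝ, ContDiff ℝ (⊤ : ℕ∞) u → HasCompactSupport u →
      Measurable fun ω => ∫ x, u x ∂μ ω) : Measurable μ := by
  have key : ∀ U : Set E, IsOpen U → Measurable fun ω => μ ω U := by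
    intro U hU
    obtain ⟨u, hc, hs, hI, hl⟩ := exists_test_tendsto_indicator hU
    have h1 : Measurable fun ω => (μ ω).real U :=
      measurable_of_tendsto_metrizable (fun n => h _ (hc n) (hs n))
        (tendsto_pi_nhds.2 fun ω => tendsto_integral_test hU (μ ω) hc hI hl)
    have : (fun ω => μ ω U) = fun ω => ENNReal.ofReal ((μ ω).real U) := by
      ext ω; rw [ofReal_measureReal]
    rw [this]
    exact h1.ennreal_ofReal
  exact Measurable.measure_of_isPiSystem (BorelSpace.measurable_eq (α := E)) isPiSystem_isOpen
    (fun U hU => key U hU) (key _ isOpen_univ)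

end Smoothing

section Weak

/-- If all increments of `I` on an interval are given by (possibly junk) integrals of `F`, then `I` is
continuous there. -/
theorem continuousOn_of_sub_eq_integral {a b : ℝ} {I F : ℝ → ℝ}
    (h : ∀ s ∈ Icc a b, ∀ t ∈ Icc a b, I t - I s = ∫ σ in s..t, F σ) :
    ContinuousOn I (Icc a b) := by
  rcases lt_or_ge b a with hab | hab
  · simp [Icc_eq_empty_of_lt hab]
  have ha : a ∈ Icc a b := left_mem_Icc.2 hab
  have hb : b ∈ Icc a b := right_mem_Icc.2 hab
  by_cases hF : IntervalIntegrable F volume a b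
  · have h1 : ContinuousOn (fun t => I a + ∫ σ in a..t, F σ) (Icc a b) := by
      have := intervalIntegral.continuousOn_primitive_interval (μ := volume) (f := F) (a := a) (b := b)
        (by rw [uIcc_of_le hab, integrableOn_Icc_iff_integrableOn_Ioc]
            exact (intervalIntegrable_iff_integrableOn_Ioc_of_le hab).1 hF)
      rw [uIcc_of_le hab] at this
      exact continuousOn_const.add this
    refine h1.congr fun t ht => ?_
    have := h a ha t ht
    simp only; linarith
  · have h0 : I b = I a := by
      have := h a ha b hb
      rw [intervalIntegral.integral_undef hF] at this; linarith
    refine (continuousOn_const (c := I a)).congr fun t ht => ?_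
    by_cases h1 : IntervalIntegrable F volume a t
    · have h2 : ¬ IntervalIntegrable F volume t b := fun h2 => hF (h1.trans h2)
      have := h t ht b hb
      rw [intervalIntegral.integral_undef h2] at this; simp only; linarith
    · have := h a ha t ht
      rw [intervalIntegral.integral_undef h1] at this; simp only; linarith

/-- A function with quadratically small increments is constant. -/
theorem eq_of_abs_sub_le_sq {s t C : ℝ} (hst : s ≤ t) {H : ℝ → ℝ}
    (h : ∀ r ∈ Icc s t, ∀ r' ∈ Icc s t, r ≤ r' → |H r' - H r| ≤ C * (r' - r) ^ 2) :
    H t = H s := by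
  let k : ℝ → ℝ := fun x => H (projIcc s t hst x)
  have hk : ∀ x y, |k x - k y| ≤ |C| * |x - y| ^ 2 := by
    intro x y
    have h1 : ∀ x y, x ≤ y → |k y - k x| ≤ |C| * |y - x| ^ 2 := fun x y hxy => by
      refine (h _ (projIcc s t hst x).2 _ (projIcc s t hst y).2 (monotone_projIcc hst hxy)).trans ?_
      rw [← sq_abs]
      refine mul_le_mul (le_abs_self C) ?_ (by positivity) (abs_nonneg _)
      refine pow_le_pow_left₀ (abs_nonneg _) ?_ 2
      have := abs_projIcc_sub_projIcc (c := y) (d := x) hst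
      simpa using this
    rcases le_total x y with hxy | hxy
    · rw [abs_sub_comm, abs_sub_comm x]; exact h1 x y hxy
    · exact h1 y x hxy
  have hd : ∀ x, HasDerivAt k 0 x := by
    intro x
    rw [hasDerivAt_iff_isLittleO]
    simp only [smul_zero, sub_zero]
    have h1 : (fun y => k y - k x) =O[𝓝 x] fun y => |y - x| ^ 2 :=
      Asymptotics.IsBigO.of_bound |C| (Eventually.of_forall fun y => by
        rw [Real.norm_eq_abs, Real.norm_of_nonneg (by positivity)]; exact hk y x)
    refine h1.trans_isLittleO ?_
    have := Asymptotics.isLittleO_pow_sub_sub x (m := 2) (by norm_num)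
    simpa [Real.norm_eq_abs, sq_abs] using this
  have := is_const_of_deriv_eq_zero (fun x => (hd x).differentiableAt) (fun x => (hd x).deriv) t s
  simpa [k, hst] using this

variable {E : Type*} [NormedAddCommGroup E] [NormedSpace ℝ E] [MeasurableSpace E]

theorem abs_integral_le_of_support {μ : Measure E} [IsFiniteMeasure μ] [BorelSpace E] {F : E → ℝ} {A R : ℝ}
    (hA : ∀ x, ‖x‖ ≤ R → |F x| ≤ A) (hF : ∀ x, R < ‖x‖ → F x = 0) :
    |∫ x, F x ∂μ| ≤ A * μ.real (closedBall 0 R) := by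
  rw [← setIntegral_eq_integral_of_forall_compl_eq_zero (s := closedBall (0 : E) R)
    (fun x hx => hF x (by simpa using hx))]
  rw [← Real.norm_eq_abs]
  exact norm_setIntegral_le_of_norm_le_const (f := F) (measure_lt_top _ _)
    (fun x hx => hA x (mem_closedBall_zero_iff.1 hx))

/-- A weakly continuous family of finite measures solving the continuity equation with a velocity
field bounded by one. -/
structure IsCESolution (V : ℝ → E → E) (κ : Kernel ℝ E) : Prop where
  measurable : Measurable (Function.uncurry V)
  norm_le : ∀ t x, ‖V t x‖ ≤ 1
  finite : ∀ t, IsFiniteMeasure (κ t)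
  weak : ∀ u : E → ℝ, ContDiff ℝ (⊤ : ℕ∞) u → HasCompactSupport u → ∀ s t,
    (∫ x, u x ∂κ t) - (∫ x, u x ∂κ s) = ∫ σ in s..t, ∫ x, fderiv ℝ u x (V σ x) ∂κ σ

namespace IsCESolution
variable [BorelSpace E] [FiniteDimensional ℝ E] {V : ℝ → E → E} {κ : Kernel ℝ E}

theorem exists_mass_bound (h : IsCESolution V κ) (a b R : ℝ) :
    ∃ M, 0 ≤ M ∧ ∀ t ∈ Icc a b, (κ t).real (closedBall 0 R) ≤ M := by
  have := h.finite
  let f : ContDiffBump (0 : E) := ⟨|R| + 1, |R| + 2, by positivity, by linarith⟩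
  have hc : ContinuousOn (fun t => ∫ x, f x ∂κ t) (Icc a b) :=
    continuousOn_of_sub_eq_integral fun s _ t _ => h.weak f f.contDiff f.hasCompactSupport s t
  obtain ⟨M, hM⟩ := isCompact_Icc.exists_bound_of_continuousOn hc
  refine ⟨|M|, abs_nonneg _, fun t ht => ?_⟩
  have h1 : Integrable f (κ t) := f.continuous.integrable_of_hasCompactSupport f.hasCompactSupport
  calc (κ t).real (closedBall 0 R) = ∫ x, (closedBall (0 : E) R).indicator 1 x ∂κ t := by
        rw [integral_indicator_one measurableSet_closedBall]
    _ ≤ ∫ x, f x ∂κ t := by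
        refine integral_mono ((integrable_const 1).indicator measurableSet_closedBall) h1 fun x => ?_
        by_cases hx : x ∈ closedBall (0 : E) R
        · rw [indicator_of_mem hx]
          refine (f.one_of_mem_closedBall ?_).ge
          exact closedBall_subset_closedBall ((le_abs_self R).trans (by simp [f])) hx
        · rw [indicator_of_notMem hx]
          exact f.nonneg
    _ ≤ M := (le_abs_self _).trans (hM t ht)
    _ ≤ |M| := le_abs_self _

end IsCESolution
end Weak

section TimeDependent

variable {E : Type*} [NormedAddCommGroup E] [NormedSpace ℝ E] [MeasurableSpace E]
  [BorelSpace E] [FiniteDimensional ℝ E] {V : ℝ → E → E} {κ : Kernel ℝ E}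

theorem intervalIntegrable_integral_of_support [IsSFiniteKernel κ] (hκ : ∀ t, IsFiniteMeasure (κ t))
    {F : ℝ × E → ℝ} (hF : Measurable F) {s t R M C : ℝ} (hst : s ≤ t)
    (hM : ∀ σ ∈ Icc s t, (κ σ).real (closedBall 0 R) ≤ M) (hC : 0 ≤ C)
    (hb : ∀ σ ∈ Icc s t, ∀ x, ‖x‖ ≤ R → |F (σ, x)| ≤ C)
    (h0 : ∀ σ ∈ Icc s t, ∀ x, R < ‖x‖ → F (σ, x) = 0) :
    IntervalIntegrable (fun σ => ∫ x, F (σ, x) ∂κ σ) volume s t ∧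
      ∀ σ ∈ Icc s t, |∫ x, F (σ, x) ∂κ σ| ≤ C * M := by
  have hb' : ∀ σ ∈ Icc s t, |∫ x, F (σ, x) ∂κ σ| ≤ C * M := fun σ hσ =>
    (abs_integral_le_of_support (hb σ hσ) (h0 σ hσ)).trans
      (mul_le_mul_of_nonneg_left (hM σ hσ) hC)
  refine ⟨?_, hb'⟩
  rw [intervalIntegrable_iff_integrableOn_Ioc_of_le hst]
  refine Measure.integrableOn_of_bounded (M := C * M) (by simp) ?_ ?_
  · exact (StronglyMeasurable.integral_kernel_prod_right' (κ := κ)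
      hF.stronglyMeasurable).aestronglyMeasurable
  · exact (ae_restrict_iff' measurableSet_Ioc).2 (Eventually.of_forall fun σ hσ =>
      hb' σ (Ioc_subset_Icc_self hσ))

theorem integrable_of_support {μ : Measure E} [IsFiniteMeasure μ] {F : E → ℝ} (hF : Measurable F)
    {C R : ℝ} (hC : 0 ≤ C) (hb : ∀ x, ‖x‖ ≤ R → |F x| ≤ C) (h0 : ∀ x, R < ‖x‖ → F x = 0) :
    Integrable F μ :=
  Integrable.of_bound hF.aestronglyMeasurable C (Eventually.of_forall fun x => by
    rcases le_or_gt ‖x‖ R with hx | hx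
    · exact hb x hx
    · simpa [h0 x hx] using hC)

namespace IsCESolution

/-- The weak formulation extends to time-dependent test functions. -/
theorem weak_time_dependent [IsSFiniteKernel κ] (h : IsCESolution V κ) {φ : ℝ × E → ℝ}
    (hφ : ContDiff ℝ (⊤ : ℕ∞) φ) {s t R : ℝ} (hst : s ≤ t)
    (hR : ∀ τ ∈ Ioo (s - 1) (t + 1), ∀ x, R < ‖x‖ → φ (τ, x) = 0) :
    (∫ x, φ (t, x) ∂κ t) - (∫ x, φ (s, x) ∂κ s) =
      ∫ σ in s..t, ∫ x, fderiv ℝ φ (σ, x) (1, V σ x) ∂κ σ := by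
  have hκ := h.finite
  have hVm : ∀ σ, Measurable (V σ) := fun σ => h.measurable.comp measurable_prodMk_left
  set D := fderiv ℝ φ with hD
  have hDs : ContDiff ℝ (⊤ : ℕ∞) D := hφ.fderiv_right le_rfl
  have hdφ : Differentiable ℝ φ := hφ.differentiable (by simp)
  have hdD : Differentiable ℝ D := hDs.differentiable (by simp)
  have hDc : Continuous D := hDs.continuous
  have hD2c : Continuous (fderiv ℝ D) := hDs.continuous_fderiv (by simp)
  have hO : ∀ τ ∈ Icc s t, ∀ x, R < ‖x‖ → φ =ᶠ[𝓝 (τ, x)] 0 := fun τ hτ x hx => by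
    have : Ioo (s - 1) (t + 1) ×ˢ {x : E | R < ‖x‖} ∈ 𝓝 (τ, x) :=
      prod_mem_nhds (Ioo_mem_nhds (by linarith [hτ.1]) (by linarith [hτ.2]))
        ((isOpen_lt continuous_const continuous_norm).mem_nhds hx)
    filter_upwards [this] with p hp using hR p.1 hp.1 p.2 hp.2
  have hD0 : ∀ τ ∈ Icc s t, ∀ x, R < ‖x‖ → D (τ, x) = 0 := fun τ hτ x hx => by
    rw [hD, (hO τ hτ x hx).fderiv_eq]; simp
  have hDD0 : ∀ τ ∈ Icc s t, ∀ x, R < ‖x‖ → fderiv ℝ D (τ, x) = 0 := fun τ hτ x hx => by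
    have : D =ᶠ[𝓝 (τ, x)] fderiv ℝ (0 : ℝ × E → ℝ) := (hO τ hτ x hx).fderiv
    rw [this.fderiv_eq]
    have h0 : fderiv ℝ (0 : ℝ × E → ℝ) = 0 := by ext1 p; simp
    rw [h0]; simp
  have hφ0 : ∀ τ ∈ Icc s t, ∀ x, R < ‖x‖ → φ (τ, x) = 0 := fun τ hτ x hx =>
    (hO τ hτ x hx).eq_of_nhds
  obtain ⟨M, hM0, hM⟩ := h.exists_mass_bound s t R
  set K : Set (ℝ × E) := Icc s t ×ˢ closedBall 0 R with hK
  have hKc : IsCompact K := isCompact_Icc.prod (isCompact_closedBall 0 R)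
  have hKv : Convex ℝ K := (convex_Icc s t).prod (convex_closedBall 0 R)
  obtain ⟨C', hC'⟩ := hKc.exists_bound_of_continuousOn hDc.continuousOn
  obtain ⟨L', hL'⟩ := hKc.exists_bound_of_continuousOn (f := fderiv ℝ D) hD2c.continuousOn
  obtain ⟨B', hB'⟩ := hKc.exists_bound_of_continuousOn hφ.continuous.continuousOn
  obtain ⟨C, hC0, hC⟩ : ∃ C, 0 ≤ C ∧ ∀ p ∈ K, ‖D p‖ ≤ C :=
    ⟨|C'|, abs_nonneg _, fun p hp => (hC' p hp).trans (le_abs_self _)⟩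
  obtain ⟨L, hL0, hL⟩ : ∃ C, 0 ≤ C ∧ ∀ p ∈ K, ‖fderiv ℝ D p‖ ≤ C :=
    ⟨|L'|, abs_nonneg _, fun p hp => (hL' p hp).trans (le_abs_self _)⟩
  obtain ⟨B, hB0, hB⟩ : ∃ C, 0 ≤ C ∧ ∀ p ∈ K, ‖φ p‖ ≤ C :=
    ⟨|B'|, abs_nonneg _, fun p hp => (hB' p hp).trans (le_abs_self _)⟩
  have hmem : ∀ τ ∈ Icc s t, ∀ x : E, ‖x‖ ≤ R → (τ, x) ∈ K := fun τ hτ x hx =>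
    ⟨hτ, by simpa using hx⟩
  have hDL : ∀ p ∈ K, ∀ q ∈ K, ‖D q - D p‖ ≤ L * ‖q - p‖ := fun p hp q hq =>
    hKv.norm_image_sub_le_of_norm_fderiv_le (fun x _ => hdD x) hL hp hq
  have hDt : ∀ τ ∈ Icc s t, ∀ τ' ∈ Icc s t, ∀ x : E, ‖x‖ ≤ R →
      ‖D (τ', x) - D (τ, x)‖ ≤ L * |τ' - τ| := fun τ hτ τ' hτ' x hx => by
    have := hDL _ (hmem τ hτ x hx) _ (hmem τ' hτ' x hx)
    simpa [Prod.norm_def] using this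
  have hw1 : ∀ σ x, ‖((1 : ℝ), V σ x)‖ ≤ 1 := fun σ x => by
    simpa [Prod.norm_def] using h.norm_le σ x
  have hw2 : ∀ σ x, ‖((0 : ℝ), V σ x)‖ ≤ 1 := fun σ x => by
    simpa [Prod.norm_def] using h.norm_le σ x
  have hw3 : ‖((1 : ℝ), (0 : E))‖ ≤ 1 := by simp [Prod.norm_def]
  have happ : ∀ (A : ℝ × E →L[ℝ] ℝ) (a : ℝ) (w : ℝ × E), ‖A‖ ≤ a → ‖w‖ ≤ 1 → |A w| ≤ a :=
    fun A a w hA hw => (A.le_of_opNorm_le_of_le hA hw).trans (by simp)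
  have hfd : ∀ τ x v, fderiv ℝ (fun y => φ (τ, y)) x v = D (τ, x) (0, v) := fun τ x v => by
    have : HasFDerivAt (fun y => φ (τ, y)) ((D (τ, x)).comp (ContinuousLinearMap.inr ℝ ℝ E)) x :=
      (hdφ (τ, x)).hasFDerivAt.comp x (hasFDerivAt_prodMk_right τ x)
    rw [this.fderiv]; simp
  have hsupp : ∀ F : E → ℝ, (∀ x, R < ‖x‖ → F x = 0) → HasCompactSupport F := fun F hF =>
    HasCompactSupport.intro (isCompact_closedBall 0 R) (fun x hx => hF x (by simpa using hx))
  have hsub : ∀ r ∈ Icc s t, ∀ r' ∈ Icc s t, Icc r r' ⊆ Icc s t := fun r hr r' hr' =>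
    Icc_subset_Icc hr.1 hr'.2
  -- the four integrands, as functions on space-time
  have m1 : Measurable fun p : ℝ × E => D p (1, V p.1 p.2) := by
    have : Measurable fun p : ℝ × E => (D p, ((1 : ℝ), V p.1 p.2)) :=
      hDc.measurable.prodMk (measurable_const.prodMk h.measurable)
    exact (isBoundedBilinearMap_apply.continuous.measurable).comp this
  have m2 : ∀ r', Measurable fun p : ℝ × E => D (r', p.2) (0, V p.1 p.2) := fun r' => by
    have : Measurable fun p : ℝ × E => (D (r', p.2), ((0 : ℝ), V p.1 p.2)) :=
      (hDc.measurable.comp (measurable_const.prodMk measurable_snd)).prodMk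
        (measurable_const.prodMk h.measurable)
    exact (isBoundedBilinearMap_apply.continuous.measurable).comp this
  have m3 : ∀ r, Measurable fun p : ℝ × E => D (r, p.2) (1, 0) := fun r => by
    have : Continuous fun p : ℝ × E => D (r, p.2) (1, 0) := by fun_prop
    exact this.measurable
  have hA : IntervalIntegrable (fun σ => ∫ x, D (σ, x) (1, V σ x) ∂κ σ) volume s t :=
    (intervalIntegrable_integral_of_support (F := fun p : ℝ × E => D p (1, V p.1 p.2)) hκ m1 hst hM hC0
      (fun σ hσ x hx => happ _ _ _ (hC _ (hmem σ hσ x hx)) (hw1 σ x))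
      (fun σ hσ x hx => by simp [hD0 σ hσ x hx])).1
  let H : ℝ → ℝ := fun r => (∫ x, φ (r, x) ∂κ r) - ∫ σ in s..r, ∫ x, D (σ, x) (1, V σ x) ∂κ σ
  have key : H t = H s := by
    refine eq_of_abs_sub_le_sq (C := 4 * L * M) hst fun r hr r' hr' hrr => ?_
    have hI := hsub r hr r' hr'
    have hrI : r ∈ Icc r r' := left_mem_Icc.2 hrr
    have hM' : ∀ σ ∈ Icc r r', (κ σ).real (closedBall 0 R) ≤ M := fun σ hσ => hM σ (hI hσ)
    have i1 := (intervalIntegrable_integral_of_support (F := fun p : ℝ × E => D p (1, V p.1 p.2)) hκ m1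
      hrr hM' hC0
      (fun σ hσ x hx => happ _ _ _ (hC _ (hmem σ (hI hσ) x hx)) (hw1 σ x))
      (fun σ hσ x hx => by simp [hD0 σ (hI hσ) x hx])).1
    have i2 := (intervalIntegrable_integral_of_support
      (F := fun p : ℝ × E => D (r', p.2) (0, V p.1 p.2)) hκ (m2 r')
      hrr hM' hC0
      (fun σ hσ x hx => happ _ _ _ (hC _ (hmem r' hr' x hx)) (hw2 σ x))
      (fun σ hσ x hx => by simp [hD0 r' hr' x hx])).1
    have i3 := (intervalIntegrable_integral_of_support
      (F := fun p : ℝ × E => D (r, p.2) (1, 0)) hκ (m3 r)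
      hrr hM' hC0
      (fun σ hσ x hx => happ _ _ _ (hC _ (hmem r hr x hx)) hw3)
      (fun σ hσ x hx => by simp [hD0 r hr x hx])).1
    simp only at i1 i2 i3
    set w : E → ℝ := fun x => D (r, x) (1, 0) with hw
    have hws : ContDiff ℝ (⊤ : ℕ∞) w := by
      have h1 : ContDiff ℝ (⊤ : ℕ∞) fun x : E => D (r, x) :=
        hDs.comp (contDiff_const.prodMk contDiff_id)
      exact h1.clm_apply contDiff_const
    have hw0 : ∀ x, R < ‖x‖ → w x = 0 := fun x hx => by simp [hw, hD0 r hr x hx]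
    have hwd : ∀ x v, fderiv ℝ w x v = fderiv ℝ D (r, x) (0, v) (1, 0) := fun x v => by
      have h1 : HasFDerivAt (fun y => D (r, y))
          ((fderiv ℝ D (r, x)).comp (ContinuousLinearMap.inr ℝ ℝ E)) x :=
        (hdD (r, x)).hasFDerivAt.comp x (hasFDerivAt_prodMk_right r x)
      have h2 := h1.clm_apply (hasFDerivAt_const ((1 : ℝ), (0 : E)) x)
      rw [hw, h2.fderiv]; simp
    -- oscillation of the integral of `w`
    have hosc : ∀ σ ∈ Icc r r', |(∫ x, w x ∂κ r) - ∫ x, w x ∂κ σ| ≤ L * M * (r' - r) := by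
      intro σ hσ
      rw [abs_sub_comm, h.weak w hws (hsupp w hw0) r σ, ← Real.norm_eq_abs]
      refine (intervalIntegral.norm_integral_le_of_norm_le_const (C := L * M)
        fun ζ hζ => ?_).trans ?_
      · rw [uIoc_of_le hσ.1] at hζ
        have hζ' : ζ ∈ Icc s t := hI ⟨hζ.1.le, hζ.2.trans hσ.2⟩
        refine (abs_integral_le_of_support (R := R) (A := L) (fun x hx => ?_) fun x hx => ?_).trans
          (mul_le_mul_of_nonneg_left (hM ζ hζ') hL0)
        · rw [hwd]
          refine happ _ _ _ ?_ hw3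
          exact (((fderiv ℝ D (r, x)).le_of_opNorm_le_of_le (hL _ (hmem r hr x hx))
            (hw2 ζ x))).trans (by simp)
        · rw [hwd, hDD0 r hr x hx]; simp
      · refine mul_le_mul_of_nonneg_left ?_ (by positivity)
        rw [abs_of_nonneg (sub_nonneg.2 hσ.1)]; linarith [hσ.2]
    have e1 : (∫ x, φ (r', x) ∂κ r') - (∫ x, φ (r', x) ∂κ r) =
        ∫ σ in r..r', ∫ x, D (r', x) (0, V σ x) ∂κ σ := by
      rw [h.weak (fun x => φ (r', x)) (hφ.comp (contDiff_const.prodMk contDiff_id))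
        (hsupp _ (hφ0 r' hr')) r r']
      simp only [hfd]
    have b2 : |(∫ x, φ (r', x) ∂κ r) - (∫ x, φ (r, x) ∂κ r) - (r' - r) * ∫ x, w x ∂κ r| ≤
        L * (r' - r) * (r' - r) * M := by
      have j1 : Integrable (fun x => φ (r', x)) (κ r) := integrable_of_support
        (hφ.continuous.measurable.comp measurable_prodMk_left) hB0
        (fun x hx => hB _ (hmem r' hr' x hx)) (hφ0 r' hr')
      have j2 : Integrable (fun x => φ (r, x)) (κ r) := integrable_of_support
        (hφ.continuous.measurable.comp measurable_prodMk_left) hB0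
        (fun x hx => hB _ (hmem r hr x hx)) (hφ0 r hr)
      have j3 : Integrable w (κ r) := integrable_of_support hws.continuous.measurable hC0
        (fun x hx => happ _ _ _ (hC _ (hmem r hr x hx)) hw3) hw0
      rw [← integral_const_mul, ← integral_sub j1 j2, 
        ← integral_sub (show Integrable (fun x => φ (r', x) - φ (r, x)) (κ r) from j1.sub j2)
          (j3.const_mul _)]
      refine (abs_integral_le_of_support (R := R) (A := L * (r' - r) * (r' - r)) (fun x hx => ?_)
        fun x hx => ?_).trans (mul_le_mul_of_nonneg_left (hM r hr) ?_)
      · have hseg : Convex ℝ (Icc r r' ×ˢ ({x} : Set E)) := (convex_Icc r r').prod (convex_singleton x)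
        have hrr0 : 0 ≤ r' - r := sub_nonneg.2 hrr
        have := hseg.norm_image_sub_le_of_norm_fderiv_le' (f := φ) (φ := D (r, x)) (C := L * (r' - r))
          (fun p _ => hdφ p) (fun p hp => ?_)
          (show (r, x) ∈ _ from ⟨hrI, rfl⟩) (show (r', x) ∈ _ from ⟨right_mem_Icc.2 hrr, rfl⟩)
        · have e : ((r', x) - (r, x) : ℝ × E) = (r' - r) • ((1 : ℝ), (0 : E)) := by simp
          rw [e, norm_smul, map_smul, Real.norm_of_nonneg hrr0] at this
          refine this.trans ?_
          refine mul_le_mul_of_nonneg_left (mul_le_of_le_one_right hrr0 hw3) (by positivity)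
        · obtain ⟨p1, p2⟩ := p
          obtain ⟨hp1, rfl⟩ := hp
          refine (hDt r hr p1 (hI hp1) p2 hx).trans (mul_le_mul_of_nonneg_left ?_ hL0)
          rw [abs_of_nonneg (sub_nonneg.2 hp1.1)]; linarith [hp1.2]
      · simp [hφ0 r' hr' x hx, hφ0 r hr x hx, hw0 x hx]
      · have hrr0 : 0 ≤ r' - r := sub_nonneg.2 hrr
        positivity
    have b3 : |(r' - r) * (∫ x, w x ∂κ r) - ∫ σ in r..r', ∫ x, w x ∂κ σ| ≤
        L * M * (r' - r) * (r' - r) := by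
      have : (r' - r) * (∫ x, w x ∂κ r) = ∫ σ in r..r', ∫ x, w x ∂κ r := by simp
      rw [this, ← intervalIntegral.integral_sub intervalIntegrable_const i3, ← Real.norm_eq_abs]
      refine (intervalIntegral.norm_integral_le_of_norm_le_const (C := L * M * (r' - r))
        fun σ hσ => ?_).trans (by rw [abs_of_nonneg (sub_nonneg.2 hrr)])
      rw [uIoc_of_le hrr] at hσ
      exact hosc σ (Ioc_subset_Icc_self hσ)
    have b4 : |((∫ σ in r..r', ∫ x, D (r', x) (0, V σ x) ∂κ σ) + ∫ σ in r..r', ∫ x, w x ∂κ σ) -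
        ∫ σ in r..r', ∫ x, D (σ, x) (1, V σ x) ∂κ σ| ≤ 2 * L * (r' - r) * M * (r' - r) := by
      rw [← intervalIntegral.integral_add i2 i3, ← intervalIntegral.integral_sub (i2.add i3) i1,
        ← Real.norm_eq_abs]
      refine (intervalIntegral.norm_integral_le_of_norm_le_const (C := 2 * L * (r' - r) * M)
        fun σ hσ => ?_).trans (by rw [abs_of_nonneg (sub_nonneg.2 hrr)])
      rw [uIoc_of_le hrr] at hσ
      have hσ1 := Ioc_subset_Icc_self hσ
      have hσ' := hI hσ1
      have j1 : Integrable (fun x => D (σ, x) (1, V σ x)) (κ σ) := integrable_of_support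
        (m1.comp measurable_prodMk_left) hC0
        (fun x hx => happ _ _ _ (hC _ (hmem σ hσ' x hx)) (hw1 σ x))
        (fun x hx => by simp [hD0 σ hσ' x hx])
      have j2 : Integrable (fun x => D (r', x) (0, V σ x)) (κ σ) := integrable_of_support
        ((m2 r').comp (measurable_prodMk_left (x := σ))) hC0
        (fun x hx => happ _ _ _ (hC _ (hmem r' hr' x hx)) (hw2 σ x))
        (fun x hx => by simp [hD0 r' hr' x hx])
      have j3 : Integrable w (κ σ) := integrable_of_support hws.continuous.measurable hC0
        (fun x hx => happ _ _ _ (hC _ (hmem r hr x hx)) hw3) hw0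
      rw [← integral_add j2 j3, Real.norm_eq_abs, ← integral_sub
        (show Integrable (fun x => D (r', x) (0, V σ x) + w x) (κ σ) from j2.add j3) j1]
      have hrr0 : 0 ≤ r' - r := sub_nonneg.2 hrr
      refine (abs_integral_le_of_support (R := R) (A := 2 * L * (r' - r)) (fun x hx => ?_)
        fun x hx => ?_).trans (mul_le_mul_of_nonneg_left (hM σ hσ') (by positivity))
      · have e : D (r', x) (0, V σ x) + w x - D (σ, x) (1, V σ x) =
            (D (r', x) - D (σ, x)) (0, V σ x) + (D (r, x) - D (σ, x)) (1, 0) := by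
          have : ((1 : ℝ), V σ x) = (0, V σ x) + (1, 0) := by simp
          rw [this]; simp only [map_add, hw, sub_apply]; ring
        rw [e]
        have a1 := happ _ _ _ (hDt σ hσ' r' hr' x hx) (hw2 σ x)
        have a2 := happ _ _ _ (hDt σ hσ' r hr x hx) hw3
        have a3 : |r' - σ| ≤ r' - r := by
          rw [abs_of_nonneg (sub_nonneg.2 hσ1.2)]; linarith [hσ1.1]
        have a4 : |r - σ| ≤ r' - r := by
          rw [abs_sub_comm, abs_of_nonneg (sub_nonneg.2 hσ1.1)]; linarith [hσ1.2]
        refine (abs_add_le _ _).trans ?_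
        have := mul_le_mul_of_nonneg_left a3 hL0
        have := mul_le_mul_of_nonneg_left a4 hL0
        linarith
      · simp [hD0 r' hr' x hx, hD0 σ hσ' x hx, hw0 x hx]
    have hA1 : IntervalIntegrable (fun σ => ∫ x, D (σ, x) (1, V σ x) ∂κ σ) volume s r :=
      hA.mono_set (by
        rw [uIcc_of_le hst, uIcc_of_le hr.1]; exact Icc_subset_Icc le_rfl hr.2)
    have hadd := intervalIntegral.integral_add_adjacent_intervals hA1 i1
    have e : H r' - H r = ((∫ x, φ (r', x) ∂κ r) - (∫ x, φ (r, x) ∂κ r) - (r' - r) * ∫ x, w x ∂κ r)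
        + ((r' - r) * (∫ x, w x ∂κ r) - ∫ σ in r..r', ∫ x, w x ∂κ σ)
        + (((∫ σ in r..r', ∫ x, D (r', x) (0, V σ x) ∂κ σ) + ∫ σ in r..r', ∫ x, w x ∂κ σ) -
        ∫ σ in r..r', ∫ x, D (σ, x) (1, V σ x) ∂κ σ) := by
      simp only [H]; rw [← hadd]; linarith
    rw [e]
    refine (abs_add_three _ _ _).trans ?_
    nlinarith
  simp only [H, intervalIntegral.integral_same] at key
  linarith

end IsCESolution
end TimeDependent

section Mass

variable {E : Type*} [NormedAddCommGroup E] [NormedSpace ℝ E] [MeasurableSpace E]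
  [BorelSpace E] [FiniteDimensional ℝ E] {V : ℝ → E → E} {κ : Kernel ℝ E}

/-- A smooth function on space-time which is antitone along all lines of direction `(δ, v)`,
`‖v‖ ≤ 1`. -/
theorem exists_cone_cutoff (δ : ℝ) (hδ : δ = 1 ∨ δ = -1) (a : ℝ) :
    ∃ φ : ℝ × E → ℝ, ContDiff ℝ (⊤ : ℕ∞) φ ∧ (∀ p, φ p ∈ Icc 0 1) ∧
      (∀ p : ℝ × E, ‖p.2‖ + δ * p.1 ≤ a → φ p = 1) ∧
      (∀ p : ℝ × E, a + 3 ≤ ‖p.2‖ + δ * p.1 → φ p = 0) ∧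
      ∀ p v, ‖v‖ ≤ 1 → δ * fderiv ℝ φ p (1, v) ≤ 0 := by
  obtain ⟨N, hN, hN1, hN2, -⟩ := exists_contDiff_lipschitzWith_approx (E := E)
    (f := fun x => ‖x‖) lipschitzWith_one_norm one_pos
  let φ : ℝ × E → ℝ := fun p => Real.smoothTransition (a + 2 - (N p.2 + δ * p.1))
  have hφ : ContDiff ℝ (⊤ : ℕ∞) φ := Real.smoothTransition.contDiff.comp (by fun_prop)
  have hNn := fun x => abs_le.1 (hN2 x)
  refine ⟨φ, hφ, fun p => ⟨Real.smoothTransition.nonneg _, Real.smoothTransition.le_one _⟩,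
    fun p hp => Real.smoothTransition.one_of_one_le (by linarith [(hNn p.2).2]),
    fun p hp => Real.smoothTransition.zero_of_nonpos (by linarith [(hNn p.2).1]), fun p v hv => ?_⟩
  have hN' : |fderiv ℝ N p.2 v| ≤ 1 :=
    ((fderiv ℝ N p.2).le_of_opNorm_le_of_le (norm_fderiv_le_of_lipschitz ℝ hN1) hv).trans (by simp)
  have hNd : HasFDerivAt N (fderiv ℝ N p.2) p.2 :=
    (hN.differentiable (by simp) p.2).hasFDerivAt
  have h1 : HasFDerivAt (fun p : ℝ × E => a + 2 - (N p.2 + δ * p.1)) _ p :=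
    ((hNd.comp p hasFDerivAt_snd).add (hasFDerivAt_fst.const_mul δ)).const_sub (a + 2)
  have h2 : HasDerivAt Real.smoothTransition _ (a + 2 - (N p.2 + δ * p.1)) :=
    ((Real.smoothTransition.contDiff (n := 1)).differentiable (by simp) _).hasDerivAt
  have h3 := (HasDerivAt.comp_hasFDerivAt (h₂ := Real.smoothTransition) p h2 h1).fderiv
  have h4 : 0 ≤ deriv Real.smoothTransition (a + 2 - (N p.2 + δ * p.1)) :=
    Real.smoothTransition.monotone.deriv_nonneg
  rw [show φ = Real.smoothTransition ∘ fun p : ℝ × E => a + 2 - (N p.2 + δ * p.1) from rfl, h3]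
  simp only [smul_apply, neg_apply, add_apply, ContinuousLinearMap.comp_apply,
    ContinuousLinearMap.coe_fst', ContinuousLinearMap.coe_snd', smul_eq_mul]
  have h5 := abs_le.1 hN'
  rcases hδ with rfl | rfl <;> nlinarith

theorem measure_univ_le_of_closedBall {μ : Measure E} {m : ℝ≥0∞}
    (h : ∀ R : ℝ, 0 ≤ R → μ (closedBall 0 R) ≤ m) : μ univ ≤ m := by
  have hmono : Monotone fun n : ℕ => closedBall (0 : E) n := fun a b hab =>
    closedBall_subset_closedBall (by exact_mod_cast hab)
  rw [← iUnion_closedBall_nat (0 : E), hmono.measure_iUnion]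
  exact iSup_le fun n => h n (by positivity)

theorem measure_le_measure_univ_of_integral_le {μ ν : Measure E} [IsFiniteMeasure μ]
    [IsFiniteMeasure ν] {f g : E → ℝ} (hf : Continuous f) (hf' : ∀ x, f x ∈ Icc 0 1)
    (hg' : ∀ x, g x ∈ Icc 0 1) {R : ℝ} (hR : ∀ x, ‖x‖ ≤ R → f x = 1)
    (h : ∫ x, f x ∂μ ≤ ∫ x, g x ∂ν) : μ (closedBall 0 R) ≤ ν univ := by
  have h1 : μ.real (closedBall 0 R) ≤ ∫ x, f x ∂μ := by
    rw [← integral_indicator_one measurableSet_closedBall]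
    refine integral_mono ((integrable_const 1).indicator measurableSet_closedBall)
      (Integrable.of_bound hf.aestronglyMeasurable 1 (Eventually.of_forall fun x => ?_)) fun x => ?_
    · rw [Real.norm_of_nonneg (hf' x).1]; exact (hf' x).2
    · by_cases hx : x ∈ closedBall (0 : E) R
      · rw [indicator_of_mem hx, hR x (mem_closedBall_zero_iff.1 hx)]; rfl
      · rw [indicator_of_notMem hx]; exact (hf' x).1
  have h2 : ∫ x, g x ∂ν ≤ ν.real univ := by
    have := norm_integral_le_of_norm_le_const (μ := ν) (f := g) (C := 1)
      (Eventually.of_forall fun x => by rw [Real.norm_of_nonneg (hg' x).1]; exact (hg' x).2)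
    rw [one_mul] at this
    exact (le_abs_self _).trans this
  have h3 := (h1.trans h).trans h2
  rwa [measureReal_def, measureReal_def, ENNReal.toReal_le_toReal (measure_ne_top _ _)
    (measure_ne_top _ _)] at h3

namespace IsCESolution

theorem measure_univ_eq_of_le [IsSFiniteKernel κ] (h : IsCESolution V κ) {s t : ℝ} (hst : s ≤ t) :
    κ t univ = κ s univ := by
  have hκ := h.finite
  have hts : 0 ≤ t - s := sub_nonneg.2 hst
  have gen : ∀ δ : ℝ, (δ = 1 ∨ δ = -1) → ∀ R : ℝ, ∃ φ : ℝ × E → ℝ, Continuous φ ∧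
      (∀ p, φ p ∈ Icc 0 1) ∧ (∀ τ ∈ Icc s t, ∀ x, ‖x‖ ≤ R → φ (τ, x) = 1) ∧
      δ * ((∫ x, φ (t, x) ∂κ t) - (∫ x, φ (s, x) ∂κ s)) ≤ 0 := by
    intro δ hδ R
    obtain ⟨φ, hφ, h01, h1, h0, hd⟩ := exists_cone_cutoff (E := E) δ hδ (R + |s| + |t|)
    have hδτ : ∀ τ, |δ * τ| = |τ| := fun τ => by rcases hδ with rfl | rfl <;> simp
    refine ⟨φ, hφ.continuous, h01, fun τ hτ x hx => h1 _ ?_, ?_⟩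
    · have := le_abs_self (δ * τ)
      rw [hδτ] at this
      have : |τ| ≤ |s| + |t| := (abs_le_max_abs_abs hτ.1 hτ.2).trans
        (max_le_add_of_nonneg (abs_nonneg _) (abs_nonneg _))
      simp only; linarith
    · rw [h.weak_time_dependent hφ hst (R := R + |s| + |t| + 3 + (|s| + |t| + 1))
        (fun τ hτ x hx => h0 _ ?_)]
      · rw [← intervalIntegral.integral_const_mul]
        have : 0 ≤ ∫ σ in s..t, -(δ * ∫ x, fderiv ℝ φ (σ, x) (1, V σ x) ∂κ σ) := by
          refine intervalIntegral.integral_nonneg hst fun σ _ => ?_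
          rw [← integral_const_mul, ← integral_neg]
          exact integral_nonneg fun x => neg_nonneg.2 (hd _ _ (h.norm_le σ x))
        rw [intervalIntegral.integral_neg] at this
        linarith
      · have := neg_abs_le (δ * τ)
        rw [hδτ] at this
        have : |τ| ≤ |s| + |t| + 1 := by
          rw [abs_le]
          constructor
          · linarith [hτ.1, neg_abs_le s, abs_nonneg t]
          · linarith [hτ.2, le_abs_self t, abs_nonneg s]
        simp only; linarith
  refine le_antisymm (measure_univ_le_of_closedBall fun R _ => ?_)
    (measure_univ_le_of_closedBall fun R _ => ?_)
  · obtain ⟨φ, hc, h01, h1, hle⟩ := gen 1 (Or.inl rfl) R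
    exact measure_le_measure_univ_of_integral_le (f := fun x => φ (t, x)) (g := fun x => φ (s, x))
      (by fun_prop) (fun x => h01 _) (fun x => h01 _) (h1 t ⟨hst, le_rfl⟩) (by linarith)
  · obtain ⟨φ, hc, h01, h1, hle⟩ := gen (-1) (Or.inr rfl) R
    exact measure_le_measure_univ_of_integral_le (f := fun x => φ (s, x)) (g := fun x => φ (t, x))
      (by fun_prop) (fun x => h01 _) (fun x => h01 _) (h1 s ⟨le_rfl, hst⟩) (by linarith)

theorem measure_univ_eq [IsSFiniteKernel κ] (h : IsCESolution V κ) (s t : ℝ) :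
    κ t univ = κ s univ := by
  rcases le_total s t with hst | hst
  · exact h.measure_univ_eq_of_le hst
  · exact (h.measure_univ_eq_of_le hst).symm

/-- Lipschitz observables evolve in a Lipschitz way. -/
theorem abs_integral_sub_le [IsMarkovKernel κ] (h : IsCESolution V κ) {f : E → ℝ} {K : ℝ≥0}
    (hf : LipschitzWith K f) (hfc : HasCompactSupport f) {s t : ℝ} (hst : s ≤ t) :
    |(∫ x, f x ∂κ t) - ∫ x, f x ∂κ s| ≤ K * (t - s) := by
  refine le_of_forall_pos_le_add fun ε hε => ?_
  obtain ⟨u, hu, huK, huf, huc⟩ := exists_contDiff_lipschitzWith_approx hf (half_pos hε)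
  have hd : ∀ r, |(∫ x, u x ∂κ r) - ∫ x, f x ∂κ r| ≤ ε / 2 := fun r => by
    rw [← integral_sub (hu.continuous.integrable_of_hasCompactSupport (huc hfc))
      (hf.continuous.integrable_of_hasCompactSupport hfc)]
    simpa using norm_integral_le_of_norm_le_const (μ := κ r) (f := fun x => u x - f x)
      (Eventually.of_forall huf)
  have h1 : |(∫ x, u x ∂κ t) - ∫ x, u x ∂κ s| ≤ K * (t - s) := by
    rw [h.weak u hu (huc hfc) s t, ← Real.norm_eq_abs]
    refine (intervalIntegral.norm_integral_le_of_norm_le_const (C := K) fun σ _ => ?_).trans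
      (by rw [abs_of_nonneg (sub_nonneg.2 hst)])
    have := norm_integral_le_of_norm_le_const (μ := κ σ) (f := fun x => fderiv ℝ u x (V σ x))
      (C := K) (Eventually.of_forall fun x => ((fderiv ℝ u x).le_of_opNorm_le_of_le
        (norm_fderiv_le_of_lipschitz ℝ huK) (h.norm_le σ x)).trans (by simp))
    simpa using this
  have a1 := abs_le.1 (hd t)
  have a2 := abs_le.1 (hd s)
  have a3 := abs_le.1 h1
  rw [abs_le]
  constructor <;> linarith

/-- Error of one explicit Euler step. -/
theorem integral_sub_integral_euler_le [IsMarkovKernel κ] (h : IsCESolution V κ) {f : E → ℝ}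
    (hf : LipschitzWith 1 f) (hfc : HasCompactSupport f) {c : E → E} {L : ℝ≥0} {b : ℝ}
    (hc : ContDiff ℝ (⊤ : ℕ∞) c) (hcL : LipschitzWith L c) (hcb : ∀ x, ‖c x‖ ≤ b)
    {s t : ℝ} (hst : s ≤ t) :
    (∫ x, f x ∂κ t) - ∫ x, f (x + (t - s) • c x) ∂κ s ≤
      (∫ σ in s..t, ∫ x, ‖V σ x - c x‖ ∂κ σ) + L * (t - s) * (t - s) := by
  have hts : 0 ≤ t - s := sub_nonneg.2 hst
  have hVm : ∀ σ, Measurable (V σ) := fun σ => h.measurable.comp measurable_prodMk_left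
  have hVc : ∀ σ x, ‖V σ x - c x‖ ≤ 1 + b := fun σ x =>
    (norm_sub_le _ _).trans (add_le_add (h.norm_le σ x) (hcb x))
  have hVci : ∀ σ, Integrable (fun x => ‖V σ x - c x‖) (κ σ) := fun σ =>
    Integrable.of_bound ((hVm σ).sub hc.continuous.measurable).norm.aestronglyMeasurable (1 + b)
      (Eventually.of_forall fun x => by rw [norm_norm]; exact hVc σ x)
  have hm : StronglyMeasurable fun σ => ∫ x, ‖V σ x - c x‖ ∂κ σ := by
    have : Measurable fun p : ℝ × E => ‖V p.1 p.2 - c p.2‖ :=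
      (h.measurable.sub (hc.continuous.measurable.comp measurable_snd)).norm
    exact StronglyMeasurable.integral_kernel_prod_right' (κ := κ) this.stronglyMeasurable
  have hmi : IntervalIntegrable (fun σ => ∫ x, ‖V σ x - c x‖ ∂κ σ) volume s t := by
    rw [intervalIntegrable_iff_integrableOn_Ioc_of_le hst]
    refine Measure.integrableOn_of_bounded (M := 1 + b) (by simp) hm.aestronglyMeasurable
      (Eventually.of_forall fun σ => ?_)
    simpa using norm_integral_le_of_norm_le_const (μ := κ σ) (f := fun x => ‖V σ x - c x‖)
      (Eventually.of_forall fun x => by rw [norm_norm]; exact hVc σ x)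
  refine le_of_forall_pos_le_add fun ε hε => ?_
  obtain ⟨u, hu, huK, huf, huc⟩ := exists_contDiff_lipschitzWith_approx hf (half_pos hε)
  obtain ⟨R, hR⟩ := (huc hfc).isCompact.isBounded.subset_closedBall 0
  have hR' : ∀ x, R < ‖x‖ → u x = 0 := fun x hx =>
    image_eq_zero_of_notMem_tsupport fun hx' => by
      have := mem_closedBall_zero_iff.1 (hR hx'); linarith
  have hb0 : 0 ≤ b := (norm_nonneg _).trans (hcb 0)
  let φ : ℝ × E → ℝ := fun p => u (p.2 + (t - p.1) • c p.2)
  have hφ : ContDiff ℝ (⊤ : ℕ∞) φ := hu.comp (by fun_prop)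
  have hφ0 : ∀ τ ∈ Ioo (s - 1) (t + 1), ∀ x, R + (t - s + 1) * b < ‖x‖ → φ (τ, x) = 0 := by
    intro τ hτ x hx
    refine hR' _ ?_
    have h1 : |t - τ| ≤ t - s + 1 := by rw [abs_le]; constructor <;> linarith [hτ.1, hτ.2]
    have h2 : ‖(t - τ) • c x‖ ≤ (t - s + 1) * b := by
      rw [norm_smul]; exact mul_le_mul h1 (hcb x) (norm_nonneg _) (by linarith)
    have h3 : ‖x‖ ≤ ‖x + (t - τ) • c x‖ + ‖(t - τ) • c x‖ := by
      have := norm_sub_le (x + (t - τ) • c x) ((t - τ) • c x)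
      simpa using this
    simp only; linarith
  have hfd : ∀ σ ∈ Icc s t, ∀ x, fderiv ℝ φ (σ, x) (1, V σ x) ≤ ‖V σ x - c x‖ + L * (t - s) := by
    intro σ hσ x
    have hcd : HasFDerivAt c (fderiv ℝ c x) x := (hc.differentiable (by simp) x).hasFDerivAt
    have h1 : HasFDerivAt (fun p : ℝ × E => p.2 + (t - p.1) • c p.2) _ (σ, x) :=
      (hasFDerivAt_snd (p := (σ, x))).add
        (((hasFDerivAt_fst (p := (σ, x))).const_sub t).smul
          (HasFDerivAt.comp (σ, x) (g := c) hcd hasFDerivAt_snd))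
    have h2 : HasFDerivAt u _ (x + (t - σ) • c x) :=
      (hu.differentiable (by simp) _).hasFDerivAt
    have h3 : fderiv ℝ φ (σ, x) = _ := (HasFDerivAt.comp (σ, x) h2 h1).fderiv
    rw [h3, ContinuousLinearMap.comp_apply]
    refine (le_abs_self _).trans (((fderiv ℝ u _).le_of_opNorm_le
      (norm_fderiv_le_of_lipschitz ℝ huK) _).trans ?_)
    simp only [add_apply, smul_apply, ContinuousLinearMap.comp_apply,
      ContinuousLinearMap.coe_fst', ContinuousLinearMap.coe_snd', ContinuousLinearMap.smulRight_apply,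
      neg_apply, NNReal.coe_one, one_mul, neg_smul, one_smul]
    have e : V σ x + ((t - σ) • fderiv ℝ c x (V σ x) + -c x) =
      (V σ x - c x) + (t - σ) • fderiv ℝ c x (V σ x) := by abel
    rw [e]
    refine (norm_add_le _ _).trans (add_le_add le_rfl ?_)
    rw [norm_smul, mul_comm]
    refine mul_le_mul ?_ ?_ (norm_nonneg _) L.2
    · exact ((fderiv ℝ c x).le_of_opNorm_le_of_le (norm_fderiv_le_of_lipschitz ℝ hcL)
        (h.norm_le σ x)).trans (by simp)
    · rw [Real.norm_of_nonneg (sub_nonneg.2 hσ.2)]; linarith [hσ.1]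
  have main : (∫ x, u x ∂κ t) - ∫ x, u (x + (t - s) • c x) ∂κ s ≤
      (∫ σ in s..t, ∫ x, ‖V σ x - c x‖ ∂κ σ) + L * (t - s) * (t - s) := by
    have h1 := h.weak_time_dependent hφ hst hφ0
    have e1 : ∀ x, φ (t, x) = u x := fun x => by simp [φ]
    simp only [e1] at h1
    rw [show (∫ x, u (x + (t - s) • c x) ∂κ s) = ∫ x, φ (s, x) ∂κ s from rfl, h1]
    have e2 : (∫ σ in s..t, ∫ x, ‖V σ x - c x‖ ∂κ σ) + L * (t - s) * (t - s) =
        ∫ σ in s..t, ((∫ x, ‖V σ x - c x‖ ∂κ σ) + L * (t - s)) := by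
      rw [intervalIntegral.integral_add hmi intervalIntegrable_const]; simp; ring
    rw [e2]
    by_cases hi : IntervalIntegrable (fun σ => ∫ x, fderiv ℝ φ (σ, x) (1, V σ x) ∂κ σ) volume s t
    · refine intervalIntegral.integral_mono_on hst hi (hmi.add intervalIntegrable_const) fun σ hσ => ?_
      have e3 : (∫ x, ‖V σ x - c x‖ ∂κ σ) + L * (t - s) =
          ∫ x, (‖V σ x - c x‖ + L * (t - s)) ∂κ σ := by
        rw [integral_add (hVci σ) (integrable_const _)]; simp
      rw [e3]
      by_cases hi' : Integrable (fun x => fderiv ℝ φ (σ, x) (1, V σ x)) (κ σ)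
      · exact integral_mono hi' ((hVci σ).add (integrable_const _)) fun x => hfd σ hσ x
      · rw [integral_undef hi']
        exact integral_nonneg fun x => by positivity
    · rw [intervalIntegral.integral_undef hi]
      refine intervalIntegral.integral_nonneg hst fun σ _ => ?_
      have : 0 ≤ ∫ x, ‖V σ x - c x‖ ∂κ σ := integral_nonneg fun x => norm_nonneg _
      positivity
  have d1 : |(∫ x, u x ∂κ t) - ∫ x, f x ∂κ t| ≤ ε / 2 := by
    rw [← integral_sub (hu.continuous.integrable_of_hasCompactSupport (huc hfc))
      (hf.continuous.integrable_of_hasCompactSupport hfc)]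
    simpa using norm_integral_le_of_norm_le_const (μ := κ t) (f := fun x => u x - f x)
      (Eventually.of_forall huf)
  have hg : Continuous fun x => x + (t - s) • c x := by have := hc.continuous; fun_prop
  have gi : ∀ v : E → ℝ, Continuous v → HasCompactSupport v →
      Integrable (fun x => v (x + (t - s) • c x)) (κ s) := fun v hv hvc => by
    obtain ⟨C, hC⟩ := hvc.exists_bound_of_continuous hv
    exact Integrable.of_bound (hv.comp hg).aestronglyMeasurable C (Eventually.of_forall fun x => hC _)
  have d2 : |(∫ x, u (x + (t - s) • c x) ∂κ s) - ∫ x, f (x + (t - s) • c x) ∂κ s| ≤ ε / 2 := by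
    rw [← integral_sub (gi u hu.continuous (huc hfc)) (gi f hf.continuous hfc)]
    simpa using norm_integral_le_of_norm_le_const (μ := κ s)
      (f := fun x => u (x + (t - s) • c x) - f (x + (t - s) • c x))
      (Eventually.of_forall fun x => huf (x + (t - s) • c x))
  linarith [(abs_le.1 d1).1, (abs_le.1 d2).2]

end IsCESolution
end Mass

section Kantorovich

/-- Kantorovich–Rubinstein duality on a finite set. -/
theorem exists_coupling_of_finite {ι : Type*} [Fintype ι] [DecidableEq ι] [Nonempty ι]
    (c : ι → ι → ℝ) (hc0 : ∀ i, c i i = 0) (hcs : ∀ i j, c i j = c j i)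
    (hct : ∀ i j k, c i k ≤ c i j + c j k) {a b : ι → ℝ} {e : ℝ}
    (h : ∀ ψ : ι → ℝ, (∀ i j, ψ i - ψ j ≤ c i j) → ∑ i, b i * ψ i - ∑ i, a i * ψ i ≤ e)
    (ha : a ∈ stdSimplex ℝ ι) (hb : b ∈ stdSimplex ℝ ι) :
    ∃ π : ι × ι → ℝ, (∀ p, 0 ≤ π p) ∧ (∀ i, ∑ j, π (i, j) = a i) ∧ (∀ j, ∑ i, π (i, j) = b j) ∧
      ∑ p, π p * c p.1 p.2 ≤ e := by
  let A : (ι × ι → ℝ) →ₗ[ℝ] (ι → ℝ) × (ι → ℝ) × ℝ :=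
    { toFun := fun π => (fun i => ∑ j, π (i, j), fun j => ∑ i, π (i, j), ∑ p, π p * c p.1 p.2)
      map_add' := fun x y => by
        refine Prod.ext (funext fun i => ?_) (Prod.ext (funext fun i => ?_) ?_) <;>
          simp [Finset.sum_add_distrib, add_mul]
      map_smul' := fun m x => by
        refine Prod.ext (funext fun i => ?_) (Prod.ext (funext fun i => ?_) ?_) <;>
          simp [Finset.mul_sum, mul_assoc] }
  let C : Set ((ι → ℝ) × (ι → ℝ) × ℝ) := {a} ×ˢ {b} ×ˢ Iic e
  by_cases hdis : Disjoint (A '' stdSimplex ℝ (ι × ι)) C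
  swap
  · obtain ⟨_, ⟨π, hπ, rfl⟩, h1, h2, h3⟩ := not_disjoint_iff.1 hdis
    exact ⟨π, hπ.1, congrFun h1, congrFun h2, h3⟩
  exfalso
  obtain ⟨l, u, v, hu, huv, hv⟩ := geometric_hahn_banach_compact_closed
    ((convex_stdSimplex ℝ (ι × ι)).linear_image A)
    ((isCompact_stdSimplex ℝ (ι × ι)).image A.continuous_of_finiteDimensional)
    ((convex_singleton a).prod ((convex_singleton b).prod (convex_Iic e)))
    (isClosed_singleton.prod (isClosed_singleton.prod isClosed_Iic)) hdis
  let f : ι → ℝ := fun i => l (fun j => if i = j then 1 else 0, 0, 0)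
  let g : ι → ℝ := fun i => l (0, fun j => if i = j then 1 else 0, 0)
  let m : ℝ := l (0, 0, 1)
  have hl : ∀ x y z, l (x, y, z) = ∑ i, x i * f i + ∑ i, y i * g i + z * m := by
    intro x y z
    have e1 : l (x, 0, 0) = ∑ i, x i * f i := by
      exact LinearMap.pi_apply_eq_sum_univ
        (l.toLinearMap.comp (LinearMap.inl ℝ (ι → ℝ) ((ι → ℝ) × ℝ))) x
    have e2 : l (0, y, 0) = ∑ i, y i * g i := by
      exact LinearMap.pi_apply_eq_sum_univ
        (l.toLinearMap.comp ((LinearMap.inr ℝ (ι → ℝ) ((ι → ℝ) × ℝ)).comp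
          (LinearMap.inl ℝ (ι → ℝ) ℝ))) y
    have e3 : l (0, 0, z) = z * m := by
      have : ((0, 0, z) : (ι → ℝ) × (ι → ℝ) × ℝ) = z • (0, 0, 1) := by simp
      rw [this, map_smul]; rfl
    rw [← e1, ← e2, ← e3, ← map_add, ← map_add]; simp
  have hfg : ∀ i j, f i + g j + c i j * m < u := by
    intro i j
    have := hu _ ⟨Pi.single (i, j) 1, single_mem_stdSimplex ℝ (i, j), rfl⟩
    have e1 : A (Pi.single (i, j) 1) = (Pi.single i 1, Pi.single j 1, c i j) := by
      refine Prod.ext (funext fun k => ?_) (Prod.ext (funext fun k => ?_) ?_)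
      · by_cases hk : k = i <;> simp [A, Pi.single_apply, hk, Finset.filter_eq']
      · by_cases hk : k = j <;> simp [A, Pi.single_apply, hk, Finset.filter_eq']
      · simp [A, Pi.single_apply]
    rw [e1, hl] at this
    simpa [Pi.single_apply] using this
  have hab : ∀ z ≤ e, v < ∑ i, a i * f i + ∑ i, b i * g i + z * m := fun z hz => by
    have := hv (a, b, z) ⟨rfl, rfl, hz⟩
    rwa [hl] at this
  have hm : m ≤ 0 := by
    by_contra hm
    push Not at hm
    set w := ∑ i, a i * f i + ∑ i, b i * g i with hw
    have := hab (min e ((v - w) / m)) (min_le_left _ _)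
    have h2 : min e ((v - w) / m) * m ≤ v - w := by
      calc _ ≤ (v - w) / m * m := mul_le_mul_of_nonneg_right (min_le_right _ _) hm.le
        _ = v - w := by field_simp
    linarith
  let G : ι → ℝ := fun i => ⨅ j, (-m * c i j - g j)
  have hGle : ∀ i j, G i ≤ -m * c i j - g j := fun i j =>
    ciInf_le (Set.finite_range _).bddBelow j
  have hGL : ∀ i j, G i - G j ≤ -m * c i j := fun i j => by
    have : G i - -m * c i j ≤ G j := le_ciInf fun k => by
      have h1 := hGle i k
      have h2 := mul_le_mul_of_nonneg_left (hct i j k) (neg_nonneg.2 hm)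
      linarith
    linarith
  have hfG : ∀ i, f i ≤ u + G i := fun i => by
    have : f i - u ≤ G i := le_ciInf fun j => by linarith [hfg i j]
    linarith
  have hgG : ∀ i, g i ≤ -G i := fun i => by
    have := hGle i i
    rw [hc0] at this; linarith
  have s1 : ∑ i, a i * f i ≤ u + ∑ i, a i * G i := by
    calc _ ≤ ∑ i, a i * (u + G i) :=
          Finset.sum_le_sum fun i _ => mul_le_mul_of_nonneg_left (hfG i) (ha.1 i)
      _ = _ := by simp [mul_add, Finset.sum_add_distrib, ← Finset.sum_mul, ha.2]
  have s2 : ∑ i, b i * g i ≤ - ∑ i, b i * G i := by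
    calc _ ≤ ∑ i, b i * (-G i) :=
          Finset.sum_le_sum fun i _ => mul_le_mul_of_nonneg_left (hgG i) (hb.1 i)
      _ = _ := by simp
  have key : -m * e < ∑ i, a i * G i - ∑ i, b i * G i := by
    have := hab e le_rfl
    linarith
  rcases hm.lt_or_eq with hm' | hm'
  · have := h (fun i => -G i / -m) (fun i j => by
      rw [← sub_div, div_le_iff₀ (neg_pos.2 hm'), hcs i j]
      have := hGL j i
      linarith)
    have e1 : ∀ w : ι → ℝ, ∑ i, w i * (-G i / -m) = (∑ i, w i * G i) / m := fun w => by
      rw [Finset.sum_div]; refine Finset.sum_congr rfl fun i _ => ?_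
      rw [neg_div_neg_eq, mul_div_assoc]
    rw [e1, e1, ← sub_div, div_le_iff_of_neg hm'] at this
    linarith
  · have hG : ∀ i j, G i = G j := fun i j => by
      have h1 := hGL i j
      have h2 := hGL j i
      rw [hm'] at h1 h2; linarith
    obtain ⟨i₀⟩ := ‹Nonempty ι›
    simp only [fun i => hG i i₀, ← Finset.sum_mul, ha.2, hb.2, hm'] at key
    simp at key

/-- The truncated distance. -/
def truncDist {E : Type*} [PseudoMetricSpace E] (x y : E) : ℝ := min (dist x y) 1

section truncDist
variable {E : Type*} [PseudoMetricSpace E]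

theorem truncDist_nonneg (x y : E) : 0 ≤ truncDist x y := le_min dist_nonneg zero_le_one
theorem truncDist_le_one (x y : E) : truncDist x y ≤ 1 := min_le_right _ _
theorem truncDist_self (x : E) : truncDist x x = 0 := by simp [truncDist]
theorem truncDist_comm (x y : E) : truncDist x y = truncDist y x := by simp [truncDist, dist_comm]
theorem truncDist_triangle (x y z : E) : truncDist x z ≤ truncDist x y + truncDist y z := by
  have := dist_triangle x y z
  have := @dist_nonneg _ _ x y
  have := @dist_nonneg _ _ y z
  unfold truncDist
  rcases le_total (dist x y) 1 with h1 | h1 <;> rcases le_total (dist y z) 1 with h2 | h2 <;>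
    simp only [h1, h2, min_eq_left, min_eq_right] <;>
    first
      | exact (min_le_left _ _).trans (by linarith)
      | exact (min_le_right _ _).trans (by linarith)
theorem continuous_truncDist : Continuous fun p : E × E => truncDist p.1 p.2 :=
  continuous_dist.min continuous_const
theorem abs_sub_le_truncDist {f : E → ℝ} (hf : LipschitzWith 1 f) (h01 : ∀ x, f x ∈ Icc 0 1)
    (x y : E) : |f x - f y| ≤ truncDist x y := by
  refine le_min ?_ ?_
  · simpa [Real.dist_eq] using hf.dist_le_mul x y
  · rw [abs_le]; constructor <;> linarith [(h01 x).1, (h01 x).2, (h01 y).1, (h01 y).2]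

end truncDist

variable {E : Type*} [NormedAddCommGroup E] [NormedSpace ℝ E] [MeasurableSpace E]
  [BorelSpace E] [FiniteDimensional ℝ E]

theorem exists_quantizer (α β : Measure E) [IsFiniteMeasure α] [IsFiniteMeasure β] {δ : ℝ≥0∞}
    (hδ : 0 < δ) : ∃ (N : ℕ) (p : Fin (N + 1) → E) (q : E → Fin (N + 1)), Measurable q ∧
      ∫⁻ x, ENNReal.ofReal (truncDist x (p (q x))) ∂α ≤ δ ∧
      ∫⁻ x, ENNReal.ofReal (truncDist x (p (q x))) ∂β ≤ δ := by
  have hs : SecondCountableTopology E := secondCountable_of_proper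
  let d := TopologicalSpace.denseSeq E
  have ht : ∀ μ : Measure E, IsFiniteMeasure μ → Tendsto (fun N =>
      ∫⁻ x, ENNReal.ofReal (truncDist x (SimpleFunc.nearestPt d N x)) ∂μ) atTop (𝓝 0) := by
    intro μ hμ
    have := tendsto_lintegral_of_dominated_convergence (μ := μ) (fun _ => 1)
      (F := fun N x => ENNReal.ofReal (truncDist x (SimpleFunc.nearestPt d N x))) (f := fun _ => 0)
      (fun N => (continuous_truncDist.measurable.comp
        (measurable_id.prodMk (SimpleFunc.nearestPt d N).measurable)).ennreal_ofReal)
      (fun N => Eventually.of_forall fun x => by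
        simpa using truncDist_le_one x (SimpleFunc.nearestPt d N x))
      (by simp) (Eventually.of_forall fun x => ?_)
    · simpa using this
    · have h1 : Tendsto (fun N => SimpleFunc.nearestPt d N x) atTop (𝓝 x) :=
        SimpleFunc.tendsto_nearestPt (TopologicalSpace.denseRange_denseSeq E x)
      have h2 := (continuous_truncDist.tendsto (x, x)).comp (tendsto_const_nhds.prodMk_nhds h1)
      simp only [truncDist_self] at h2
      simpa using ENNReal.tendsto_ofReal h2
  obtain ⟨N, h1, h2⟩ := (((ht α ‹_›).eventually (gt_mem_nhds hδ)).and
    ((ht β ‹_›).eventually (gt_mem_nhds hδ))).exists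
  refine ⟨N, fun i => d i, fun x => ⟨SimpleFunc.nearestPtInd d N x,
    Nat.lt_succ_of_le (SimpleFunc.nearestPtInd_le d N x)⟩, ?_, h1.le, h2.le⟩
  refine measurable_to_countable' fun i => ?_
  have : (fun x => (⟨SimpleFunc.nearestPtInd d N x,
    Nat.lt_succ_of_le (SimpleFunc.nearestPtInd_le d N x)⟩ : Fin (N + 1))) ⁻¹' {i} =
    (SimpleFunc.nearestPtInd d N) ⁻¹' {(i : ℕ)} := by
    ext x; simp [Fin.ext_iff]
  rw [this]
  exact (SimpleFunc.nearestPtInd d N).measurableSet_fiber _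

theorem integral_sub_le_of_lipschitz_bounded {α β : Measure E} [IsProbabilityMeasure α]
    [IsProbabilityMeasure β] {e : ℝ}
    (h : ∀ f : E → ℝ, LipschitzWith 1 f → HasCompactSupport f → (∀ x, f x ∈ Icc 0 1) →
      ∫ x, f x ∂β - ∫ x, f x ∂α ≤ e) {F : E → ℝ} (hF : LipschitzWith 1 F)
    (hF01 : ∀ x, F x ∈ Icc 0 1) : ∫ x, F x ∂β - ∫ x, F x ∂α ≤ e := by
  let f : ℕ → E → ℝ := fun n x => min (F x) (max (n - ‖x‖) 0)
  have hL : ∀ n, LipschitzWith 1 (f n) := fun n => by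
    have h1 : LipschitzWith 1 fun x : E => (n : ℝ) - ‖x‖ := LipschitzWith.of_dist_le_mul fun x y => by
      rw [Real.dist_eq, sub_sub_sub_cancel_left, abs_sub_comm]
      simpa [dist_eq_norm] using abs_norm_sub_norm_le x y
    simpa using hF.min (h1.max_const 0)
  have h01 : ∀ n x, f n x ∈ Icc 0 1 := fun n x =>
    ⟨le_min (hF01 x).1 (le_max_right _ _), (min_le_left _ _).trans (hF01 x).2⟩
  have hcs : ∀ n, HasCompactSupport (f n) := fun n =>
    HasCompactSupport.intro (isCompact_closedBall 0 n) fun x hx => by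
      have hx' : (n : ℝ) - ‖x‖ ≤ 0 := by
        have : ¬ ‖x‖ ≤ n := fun hh => hx (by simpa using hh)
        linarith [not_le.1 this]
      simp only [f, max_eq_right hx']
      exact min_eq_right (hF01 x).1
  have ht : ∀ μ : Measure E, IsProbabilityMeasure μ →
      Tendsto (fun n => ∫ x, f n x ∂μ) atTop (𝓝 (∫ x, F x ∂μ)) := fun μ hμ => by
    refine tendsto_integral_of_dominated_convergence (fun _ => 1)
      (fun n => (hL n).continuous.aestronglyMeasurable) (integrable_const 1)
      (fun n => Eventually.of_forall fun x => ?_) (Eventually.of_forall fun x => ?_)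
    · rw [Real.norm_of_nonneg (h01 n x).1]; exact (h01 n x).2
    · refine tendsto_const_nhds.congr' ?_
      filter_upwards [eventually_ge_atTop ⌈‖x‖ + 1⌉₊] with n hn
      have hn' : ‖x‖ + 1 ≤ n := (Nat.le_ceil _).trans (by exact_mod_cast hn)
      refine (min_eq_left ?_).symm
      exact le_trans (hF01 x).2 (le_max_of_le_left (by linarith))
  exact le_of_tendsto ((ht β ‹_›).sub (ht α ‹_›))
    (Eventually.of_forall fun n => h _ (hL n) (hcs n) (h01 n))

/-- Kantorovich–Rubinstein duality for the truncated distance, up to an arbitrarily small error. -/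
theorem exists_coupling_of_lipschitz {α β : Measure E} [IsProbabilityMeasure α]
    [IsProbabilityMeasure β] {e : ℝ}
    (h : ∀ f : E → ℝ, LipschitzWith 1 f → HasCompactSupport f → (∀ x, f x ∈ Icc 0 1) →
      ∫ x, f x ∂β - ∫ x, f x ∂α ≤ e) {η : ℝ} (hη : 0 < η) :
    ∃ P : Measure (E × E), P.map Prod.fst = α ∧ P.map Prod.snd = β ∧
      ∫⁻ p, ENNReal.ofReal (truncDist p.1 p.2) ∂P ≤ ENNReal.ofReal (e + η) := by
  have hs : SecondCountableTopology E := secondCountable_of_proper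
  have he : 0 ≤ e := by simpa using h 0 (LipschitzWith.const' 0) HasCompactSupport.zero (by simp)
  set δ := η / 4 with hδ
  have hδ0 : 0 < δ := by positivity
  obtain ⟨N, p, q, hq, hqα, hqβ⟩ := exists_quantizer α β (ENNReal.ofReal_pos.2 hδ0)
  let a : Fin (N + 1) → ℝ := fun i => α.real (q ⁻¹' {i})
  let b : Fin (N + 1) → ℝ := fun i => β.real (q ⁻¹' {i})
  have hqm : ∀ i, MeasurableSet (q ⁻¹' {i}) := fun i => hq (measurableSet_singleton i)
  -- integrals of functions of the quantized variable
  have hsum : ∀ μ : Measure E, IsProbabilityMeasure μ → ∀ ψ : Fin (N + 1) → ℝ,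
      ∑ i, μ.real (q ⁻¹' {i}) * ψ i = ∫ x, ψ (q x) ∂μ := fun μ hμ ψ => by
    have : IsProbabilityMeasure (μ.map q) := Measure.isProbabilityMeasure_map hq.aemeasurable
    rw [← integral_map (f := ψ) hq.aemeasurable (Measurable.of_discrete).aestronglyMeasurable,
      integral_fintype Integrable.of_finite]
    refine Finset.sum_congr rfl fun i _ => ?_
    rw [map_measureReal_apply hq (measurableSet_singleton i), smul_eq_mul]
  have hsimplex : ∀ μ : Measure E, IsProbabilityMeasure μ →
      (fun i => μ.real (q ⁻¹' {i})) ∈ stdSimplex ℝ (Fin (N + 1)) := fun μ hμ =>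
    ⟨fun i => measureReal_nonneg, by simpa using hsum μ hμ fun _ => 1⟩
  have hcost : ∀ μ : Measure E, IsProbabilityMeasure μ →
      ∫⁻ x, ENNReal.ofReal (truncDist x (p (q x))) ∂μ ≤ ENNReal.ofReal δ →
      ∀ F : E → ℝ, LipschitzWith 1 F → (∀ x, F x ∈ Icc 0 1) →
      |∫ x, F (p (q x)) ∂μ - ∫ x, F x ∂μ| ≤ δ := by
    intro μ hμ hle F hF hF01
    have hpm : Measurable fun x => p (q x) := (Measurable.of_discrete).comp hq
    have i1 : Integrable (fun x => F (p (q x))) μ :=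
      Integrable.of_bound (hF.continuous.measurable.comp hpm).aestronglyMeasurable 1
        (Eventually.of_forall fun x => by rw [Real.norm_of_nonneg (hF01 _).1]; exact (hF01 _).2)
    have i2 : Integrable F μ :=
      Integrable.of_bound hF.continuous.aestronglyMeasurable 1
        (Eventually.of_forall fun x => by rw [Real.norm_of_nonneg (hF01 _).1]; exact (hF01 _).2)
    rw [← integral_sub i1 i2, ← Real.norm_eq_abs]
    refine (norm_integral_le_lintegral_norm _).trans (ENNReal.toReal_le_of_le_ofReal hδ0.le
      (le_trans (lintegral_mono fun x => ENNReal.ofReal_le_ofReal ?_) hle))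
    rw [truncDist_comm]
    exact abs_sub_le_truncDist hF hF01 _ _
  have hdual : ∀ ψ : Fin (N + 1) → ℝ, (∀ i j, ψ i - ψ j ≤ truncDist (p i) (p j)) →
      ∑ i, b i * ψ i - ∑ i, a i * ψ i ≤ e + 2 * δ := by
    intro ψ hψ
    set c₀ : ℝ := ⨅ i, ψ i with hc₀
    have hc₀le : ∀ i, c₀ ≤ ψ i := fun i => ciInf_le (Set.finite_range _).bddBelow i
    have hψ1 : ∀ i, ψ i - c₀ ≤ 1 := fun i => by
      have : ψ i - 1 ≤ c₀ := le_ciInf fun j => by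
        linarith [hψ i j, truncDist_le_one (p i) (p j)]
      linarith
    let F : E → ℝ := fun x => ⨅ j, min (ψ j - c₀ + dist x (p j)) 1
    have hbdd : ∀ x, BddBelow (range fun j => min (ψ j - c₀ + dist x (p j)) 1) := fun x =>
      (Set.finite_range _).bddBelow
    have hF : LipschitzWith 1 F := LipschitzWith.of_le_add fun x y => by
      have : F x - dist x y ≤ F y := le_ciInf fun j => by
        have h1 : F x ≤ _ := ciInf_le (hbdd x) j
        have h2 := dist_triangle x y (p j)
        rcases min_choice (ψ j - c₀ + dist y (p j)) 1 with h3 | h3 <;> rw [h3]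
        · linarith [h1.trans (min_le_left _ _)]
        · linarith [h1.trans (min_le_right _ _), @dist_nonneg _ _ x y]
      linarith
    have hF01 : ∀ x, F x ∈ Icc 0 1 := fun x =>
      ⟨le_ciInf fun j => le_min (add_nonneg (by linarith [hc₀le j]) dist_nonneg) zero_le_one,
        (ciInf_le (hbdd x) 0).trans (min_le_right _ _)⟩
    have hFp : ∀ i, F (p i) = ψ i - c₀ := fun i => by
      refine le_antisymm ((ciInf_le (hbdd (p i)) i).trans ?_) (le_ciInf fun j => le_min ?_ (hψ1 i))
      · simp
      · linarith [hψ i j, min_le_left (dist (p i) (p j)) 1,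
          show truncDist (p i) (p j) = min (dist (p i) (p j)) 1 from rfl]
    have hA := abs_le.1 (hcost α ‹_› hqα F hF hF01)
    have hB := abs_le.1 (hcost β ‹_› hqβ F hF hF01)
    have hAB := integral_sub_le_of_lipschitz_bounded h hF hF01
    have eF : ∀ μ : Measure E, IsProbabilityMeasure μ →
        ∑ i, μ.real (q ⁻¹' {i}) * ψ i = ∫ x, F (p (q x)) ∂μ + c₀ := fun μ hμ => by
      rw [← hsum μ hμ fun i => F (p i)]
      simp only [hFp, mul_sub, Finset.sum_sub_distrib, ← Finset.sum_mul, (hsimplex μ hμ).2]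
      ring
    have e1 := eF α ‹_›
    have e2 := eF β ‹_›
    simp only [a, b]
    linarith [hA.1, hB.2]
  obtain ⟨π, hπ0, hπa, hπb, hπc⟩ := exists_coupling_of_finite (fun i j => truncDist (p i) (p j))
    (fun i => truncDist_self _) (fun i j => truncDist_comm _ _)
    (fun i j k => truncDist_triangle _ _ _) hdual (hsimplex α ‹_›) (hsimplex β ‹_›)
  let P : Measure (E × E) := ∑ r : Fin (N + 1) × Fin (N + 1),
    ENNReal.ofReal (π r) • (α[|q ⁻¹' {r.1}]).prod (β[|q ⁻¹' {r.2}])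
  have hzero : ∀ μ : Measure E, IsProbabilityMeasure μ → ∀ i, μ.real (q ⁻¹' {i}) ≠ 0 →
      (μ[|q ⁻¹' {i}]) univ = 1 := fun μ hμ i hi => by
    have := cond_isProbabilityMeasure (μ := μ) (s := q ⁻¹' {i}) (fun h0 => hi (by simp [measureReal_def, h0]))
    exact measure_univ
  have hmul : ∀ r : Fin (N + 1) × Fin (N + 1), π r ≠ 0 → (α[|q ⁻¹' {r.1}]) univ = 1 ∧
      (β[|q ⁻¹' {r.2}]) univ = 1 := by
    rintro ⟨i, j⟩ hr
    constructor
    · refine hzero α ‹_› i fun h0 => hr ?_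
      have := (Finset.sum_eq_zero_iff_of_nonneg fun j _ => hπ0 (i, j)).1 ((hπa i).trans h0)
      exact this j (Finset.mem_univ _)
    · refine hzero β ‹_› j fun h0 => hr ?_
      have := (Finset.sum_eq_zero_iff_of_nonneg fun i _ => hπ0 (i, j)).1 ((hπb j).trans h0)
      exact this i (Finset.mem_univ _)
  have hP1 : P.map Prod.fst = α := by
    rw [Measure.map_finset_sum' measurable_fst.aemeasurable]
    simp only [Measure.map_smul, Measure.map_fst_prod]
    have : ∀ r : Fin (N + 1) × Fin (N + 1), ENNReal.ofReal (π r) •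
        (β[|q ⁻¹' {r.2}]) univ • α[|q ⁻¹' {r.1}] = ENNReal.ofReal (π r) • α[|q ⁻¹' {r.1}] := fun r => by
      by_cases hr : π r = 0
      · simp [hr]
      · rw [(hmul r hr).2, one_smul]
    have hrow : ∀ i, ∑ j, ENNReal.ofReal (π (i, j)) = α (q ⁻¹' {i}) := fun i => by
      rw [← ENNReal.ofReal_sum_of_nonneg fun j _ => hπ0 _, hπa]
      exact ofReal_measureReal
    simp only [this, Fintype.sum_prod_type, ← Finset.sum_smul, hrow]
    exact sum_meas_smul_cond_fiber hq α
  have hP2 : P.map Prod.snd = β := by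
    rw [Measure.map_finset_sum' measurable_snd.aemeasurable]
    simp only [Measure.map_smul, Measure.map_snd_prod]
    have : ∀ r : Fin (N + 1) × Fin (N + 1), ENNReal.ofReal (π r) •
        (α[|q ⁻¹' {r.1}]) univ • β[|q ⁻¹' {r.2}] = ENNReal.ofReal (π r) • β[|q ⁻¹' {r.2}] := fun r => by
      by_cases hr : π r = 0
      · simp [hr]
      · rw [(hmul r hr).1, one_smul]
    have hcol : ∀ j, ∑ i, ENNReal.ofReal (π (i, j)) = β (q ⁻¹' {j}) := fun j => by
      rw [← ENNReal.ofReal_sum_of_nonneg fun i _ => hπ0 _, hπb]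
      exact ofReal_measureReal
    simp only [this, Fintype.sum_prod_type_right, ← Finset.sum_smul, hcol]
    exact sum_meas_smul_cond_fiber hq β
  refine ⟨P, hP1, hP2, ?_⟩
  let D : E → ℝ≥0∞ := fun x => ENNReal.ofReal (truncDist x (p (q x)))
  have hDm : Measurable D := (continuous_truncDist.measurable.comp
    (measurable_id.prodMk ((Measurable.of_discrete).comp hq))).ennreal_ofReal
  have hmid : ∫⁻ z, ENNReal.ofReal (truncDist (p (q z.1)) (p (q z.2))) ∂P ≤
      ENNReal.ofReal (e + 2 * δ) := by
    rw [lintegral_finsetSum_measure]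
    refine le_trans (Finset.sum_le_sum (g := fun r => ENNReal.ofReal
      (π r * truncDist (p r.1) (p r.2))) fun r _ => ?_) ?_
    · rw [lintegral_smul_measure, ENNReal.ofReal_mul (hπ0 r), smul_eq_mul]
      by_cases hr : π r = 0
      · simp [hr]
      refine mul_le_mul_right ?_ _
      have : ∀ᵐ z ∂(α[|q ⁻¹' {r.1}]).prod (β[|q ⁻¹' {r.2}]),
          ENNReal.ofReal (truncDist (p (q z.1)) (p (q z.2))) =
          ENNReal.ofReal (truncDist (p r.1) (p r.2)) := by
        have h1 : ∀ᵐ z ∂(α[|q ⁻¹' {r.1}]).prod (β[|q ⁻¹' {r.2}]), z.1 ∈ q ⁻¹' {r.1} :=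
          Measure.quasiMeasurePreserving_fst.ae (ae_cond_mem (hqm r.1))
        have h2 : ∀ᵐ z ∂(α[|q ⁻¹' {r.1}]).prod (β[|q ⁻¹' {r.2}]), z.2 ∈ q ⁻¹' {r.2} :=
          Measure.quasiMeasurePreserving_snd.ae (ae_cond_mem (hqm r.2))
        filter_upwards [h1, h2] with z hz1 hz2
        rw [show q z.1 = r.1 from hz1, show q z.2 = r.2 from hz2]
      rw [lintegral_congr_ae this, lintegral_const, ← univ_prod_univ, Measure.prod_prod,
        (hmul r hr).1, (hmul r hr).2]
      simp
    · rw [← ENNReal.ofReal_sum_of_nonneg fun r _ => mul_nonneg (hπ0 r) (truncDist_nonneg _ _)]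
      exact ENNReal.ofReal_le_ofReal hπc
  calc ∫⁻ z, ENNReal.ofReal (truncDist z.1 z.2) ∂P
      ≤ ∫⁻ z, (D z.1 + (ENNReal.ofReal (truncDist (p (q z.1)) (p (q z.2))) + D z.2)) ∂P := by
        refine lintegral_mono fun z => ?_
        simp only [D]
        rw [← ENNReal.ofReal_add (truncDist_nonneg _ _) (truncDist_nonneg _ _),
          ← ENNReal.ofReal_add (truncDist_nonneg _ _)
            (add_nonneg (truncDist_nonneg _ _) (truncDist_nonneg _ _))]
        refine ENNReal.ofReal_le_ofReal ?_
        have h1 := truncDist_triangle z.1 (p (q z.1)) z.2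
        have h2 := truncDist_triangle (p (q z.1)) (p (q z.2)) z.2
        rw [truncDist_comm (p (q z.2)) z.2] at h2
        linarith
    _ = ∫⁻ x, D x ∂α + (∫⁻ z, ENNReal.ofReal (truncDist (p (q z.1)) (p (q z.2))) ∂P +
          ∫⁻ y, D y ∂β) := by
        have e1 : ∫⁻ z, D z.1 ∂P = ∫⁻ x, D x ∂α := by rw [← hP1, lintegral_map hDm measurable_fst]
        have e2 : ∫⁻ z, D z.2 ∂P = ∫⁻ x, D x ∂β := by rw [← hP2, lintegral_map hDm measurable_snd]
        rw [lintegral_add_left (f := fun z : E × E => D z.1) (hDm.comp measurable_fst),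
          lintegral_add_right (g := fun z : E × E => D z.2) _ (hDm.comp measurable_snd), e1, e2]
    _ ≤ ENNReal.ofReal δ + (ENNReal.ofReal (e + 2 * δ) + ENNReal.ofReal δ) := by gcongr
    _ = ENNReal.ofReal (e + η) := by
        rw [← ENNReal.ofReal_add (by positivity) hδ0.le, ← ENNReal.ofReal_add hδ0.le (by positivity)]
        congr 1; rw [hδ]; ring

end Kantorovich

section Chain
variable {E : Type*} [MeasurableSpace E] [StandardBorelSpace E] [Nonempty E]

theorem map_compProd_comap {Ω F : Type*} [MeasurableSpace Ω] [MeasurableSpace F] (Q : Measure Ω)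
    [SFinite Q] (κ : Kernel F E) [IsSFiniteKernel κ] {f : Ω → F} (hf : Measurable f) :
    (Q ⊗ₘ κ.comap f hf).map (fun z => (f z.1, z.2)) = (Q.map f) ⊗ₘ κ := by
  ext s hs
  have hm : Measurable fun z : Ω × E => (f z.1, z.2) := (hf.comp measurable_fst).prodMk measurable_snd
  rw [Measure.map_apply hm hs, Measure.compProd_apply (hm hs), Measure.compProd_apply hs,
    lintegral_map (Kernel.measurable_kernel_prodMk_left hs) hf]
  rfl

/-- Gluing of successive couplings into the law of a single chain. -/
theorem exists_chain (μ : ℕ → Measure E) (hμ : ∀ k, IsProbabilityMeasure (μ k))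
    {Φ : ℕ → E → E} (hΦ : ∀ k, Measurable (Φ k)) {P : ℕ → Measure (E × E)}
    (h1 : ∀ k, (P k).map Prod.fst = (μ k).map (Φ k)) (h2 : ∀ k, (P k).map Prod.snd = μ (k + 1))
    (n : ℕ) :
    ∃ Q : Measure (ℕ → E), IsProbabilityMeasure Q ∧ (∀ k ≤ n, Q.map (fun X => X k) = μ k) ∧
      ∀ k < n, Q.map (fun X => (Φ k (X k), X (k + 1))) = P k := by
  have hP : ∀ k, IsProbabilityMeasure (P k) := fun k => by
    have := hμ (k + 1)
    rw [← h2 k] at this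
    exact Measure.isProbabilityMeasure_of_map Prod.snd
  induction n with
  | zero =>
    have := hμ 0
    have hm : Measurable fun (x : E) (_ : ℕ) => x := measurable_pi_lambda _ fun _ => measurable_id
    refine ⟨(μ 0).map fun x _ => x, Measure.isProbabilityMeasure_map hm.aemeasurable,
      fun k hk => ?_, fun k hk => absurd hk (Nat.not_lt_zero k)⟩
    rw [Measure.map_map (measurable_pi_apply k) hm, Nat.le_zero.1 hk]
    exact Measure.map_id
  | succ n ih =>
    obtain ⟨Q, hQ, hQ1, hQ2⟩ := ih
    have hf : Measurable fun X : ℕ → E => Φ n (X n) := (hΦ n).comp (measurable_pi_apply n)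
    let R := Q ⊗ₘ (P n).condKernel.comap _ hf
    have hRfst : R.map Prod.fst = Q := Measure.fst_compProd _ _
    have hu : Measurable fun z : (ℕ → E) × E => Function.update z.1 (n + 1) z.2 := by
      refine measurable_pi_lambda _ fun k => ?_
      by_cases hk : k = n + 1
      · subst hk; simpa using measurable_snd
      · simp only [Function.update_of_ne hk]
        exact (measurable_pi_apply k).comp measurable_fst
    have hpair : ∀ k, Measurable fun X : ℕ → E => (Φ k (X k), X (k + 1)) := fun k =>
      ((hΦ k).comp (measurable_pi_apply k)).prodMk (measurable_pi_apply (k + 1))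
    have hlast : (R.map fun z => Function.update z.1 (n + 1) z.2).map
        (fun X => (Φ n (X n), X (n + 1))) = P n := by
      rw [Measure.map_map (hpair n) hu]
      have : (fun X : ℕ → E => (Φ n (X n), X (n + 1))) ∘
          (fun z : (ℕ → E) × E => Function.update z.1 (n + 1) z.2) =
          fun z => (Φ n (z.1 n), z.2) := by
        funext z
        simp
      rw [this, map_compProd_comap Q _ hf]
      have e : Q.map (fun X => Φ n (X n)) = (P n).fst := by
        rw [Measure.fst, h1, ← hQ1 n le_rfl, Measure.map_map (hΦ n) (measurable_pi_apply n)]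
        rfl
      rw [e]
      exact (P n).disintegrate _
    refine ⟨R.map fun z => Function.update z.1 (n + 1) z.2,
      Measure.isProbabilityMeasure_map hu.aemeasurable, fun k hk => ?_, fun k hk => ?_⟩
    · rcases Nat.lt_or_eq_of_le hk with hk | rfl
      · rw [Measure.map_map (measurable_pi_apply k) hu, ← hQ1 k (Nat.lt_succ_iff.1 hk)]
        conv_rhs => rw [← hRfst, Measure.map_map (measurable_pi_apply k) measurable_fst]
        congr 1
        funext z
        simp [Function.update_of_ne hk.ne]
      · rw [← h2 n, ← hlast, Measure.map_map measurable_snd (hpair n)]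
        rfl
    · rcases Nat.lt_or_eq_of_le (Nat.lt_succ_iff.1 hk) with hk' | rfl
      · rw [Measure.map_map (hpair k) hu, ← hQ2 k hk']
        conv_rhs => rw [← hRfst, Measure.map_map (hpair k) measurable_fst]
        congr 1
        funext z
        simp [Function.update_of_ne hk.ne, Function.update_of_ne (Nat.succ_lt_succ hk').ne]
      · exact hlast

end Chain

section Approx
variable {E : Type*} [NormedAddCommGroup E] [NormedSpace ℝ E] [MeasurableSpace E]
  [BorelSpace E] [FiniteDimensional ℝ E] {V : ℝ → E → E} {κ : Kernel ℝ E}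

/-- A smooth compactly supported time-dependent vector field of size at most two. -/
structure IsSmoothField (c : ℝ × E → E) (L : ℝ≥0) : Prop where
  contDiff : ContDiff ℝ (⊤ : ℕ∞) c
  hasCompactSupport : HasCompactSupport c
  norm_le : ∀ z, ‖c z‖ ≤ 2
  lipschitz : LipschitzWith L c

theorem exists_smooth_truncation : ∃ (ψ : E → E) (L : ℝ≥0), ContDiff ℝ (⊤ : ℕ∞) ψ ∧
    (∀ x, ‖ψ x‖ ≤ 2) ∧ LipschitzWith L ψ ∧ ∀ x, ‖x‖ ≤ 1 → ψ x = x := by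
  let s : ContDiffBump (0 : E) := ⟨1, 2, one_pos, one_lt_two⟩
  have hψ : ContDiff ℝ (⊤ : ℕ∞) fun x : E => s x • x := s.contDiff.smul contDiff_id
  have hψc : HasCompactSupport fun x : E => s x • x := s.hasCompactSupport.smul_right
  obtain ⟨L, hL⟩ := ContDiff.lipschitzWith_of_hasCompactSupport hψc hψ (by simp)
  refine ⟨_, L, hψ, fun x => ?_, hL, fun x hx => ?_⟩
  · by_cases hx : ‖x‖ < 2
    · rw [norm_smul, Real.norm_of_nonneg s.nonneg]
      nlinarith [s.le_one (x := x), s.nonneg (x := x), norm_nonneg x]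
    · rw [s.zero_of_le_dist (by simpa using hx)]; simp
  · rw [s.one_of_mem_closedBall (by simpa using hx), one_smul]

/-- Integrability in time of spatial averages of bounded measurable functions. -/
theorem intervalIntegrable_integral [IsMarkovKernel κ] {F : ℝ × E → ℝ} (hF : Measurable F) {C : ℝ}
    (hC : ∀ z, |F z| ≤ C) (s t : ℝ) :
    IntervalIntegrable (fun σ => ∫ x, F (σ, x) ∂κ σ) volume s t := by
  rw [intervalIntegrable_iff]
  refine Measure.integrableOn_of_bounded (M := C) (by simp) ?_ (Eventually.of_forall fun σ => ?_)
  · exact (StronglyMeasurable.integral_kernel_prod_right' hF.stronglyMeasurable).aestronglyMeasurable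
  · simpa using norm_integral_le_of_norm_le_const (μ := κ σ) (f := fun x => F (σ, x))
      (Eventually.of_forall fun x => hC (σ, x))

theorem IsCESolution.exists_isSmoothField [IsMarkovKernel κ] (h : IsCESolution V κ) {T : ℝ}
    (hT : 0 ≤ T) {ε : ℝ} (hε : 0 < ε) : ∃ c L, IsSmoothField c L ∧
      ∫ σ in (0 : ℝ)..T, ∫ x, ‖V σ x - c (σ, x)‖ ∂κ σ ≤ ε := by
  obtain ⟨ψ, L₀, hψ, hψ2, hψL, hψ1⟩ := exists_smooth_truncation (E := E)
  let M : Measure (ℝ × E) := (volume.restrict (Ioc 0 T)) ⊗ₘ κ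
  have hM : IsFiniteMeasure M := inferInstance
  have hV1 : MemLp (Function.uncurry V) 1 M :=
    MemLp.of_bound h.measurable.aestronglyMeasurable 1
      (Eventually.of_forall fun z => h.norm_le z.1 z.2)
  obtain ⟨c₀, hc₀, hc₀s, hc₀d⟩ := MemLp.exist_eLpNorm_sub_le (by simp) le_rfl hV1
    (ε := ε / (L₀ + 1)) (by positivity)
  have hcs : HasCompactSupport fun z => ψ (c₀ z) := hc₀.comp_left (hψ1 0 (by simp))
  have hcd : ContDiff ℝ (⊤ : ℕ∞) fun z => ψ (c₀ z) := hψ.comp hc₀s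
  obtain ⟨L, hL⟩ := ContDiff.lipschitzWith_of_hasCompactSupport hcs hcd (by simp)
  refine ⟨fun z => ψ (c₀ z), L, ⟨hcd, hcs, fun z => hψ2 _, hL⟩, ?_⟩
  have hi0 : Integrable (Function.uncurry V - c₀) M :=
    memLp_one_iff_integrable.1 (hV1.sub (hc₀s.continuous.memLp_of_hasCompactSupport hc₀))
  have hi : Integrable (fun z : ℝ × E => ‖V z.1 z.2 - ψ (c₀ z)‖) M :=
    Integrable.of_bound (h.measurable.sub hcd.continuous.measurable).norm.aestronglyMeasurable 3
      (Eventually.of_forall fun z => by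
        rw [norm_norm]
        exact (norm_sub_le _ _).trans (by linarith [h.norm_le z.1 z.2, hψ2 (c₀ z)]))
  rw [intervalIntegral.integral_of_le hT, ← Measure.integral_compProd hi]
  calc ∫ z, ‖V z.1 z.2 - ψ (c₀ z)‖ ∂M ≤ ∫ z, L₀ * ‖(Function.uncurry V - c₀) z‖ ∂M := by
        refine integral_mono hi (hi0.norm.const_mul _) fun z => ?_
        have := hψL.dist_le_mul (V z.1 z.2) (c₀ z)
        rw [hψ1 _ (h.norm_le _ _)] at this
        simpa [dist_eq_norm, Function.uncurry] using this
    _ = L₀ * (eLpNorm (Function.uncurry V - c₀) 1 M).toReal := by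
        rw [integral_const_mul, integral_norm_eq_lintegral_enorm hi0.aestronglyMeasurable,
          eLpNorm_one_eq_lintegral_enorm]
    _ ≤ L₀ * (ε / (L₀ + 1)) := by
        gcongr
        exact ENNReal.toReal_le_of_le_ofReal (by positivity) hc₀d
    _ ≤ ε := by
        rw [mul_div_assoc', div_le_iff₀ (by positivity)]
        nlinarith [hε, L₀.2]

/-- A left Riemann sum estimate along the flow of measures. -/
theorem IsCESolution.mul_integral_le [IsMarkovKernel κ] (h : IsCESolution V κ) {f : ℝ × E → ℝ}
    {K : ℝ≥0} (hf : LipschitzWith K f) (hfc : HasCompactSupport f) {s t : ℝ} (hst : s ≤ t) :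
    (t - s) * ∫ x, f (s, x) ∂κ s ≤
      (∫ σ in s..t, ∫ x, f (σ, x) ∂κ σ) + 2 * K * (t - s) * (t - s) := by
  obtain ⟨C, hC⟩ := hfc.exists_bound_of_continuous hf.continuous
  have hinteg := intervalIntegrable_integral (κ := κ) hf.continuous.measurable hC s t
  have hs : LipschitzWith K fun x => f (s, x) := by
    have := hf.comp (LipschitzWith.prodMk_left (α := ℝ) (β := E) s)
    rwa [mul_one] at this
  have hi : ∀ σ r, Integrable (fun x => f (σ, x)) (κ r) := fun σ r =>
    Integrable.of_bound (hf.continuous.comp (Continuous.prodMk_right σ)).aestronglyMeasurable C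
      (Eventually.of_forall fun x => hC (σ, x))
  have hsc : HasCompactSupport fun x => f (s, x) := by
    refine HasCompactSupport.intro (hfc.isCompact.image continuous_snd) fun x hx => ?_
    by_contra h0
    exact hx ⟨(s, x), subset_tsupport _ h0, rfl⟩
  have key : ∀ σ ∈ Icc s t, (∫ x, f (s, x) ∂κ s) - 2 * K * (t - s) ≤ ∫ x, f (σ, x) ∂κ σ := by
    intro σ hσ
    have h1 := (abs_le.1 (h.abs_integral_sub_le hs hsc hσ.1)).1
    have h2 : (∫ x, f (s, x) ∂κ σ) - K * (σ - s) ≤ ∫ x, f (σ, x) ∂κ σ := by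
      have : ∫ x, (f (s, x) - K * (σ - s)) ∂κ σ ≤ ∫ x, f (σ, x) ∂κ σ := by
        refine integral_mono ((hi s σ).sub (integrable_const _)) (hi σ σ) fun x => ?_
        have := hf.dist_le_mul (s, x) (σ, x)
        rw [Real.dist_eq, dist_prod_same_right, Real.dist_eq, abs_sub_comm s σ,
          abs_of_nonneg (sub_nonneg.2 hσ.1)] at this
        linarith [(abs_le.1 this).2]
      rwa [integral_sub (hi s σ) (integrable_const _), integral_const, probReal_univ,
        one_smul] at this
    have h3 : K * (σ - s) ≤ K * (t - s) := by gcongr; exact hσ.2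
    linarith
  have := intervalIntegral.integral_mono_on hst intervalIntegrable_const hinteg key
  rw [intervalIntegral.integral_const, smul_eq_mul] at this
  linarith

end Approx

section Euler
variable {E : Type*} [NormedAddCommGroup E] [NormedSpace ℝ E]

/-- The polygonal path whose velocity on the `i`-th time interval of length `h` is the value of the
field `c` at the `i`-th node of the chain `X`. -/
def eulerPath (c : ℝ × E → E) (h : ℝ) (n : ℕ) (X : ℕ → E) (t : ℝ) : E :=
  X 0 + ∑ i ∈ Finset.range n, (min t ((i + 1 : ℕ) * h) - min t (i * h)) • c (i * h, X i)

variable {c : ℝ × E → E} {h : ℝ} {n : ℕ}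

theorem min_sub_min_nonneg {t a b : ℝ} (hab : a ≤ b) : 0 ≤ min t b - min t a :=
  sub_nonneg.2 (min_le_min_left t hab)

theorem min_sub_min_mono {s t a b : ℝ} (hab : a ≤ b) (hst : s ≤ t) :
    min s b - min s a ≤ min t b - min t a := by
  rcases le_total s a with h1 | h1 <;> rcases le_total s b with h2 | h2 <;>
    rcases le_total t a with h3 | h3 <;> rcases le_total t b with h4 | h4 <;>
    simp only [h1, h2, h3, h4, min_eq_left, min_eq_right] <;> linarith

theorem node_le (hh : 0 ≤ h) (i : ℕ) : (i : ℝ) * h ≤ (i + 1 : ℕ) * h := by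
  push_cast; nlinarith

theorem eulerPath_zero (hh : 0 ≤ h) (X : ℕ → E) : eulerPath c h n X 0 = X 0 := by
  have : ∀ i : ℕ, min 0 ((i : ℝ) * h) = 0 := fun i => min_eq_left (by positivity)
  simp only [eulerPath, this]; simp

theorem continuous_uncurry_eulerPath (hc : Continuous c) :
    Continuous fun p : (ℕ → E) × ℝ => eulerPath c h n p.1 p.2 := by
  unfold eulerPath
  fun_prop

theorem lipschitzWith_eulerPath (hh : 0 ≤ h) (hc : ∀ z, ‖c z‖ ≤ 2) (X : ℕ → E) :
    LipschitzWith 2 (eulerPath c h n X) := by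
  have key : ∀ s t, s ≤ t → ‖eulerPath c h n X t - eulerPath c h n X s‖ ≤ 2 * (t - s) := by
    intro s t hst
    have e : eulerPath c h n X t - eulerPath c h n X s = ∑ i ∈ Finset.range n,
        ((min t ((i + 1 : ℕ) * h) - min t (i * h)) - (min s ((i + 1 : ℕ) * h) - min s (i * h))) •
          c (i * h, X i) := by
      simp only [eulerPath, sub_smul _ _ (c _), Finset.sum_sub_distrib]
      abel
    rw [e]
    refine (norm_sum_le _ _).trans ?_
    calc _ ≤ ∑ i ∈ Finset.range n, ((min t ((i + 1 : ℕ) * h) - min t (i * h)) -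
          (min s ((i + 1 : ℕ) * h) - min s (i * h))) * 2 := by
          refine Finset.sum_le_sum fun i _ => ?_
          have h0 := sub_nonneg.2 (min_sub_min_mono (node_le hh i) hst)
          rw [norm_smul, Real.norm_of_nonneg h0]
          exact mul_le_mul_of_nonneg_left (hc _) h0
      _ = ((min t (n * h) - min t 0) - (min s (n * h) - min s 0)) * 2 := by
          rw [← Finset.sum_mul, Finset.sum_sub_distrib,
            Finset.sum_range_sub (fun i : ℕ => min t (i * h)),
            Finset.sum_range_sub (fun i : ℕ => min s (i * h))]
          simp
      _ ≤ 2 * (t - s) := by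
          have h1 : min t (n * h) - min s (n * h) ≤ t - s := by
            rcases le_total s (n * h) with h1 | h1 <;> rcases le_total t (n * h) with h2 | h2 <;>
            simp only [h1, h2, min_eq_left, min_eq_right] <;> linarith
          have h2 := min_le_min_right 0 hst
          linarith
  refine LipschitzWith.of_dist_le_mul fun s t => ?_
  rw [dist_eq_norm, Real.dist_eq]
  rcases le_total s t with hst | hst
  · rw [norm_sub_rev, abs_sub_comm, abs_of_nonneg (sub_nonneg.2 hst)]
    exact key s t hst
  · rw [abs_of_nonneg (sub_nonneg.2 hst)]
    exact key t s hst

theorem eulerPath_succ (hh : 0 ≤ h) (X : ℕ → E) {k : ℕ} (hk : k < n) :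
    eulerPath c h n X ((k + 1 : ℕ) * h) = eulerPath c h n X (k * h) + h • c (k * h, X k) := by
  rw [← sub_eq_iff_eq_add']
  have e : eulerPath c h n X ((k + 1 : ℕ) * h) - eulerPath c h n X (k * h) = ∑ i ∈ Finset.range n,
      ((min ((k + 1 : ℕ) * h) ((i + 1 : ℕ) * h) - min ((k + 1 : ℕ) * h) (i * h)) -
        (min (k * h) ((i + 1 : ℕ) * h) - min (k * h) (i * h))) • c (i * h, X i) := by
    simp only [eulerPath, sub_smul _ _ (c _), Finset.sum_sub_distrib]
    abel
  have hm : ∀ i j : ℕ, min ((i : ℝ) * h) (j * h) = (min i j : ℕ) * h := fun i j => by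
    rw [Nat.cast_min, min_mul_of_nonneg _ _ hh]
  rw [e, Finset.sum_eq_single k]
  · simp only [hm]
    congr 1
    simp
    ring
  · intro i _ hi
    simp only [hm]
    rcases lt_or_gt_of_ne hi with hi | hi
    · rw [min_eq_right (by omega), min_eq_right (by omega), min_eq_right (by omega),
        min_eq_right (by omega)]; simp
    · rw [min_eq_left (by omega), min_eq_left (by omega), min_eq_left (by omega),
        min_eq_left (by omega)]; simp
  · intro h0; exact absurd (Finset.mem_range.2 hk) h0

/-- The total truncated defect of a chain with respect to the Euler scheme. -/
def eulerDefect (c : ℝ × E → E) (h : ℝ) (n : ℕ) (X : ℕ → E) : ℝ :=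
  ∑ j ∈ Finset.range n, truncDist (X j + h • c (j * h, X j)) (X (j + 1))

theorem eulerDefect_nonneg (X : ℕ → E) : 0 ≤ eulerDefect c h n X :=
  Finset.sum_nonneg fun _ _ => truncDist_nonneg _ _

theorem truncDist_add_right (x y z : E) : truncDist (x + z) (y + z) = truncDist x y := by
  simp [truncDist]

theorem truncDist_eulerPath_le (hh : 0 ≤ h) (X : ℕ → E) {k : ℕ} (hk : k ≤ n) :
    truncDist (X k) (eulerPath c h n X (k * h)) ≤ eulerDefect c h n X := by
  have : ∀ k ≤ n, truncDist (X k) (eulerPath c h n X (k * h)) ≤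
      ∑ j ∈ Finset.range k, truncDist (X j + h • c (j * h, X j)) (X (j + 1)) := by
    intro k
    induction k with
    | zero => intro _; simp [eulerPath_zero hh, truncDist_self]
    | succ k ih =>
      intro hk
      rw [Finset.sum_range_succ, eulerPath_succ hh X hk]
      have h1 := truncDist_triangle (X (k + 1)) (X k + h • c (k * h, X k))
        (eulerPath c h n X (k * h) + h • c (k * h, X k))
      rw [truncDist_add_right, truncDist_comm (X (k + 1)) (X k + _)] at h1
      linarith [ih (Nat.le_of_succ_le hk)]
  exact (this k hk).trans (Finset.sum_le_sum_of_subset_of_nonneg (Finset.range_mono hk)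
    fun _ _ _ => truncDist_nonneg _ _)

theorem norm_sub_le_mul_truncDist {F : Type*} [NormedAddCommGroup F] {G : E → F} {L : ℝ≥0}
    (hG : LipschitzWith L G) {C : ℝ} (hC : ∀ x, ‖G x‖ ≤ C) (x y : E) :
    ‖G x - G y‖ ≤ (L + 2 * C) * truncDist x y := by
  have hC0 : 0 ≤ C := (norm_nonneg _).trans (hC x)
  have h1 := hG.dist_le_mul x y
  rw [dist_eq_norm] at h1
  unfold truncDist
  rcases le_total (dist x y) 1 with h2 | h2
  · rw [min_eq_left h2]
    nlinarith [@dist_nonneg _ _ x y]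
  · rw [min_eq_right h2]
    have := norm_sub_le (G x) (G y)
    linarith [hC x, hC y, L.2]

theorem norm_eulerPath_sub_integral_le [FiniteDimensional ℝ E] (hh : 0 ≤ h) (hc : ∀ z, ‖c z‖ ≤ 2)
    {c' : ℝ × E → E} {L : ℝ≥0} (hL : LipschitzWith L c') (hc' : ∀ z, ‖c' z‖ ≤ 2) (X : ℕ → E) {t : ℝ}
    (ht : t ∈ Icc 0 (n * h)) :
    ‖eulerPath c h n X t - eulerPath c h n X 0 - ∫ r in (0 : ℝ)..t, c' (r, eulerPath c h n X r)‖ ≤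
      ∑ i ∈ Finset.range n, h * ‖c (i * h, X i) - c' (i * h, X i)‖ +
        n * h * (L * (2 * h) + (L + 4) * eulerDefect c h n X) := by
  have hγ := lipschitzWith_eulerPath (n := n) hh hc X
  set γ := eulerPath c h n X with hγdef
  set Z := eulerDefect c h n X
  have hcont : Continuous fun r => c' (r, γ r) := hL.continuous.comp (continuous_id.prodMk hγ.continuous)
  have e1 : γ t - γ 0 = ∑ i ∈ Finset.range n,
      (min t ((i + 1 : ℕ) * h) - min t (i * h)) • c (i * h, X i) := by
    rw [hγdef, eulerPath_zero hh]; simp [eulerPath]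
  have e2 : ∫ r in (0 : ℝ)..t, c' (r, γ r) = ∑ i ∈ Finset.range n,
      ∫ r in (min t (i * h))..(min t ((i + 1 : ℕ) * h)), c' (r, γ r) := by
    rw [intervalIntegral.sum_integral_adjacent_intervals (a := fun i : ℕ => min t (i * h))
      fun k _ => hcont.intervalIntegrable _ _]
    simp [ht.1, ht.2]
  rw [e1, e2, ← Finset.sum_sub_distrib]
  refine (norm_sum_le _ _).trans ?_
  have : (n : ℝ) * h * (L * (2 * h) + (L + 4) * Z) =
      ∑ i ∈ Finset.range n, h * (L * (2 * h) + (L + 4) * Z) := by simp [mul_assoc]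
  rw [this, ← Finset.sum_add_distrib]
  refine Finset.sum_le_sum fun i hi => ?_
  have hle := node_le hh i
  have hmm := min_sub_min_nonneg (t := t) hle
  have hmh : min t ((i + 1 : ℕ) * h) - min t (i * h) ≤ h := by
    have h1 : ((i + 1 : ℕ) : ℝ) * h = i * h + h := by push_cast; ring
    rw [h1]
    rcases le_total t (i * h) with h2 | h2
    · rw [min_eq_left h2]; linarith [min_le_left t (i * h + h)]
    · rw [min_eq_right h2]; linarith [min_le_right t (i * h + h)]
  rw [← intervalIntegral.integral_const, ← intervalIntegral.integral_sub
    intervalIntegrable_const (hcont.intervalIntegrable _ _)]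
  have hb := intervalIntegral.norm_integral_le_of_norm_le_const (a := min t (i * h))
    (b := min t ((i + 1 : ℕ) * h)) (f := fun r => c (i * h, X i) - c' (r, γ r))
    (C := ‖c (i * h, X i) - c' (i * h, X i)‖ + (L * (2 * h) + (L + 4) * Z)) ?_
  · rw [abs_of_nonneg hmm] at hb
    refine hb.trans ?_
    rw [← mul_add, mul_comm h]
    refine mul_le_mul_of_nonneg_left hmh ?_
    have := eulerDefect_nonneg (c := c) (h := h) (n := n) X
    positivity
  · intro r hr
    rw [uIoc_of_le (by linarith)] at hr
    have hrt : r ≤ t := hr.2.trans (min_le_left _ _)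
    have hr1 : i * h < r := by
      rcases min_lt_iff.1 hr.1 with h1 | h1
      · exact absurd h1 (not_lt.2 hrt)
      · exact h1
    have hr2 : r ≤ i * h + h := by
      have := hr.2.trans (min_le_right _ _)
      push_cast at this; linarith
    have hlip : LipschitzWith L fun x => c' (i * h, x) := by
      have := hL.comp (LipschitzWith.prodMk_left (α := ℝ) (β := E) (i * h))
      rwa [mul_one] at this
    have h1 := norm_sub_le_mul_truncDist hlip (fun x => hc' _) (X i) (γ (i * h))
    have h2 : ‖c' (i * h, γ (i * h)) - c' (r, γ r)‖ ≤ L * (2 * h) := by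
      have := hL.dist_le_mul (i * h, γ (i * h)) (r, γ r)
      rw [dist_eq_norm] at this
      refine this.trans (mul_le_mul_of_nonneg_left ?_ L.2)
      have hd : dist (i * h) r ≤ h := by rw [Real.dist_eq, abs_sub_comm, abs_of_pos] <;> linarith
      refine max_le (hd.trans (by linarith)) ((hγ.dist_le_mul _ _).trans ?_)
      simpa using hd
    have h3 := mul_le_mul_of_nonneg_left
      (truncDist_eulerPath_le (c := c) hh X (Finset.mem_range.1 hi).le)
      (show (0 : ℝ) ≤ L + 2 * 2 by positivity)
    have h4 : c (i * h, X i) - c' (r, γ r) = (c (i * h, X i) - c' (i * h, X i)) +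
      ((c' (i * h, γ (i * h)) - c' (r, γ r)) + (c' (i * h, X i) - c' (i * h, γ (i * h)))) := by abel
    rw [h4]
    refine (norm_add_le _ _).trans (add_le_add le_rfl ((norm_add_le _ _).trans (add_le_add h2 ?_)))
    refine h1.trans (h3.trans (le_of_eq ?_))
    norm_num [Z]

end Euler

section EulerChain
variable {E : Type*} [NormedAddCommGroup E] [NormedSpace ℝ E] [MeasurableSpace E]
  [BorelSpace E] [FiniteDimensional ℝ E] {V : ℝ → E → E} {κ : Kernel ℝ E}

theorem IsSmoothField.lipschitz_right {c : ℝ × E → E} {L : ℝ≥0} (hc : IsSmoothField c L) (s : ℝ) :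
    LipschitzWith L fun x => c (s, x) := by
  have := hc.lipschitz.comp (LipschitzWith.prodMk_left (α := ℝ) (β := E) s)
  rwa [mul_one] at this

theorem IsCESolution.intervalIntegrable_norm_sub [IsMarkovKernel κ] (h : IsCESolution V κ)
    {c : ℝ × E → E} (hc : Continuous c) (hc2 : ∀ z, ‖c z‖ ≤ 2) (s t : ℝ) :
    IntervalIntegrable (fun σ => ∫ x, ‖V σ x - c (σ, x)‖ ∂κ σ) volume s t :=
  intervalIntegrable_integral (F := fun z => ‖V z.1 z.2 - c z‖)
    (h.measurable.sub hc.measurable).norm (C := 3) (fun z => by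
      rw [abs_of_nonneg (norm_nonneg _)]
      exact (norm_sub_le _ _).trans (by linarith [h.norm_le z.1 z.2, hc2 z])) s t

theorem IsCESolution.integrable_norm_sub [IsMarkovKernel κ] (h : IsCESolution V κ)
    {c : E → E} (hc : Continuous c) (hc2 : ∀ z, ‖c z‖ ≤ 2) (s r : ℝ) :
    Integrable (fun x => ‖V s x - c x‖) (κ r) :=
  Integrable.of_bound ((h.measurable.comp measurable_prodMk_left).sub
    hc.measurable).norm.aestronglyMeasurable 3 (Eventually.of_forall fun x => by
      rw [norm_norm]
      exact (norm_sub_le _ _).trans (by linarith [h.norm_le s x, hc2 x]))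

theorem IsCESolution.integral_sub_integral_euler_field_le [IsMarkovKernel κ] (h : IsCESolution V κ)
    {f : E → ℝ} (hf : LipschitzWith 1 f) (hfc : HasCompactSupport f) {c : ℝ × E → E} {L : ℝ≥0}
    (hc : IsSmoothField c L) {s t : ℝ} (hst : s ≤ t) :
    (∫ x, f x ∂κ t) - ∫ x, f (x + (t - s) • c (s, x)) ∂κ s ≤
      (∫ σ in s..t, ∫ x, ‖V σ x - c (σ, x)‖ ∂κ σ) + 2 * (L * (t - s) * (t - s)) := by
  have h1 := h.integral_sub_integral_euler_le hf hfc (c := fun x => c (s, x)) (b := 2) (L := L)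
    (hc.contDiff.comp (contDiff_const.prodMk contDiff_id)) (hc.lipschitz_right s)
    (fun x => hc.norm_le _) hst
  have hcs : ∀ s, Continuous fun x => c (s, x) := fun s => (hc.lipschitz_right s).continuous
  have i0 := h.intervalIntegrable_norm_sub hc.contDiff.continuous hc.norm_le s t
  have h2 := intervalIntegral.integral_mono_on hst
    (h.intervalIntegrable_norm_sub (c := fun z => c (s, z.2))
      ((hcs s).comp continuous_snd) (fun z => hc.norm_le _) s t)
    (i0.add (intervalIntegrable_const (c := L * (t - s)))) (fun σ hσ => ?_)
  · rw [intervalIntegral.integral_add i0 intervalIntegrable_const,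
      intervalIntegral.integral_const, smul_eq_mul] at h2
    linarith
  · have : ∫ x, (‖V σ x - c (σ, x)‖ + L * (t - s)) ∂κ σ =
        ∫ x, ‖V σ x - c (σ, x)‖ ∂κ σ + L * (t - s) := by
      rw [integral_add (h.integrable_norm_sub (hcs σ) (fun x => hc.norm_le _) σ σ)
        (integrable_const _)]
      simp
    rw [← this]
    refine integral_mono (h.integrable_norm_sub (hcs s) (fun x => hc.norm_le _) σ σ)
      ((h.integrable_norm_sub (hcs σ) (fun x => hc.norm_le _) σ σ).add (integrable_const _))
      fun x => ?_
    have h3 := hc.lipschitz.dist_le_mul (σ, x) (s, x)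
    rw [dist_eq_norm, dist_prod_same_right, Real.dist_eq, abs_of_nonneg (sub_nonneg.2 hσ.1)] at h3
    have h4 : (L : ℝ) * (σ - s) ≤ L * (t - s) := by gcongr; exact hσ.2
    have h5 : V σ x - c (s, x) = (V σ x - c (σ, x)) + (c (σ, x) - c (s, x)) := by abel
    simp only
    rw [h5]
    exact (norm_add_le _ _).trans (by linarith)

theorem continuous_eulerDefect {c : ℝ × E → E} (hc : Continuous c) (h : ℝ) (n : ℕ) :
    Continuous (eulerDefect c h n) := by
  unfold eulerDefect
  refine continuous_finsetSum _ fun j _ => continuous_truncDist.comp (Continuous.prodMk ?_ ?_) <;>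
    fun_prop

theorem integrable_eulerDefect {c : ℝ × E → E} (hc : Continuous c) (h : ℝ) (n : ℕ)
    (Q : Measure (ℕ → E)) [IsFiniteMeasure Q] : Integrable (eulerDefect c h n) Q := by
  refine Integrable.of_bound (continuous_eulerDefect hc h n).aestronglyMeasurable n
    (Eventually.of_forall fun X => ?_)
  rw [Real.norm_of_nonneg (eulerDefect_nonneg X)]
  simpa [eulerDefect] using Finset.sum_le_sum fun j (_ : j ∈ Finset.range n) =>
    truncDist_le_one (X j + h • c (j * h, X j)) (X (j + 1))

/-- A chain with one-dimensional laws `κ (k h)` that almost follows the Euler scheme of `c`. -/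
theorem IsCESolution.exists_euler_chain [IsMarkovKernel κ] (hs : IsCESolution V κ)
    {c : ℝ × E → E} {L : ℝ≥0} (hc : IsSmoothField c L) {h : ℝ} (hh : 0 ≤ h) (n : ℕ) (hn : 0 < n) {ε : ℝ}
    (hε : 0 < ε) :
    ∃ Q : Measure (ℕ → E), IsProbabilityMeasure Q ∧
      (∀ k ≤ n, Q.map (fun X => X k) = κ (k * h)) ∧
      ∫ X, eulerDefect c h n X ∂Q ≤
        (∫ σ in (0 : ℝ)..(n * h), ∫ x, ‖V σ x - c (σ, x)‖ ∂κ σ) + 2 * (L * h * (n * h)) + ε := by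
  have hs2 : SecondCountableTopology E := secondCountable_of_proper
  let Φ : ℕ → E → E := fun k x => x + h • c (k * h, x)
  have hΦ : ∀ k, Measurable (Φ k) := fun k =>
    (continuous_id.add ((hc.lipschitz_right _).continuous.const_smul h)).measurable
  let e : ℕ → ℝ := fun k => (∫ σ in ((k : ℝ) * h)..((k + 1 : ℕ) * h),
    ∫ x, ‖V σ x - c (σ, x)‖ ∂κ σ) + 2 * (L * h * h)
  have hhn : ∀ k : ℕ, ((k + 1 : ℕ) : ℝ) * h - k * h = h := fun k => by push_cast; ring
  have hcoup : ∀ k : ℕ, ∃ P : Measure (E × E), P.map Prod.fst = (κ (k * h)).map (Φ k) ∧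
      P.map Prod.snd = κ ((k + 1 : ℕ) * h) ∧
      ∫⁻ p, ENNReal.ofReal (truncDist p.1 p.2) ∂P ≤ ENNReal.ofReal (e k + ε / n) := by
    intro k
    have : IsProbabilityMeasure ((κ (k * h)).map (Φ k)) :=
      Measure.isProbabilityMeasure_map (hΦ k).aemeasurable
    refine exists_coupling_of_lipschitz (fun f hf hfc _ => ?_) (by positivity)
    rw [integral_map (hΦ k).aemeasurable hf.continuous.aestronglyMeasurable]
    have := hs.integral_sub_integral_euler_field_le hf hfc hc (node_le hh k)
    rw [hhn] at this
    exact this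
  choose P hP1 hP2 hP3 using hcoup
  obtain ⟨Q, hQ, hQ1, hQ2⟩ := exists_chain (fun k : ℕ => κ (k * h)) (fun k => inferInstance) hΦ hP1 hP2 n
  refine ⟨Q, hQ, hQ1, ?_⟩
  have hm : ∀ k, Measurable fun X : ℕ → E => (Φ k (X k), X (k + 1)) := fun k =>
    ((hΦ k).comp (measurable_pi_apply k)).prodMk (measurable_pi_apply (k + 1))
  have he0 : ∀ k, 0 ≤ e k + ε / n := fun k => by
    have : 0 ≤ ∫ σ in ((k : ℝ) * h)..((k + 1 : ℕ) * h), ∫ x, ‖V σ x - c (σ, x)‖ ∂κ σ :=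
      intervalIntegral.integral_nonneg (node_le hh k) fun σ _ =>
        integral_nonneg fun x => norm_nonneg _
    positivity
  have hmt : Measurable fun p : E × E => truncDist p.1 p.2 := continuous_truncDist.measurable
  have hk : ∀ k ∈ Finset.range n,
      ∫ X, truncDist (X k + h • c (k * h, X k)) (X (k + 1)) ∂Q ≤ e k + ε / n := by
    intro k hk
    rw [integral_eq_lintegral_of_nonneg_ae (Eventually.of_forall fun X => truncDist_nonneg _ _)
      (hmt.comp (hm k)).aestronglyMeasurable]
    refine ENNReal.toReal_le_of_le_ofReal (he0 k) ?_
    have := hP3 k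
    rw [← hQ2 k (Finset.mem_range.1 hk), lintegral_map hmt.ennreal_ofReal (hm k)] at this
    exact this
  unfold eulerDefect
  rw [integral_finsetSum]
  · refine (Finset.sum_le_sum hk).trans ?_
    rw [Finset.sum_add_distrib, Finset.sum_add_distrib,
      intervalIntegral.sum_integral_adjacent_intervals (a := fun i : ℕ => (i : ℝ) * h)
        fun k _ => hs.intervalIntegrable_norm_sub hc.contDiff.continuous hc.norm_le _ _]
    have hn' : (n : ℝ) ≠ 0 := by positivity
    simp
    field_simp
    linarith
  · intro k _
    exact Integrable.of_bound (hmt.comp (hm k)).aestronglyMeasurable 1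
      (Eventually.of_forall fun X => by
        rw [Real.norm_of_nonneg (truncDist_nonneg _ _)]; exact truncDist_le_one _ _)

end EulerChain

section ApproxPath
variable {E : Type*} [NormedAddCommGroup E] [NormedSpace ℝ E] [MeasurableSpace E]
  [BorelSpace E] [FiniteDimensional ℝ E] {V : ℝ → E → E} {κ : Kernel ℝ E} {T : ℝ}

/-- The defect at time `t` of a path with respect to the integral equation of the field `c`. -/
def odeDefect (hT : 0 ≤ T) (c : ℝ × E → E) (t : Icc (0 : ℝ) T) (γ : C(Icc (0 : ℝ) T, E)) : E :=
  γ t - γ ⟨0, left_mem_Icc.2 hT⟩ - ∫ r in (0 : ℝ)..t, c (r, γ (projIcc 0 T hT r))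

theorem continuous_odeDefect (hT : 0 ≤ T) {c : ℝ × E → E} {L : ℝ≥0} (hc : IsSmoothField c L)
    (t : Icc (0 : ℝ) T) : Continuous (odeDefect hT c t) := by
  refine ((continuous_eval_const t).sub (continuous_eval_const _)).sub ?_
  refine intervalIntegral.continuous_of_dominated_interval (bound := fun _ => 2) (fun γ => ?_)
    (fun γ => Eventually.of_forall fun r _ => hc.norm_le _) intervalIntegrable_const
    (Eventually.of_forall fun r _ => ?_)
  · exact (hc.contDiff.continuous.comp (continuous_id.prodMk
      (γ.continuous.comp continuous_projIcc))).aestronglyMeasurable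
  · exact hc.contDiff.continuous.comp (continuous_const.prodMk (continuous_eval_const _))

theorem IsCESolution.exists_approx_path_measure [IsMarkovKernel κ] (hs : IsCESolution V κ)
    (hT : 0 < T) [MeasurableSpace C(Icc (0 : ℝ) T, E)] [BorelSpace C(Icc (0 : ℝ) T, E)]
    {ε : ℝ} (hε : 0 < ε) :
    ∃ ν : Measure C(Icc (0 : ℝ) T, E), IsProbabilityMeasure ν ∧
      ν.map (fun γ => γ ⟨0, left_mem_Icc.2 hT.le⟩) = κ 0 ∧
      (∀ᵐ γ : C(Icc (0 : ℝ) T, E) ∂ν, LipschitzWith 2 γ) ∧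
      (∀ f : E → ℝ, LipschitzWith 1 f → HasCompactSupport f → (∀ x, f x ∈ Icc 0 1) →
        ∀ t : Icc (0 : ℝ) T, |∫ γ, f (γ t) ∂ν - ∫ x, f x ∂κ t| ≤ 7 * ε) ∧
      ∀ c L, IsSmoothField c L → ∀ t : Icc (0 : ℝ) T, ∫ γ, ‖odeDefect hT.le c t γ‖ ∂ν ≤
        (∫ σ in (0 : ℝ)..T, ∫ x, ‖V σ x - c (σ, x)‖ ∂κ σ) + (3 + 8 * T * L + 16 * T) * ε := by
  have hs2 : SecondCountableTopology E := secondCountable_of_proper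
  obtain ⟨c, L, hc, hcV⟩ := hs.exists_isSmoothField hT.le hε
  have hcc := hc.contDiff.continuous
  obtain ⟨m, hm⟩ := exists_nat_gt (T * (1 + L * T) / ε)
  set n := m + 1 with hn
  set h := T / n with hhdef
  have hn0 : (0 : ℝ) < n := by rw [hn]; positivity
  have hh : 0 < h := by positivity
  have hnh : n * h = T := by rw [hhdef]; field_simp
  have hhε : h * (1 + L * T) ≤ ε := by
    rw [div_lt_iff₀ hε] at hm
    rw [hhdef, div_mul_eq_mul_div, div_le_iff₀ hn0, hn]
    push_cast
    nlinarith
  have hLT : (0 : ℝ) ≤ L * T := by positivity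
  have h1 : h ≤ ε := by nlinarith
  have h2 : L * h * T ≤ ε := by nlinarith
  obtain ⟨Q, hQ, hQ1, hQd⟩ := hs.exists_euler_chain hc hh.le n (Nat.succ_pos m) hε
  rw [hnh] at hQd
  have hZ : ∫ X, eulerDefect c h n X ∂Q ≤ 4 * ε := by linarith
  have hZi := integrable_eulerDefect hcc h n Q
  have hlip := fun X => lipschitzWith_eulerPath (n := n) hh.le hc.norm_le X
  let Γ : (ℕ → E) → C(Icc (0 : ℝ) T, E) := fun X =>
    ⟨fun t => eulerPath c h n X t, (hlip X).continuous.comp continuous_subtype_val⟩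
  have hΓ : Continuous Γ := ContinuousMap.continuous_of_continuous_uncurry _
    ((continuous_uncurry_eulerPath hcc).comp
      (continuous_fst.prodMk (continuous_subtype_val.comp continuous_snd)))
  have hev : ∀ t, Measurable fun γ : C(Icc (0 : ℝ) T, E) => γ t := fun t =>
    (continuous_eval_const t).measurable
  have hX : ∀ k, Measurable fun X : ℕ → E => X k := measurable_pi_apply
  have hinteg : ∀ k ≤ n, ∀ F : E → ℝ, Continuous F → ∫ X, F (X k) ∂Q = ∫ x, F x ∂κ (k * h) :=
    fun k hk F hF => by
      rw [← hQ1 k hk, integral_map (hX k).aemeasurable hF.aestronglyMeasurable]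
  refine ⟨Q.map Γ, Measure.isProbabilityMeasure_map hΓ.measurable.aemeasurable, ?_, ?_, ?_, ?_⟩
  · rw [Measure.map_map (hev _) hΓ.measurable]
    have := hQ1 0 (Nat.zero_le n)
    rw [Nat.cast_zero, zero_mul] at this
    rw [← this]
    congr 1
    funext X
    exact eulerPath_zero hh.le X
  · refine ae_map_iff hΓ.measurable.aemeasurable ?_ |>.2 (Eventually.of_forall fun X => ?_)
    · simp only [lipschitzWith_iff_dist_le_mul, ofPred_forall]
      refine IsClosed.measurableSet (isClosed_iInter fun s => isClosed_iInter fun t => ?_)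
      exact isClosed_le ((continuous_eval_const s).dist (continuous_eval_const t)) continuous_const
    · exact fun s t => hlip X s t
  · intro f hf hfc hf01 t
    rw [integral_map (f := fun γ => f (γ t)) hΓ.measurable.aemeasurable
      (hf.continuous.measurable.comp (hev t)).aestronglyMeasurable]
    set k := ⌊(t : ℝ) / h⌋₊ with hk
    have hk1 : (k : ℝ) * h ≤ t := by
      rw [← le_div_iff₀ hh]; exact Nat.floor_le (div_nonneg t.2.1 hh.le)
    have hk2 : (t : ℝ) ≤ k * h + h := by
      have := (div_lt_iff₀ hh).1 (Nat.lt_floor_add_one ((t : ℝ) / h))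
      linarith
    have hkn : k ≤ n := by
      have h3 : (k : ℝ) * h ≤ n * h := hk1.trans (t.2.2.trans hnh.ge)
      exact_mod_cast le_of_mul_le_mul_right h3 hh
    have hb : ∀ x, ‖f x‖ ≤ 1 := fun x => by
      rw [Real.norm_of_nonneg (hf01 x).1]; exact (hf01 x).2
    have i1 : Integrable (fun X => f (Γ X t)) Q :=
      Integrable.of_bound (hf.continuous.measurable.comp
        ((hev t).comp hΓ.measurable)).aestronglyMeasurable 1 (Eventually.of_forall fun X => hb _)
    have i2 : Integrable (fun X => f (X k)) Q :=
      Integrable.of_bound (hf.continuous.measurable.comp (hX k)).aestronglyMeasurable 1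
        (Eventually.of_forall fun X => hb _)
    have d1 : |∫ X, f (Γ X t) ∂Q - ∫ X, f (X k) ∂Q| ≤ 2 * h + 4 * ε := by
      rw [← integral_sub i1 i2, ← Real.norm_eq_abs]
      calc _ ≤ ∫ X, (2 * h + eulerDefect c h n X) ∂Q := by
            refine norm_integral_le_of_norm_le ((integrable_const _).add hZi)
              (Eventually.of_forall fun X => ?_)
            have e1 := abs_sub_le_truncDist hf hf01 (eulerPath c h n X t) (X k)
            have e2 := truncDist_triangle (eulerPath c h n X t) (eulerPath c h n X (k * h)) (X k)
            have e3 := truncDist_eulerPath_le (c := c) hh.le X hkn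
            rw [truncDist_comm] at e3
            have e4 : truncDist (eulerPath c h n X t) (eulerPath c h n X (k * h)) ≤ 2 * h := by
              refine (min_le_left _ _).trans (((hlip X).dist_le_mul _ _).trans ?_)
              rw [Real.dist_eq, abs_of_nonneg (sub_nonneg.2 hk1)]
              simp only [NNReal.coe_ofNat]
              linarith
            rw [Real.norm_eq_abs]
            exact e1.trans (by linarith)
        _ ≤ 2 * h + 4 * ε := by
            rw [integral_add (integrable_const _) hZi]
            simpa using hZ
    rw [hinteg k hkn f hf.continuous] at d1
    have d2 := hs.abs_integral_sub_le hf hfc hk1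
    rw [abs_sub_comm] at d2
    simp only [NNReal.coe_one, one_mul] at d2
    have d3 := abs_sub_le (∫ X, f (Γ X t) ∂Q) (∫ x, f x ∂κ (k * h)) (∫ x, f x ∂κ t)
    linarith
  · intro c' L' hc' t
    have hcc' := hc'.contDiff.continuous
    rw [integral_map hΓ.measurable.aemeasurable
      (continuous_odeDefect hT.le hc' t).norm.aestronglyMeasurable]
    let g : ℝ × E → ℝ := fun z => ‖c z - c' z‖
    have hgL : LipschitzWith (L + L') g := by
      have := lipschitzWith_one_norm.comp (hc.lipschitz.sub hc'.lipschitz)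
      rwa [one_mul] at this
    have hgc : HasCompactSupport g := by
      refine HasCompactSupport.comp_left (g := norm) (HasCompactSupport.sub hc.hasCompactSupport
        hc'.hasCompactSupport) norm_zero
    have hg4 : ∀ z, |g z| ≤ 4 := fun z => by
      rw [abs_of_nonneg (norm_nonneg _)]
      exact (norm_sub_le _ _).trans (by linarith [hc.norm_le z, hc'.norm_le z])
    have hgs : ∀ s, Continuous fun x => g (s, x) := fun s =>
      hgL.continuous.comp (Continuous.prodMk_right s)
    have ig : ∀ i : ℕ, Integrable (fun X : ℕ → E => h * g (i * h, X i)) Q := fun i =>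
      (Integrable.of_bound ((hgs _).measurable.comp (hX i)).aestronglyMeasurable 4
        (Eventually.of_forall fun X => hg4 _)).const_mul h
    have hpt : ∀ X, ‖odeDefect hT.le c' t (Γ X)‖ ≤ ∑ i ∈ Finset.range n, h * g (i * h, X i) +
        T * (L' * (2 * h) + (L' + 4) * eulerDefect c h n X) := fun X => by
      have := norm_eulerPath_sub_integral_le (n := n) hh.le hc.norm_le hc'.lipschitz hc'.norm_le X
        (t := t) (by rw [hnh]; exact t.2)
      rw [hnh] at this
      refine le_trans (le_of_eq ?_) this
      unfold odeDefect
      congr 2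
      refine intervalIntegral.integral_congr fun r hr => ?_
      rw [uIcc_of_le t.2.1] at hr
      have : projIcc 0 T hT.le r = ⟨r, hr.1, hr.2.trans t.2.2⟩ := projIcc_of_mem _ _
      simp only [this, Γ, ContinuousMap.coe_mk]
    have iZ : Integrable (fun X => L' * (2 * h) + (L' + 4) * eulerDefect c h n X) Q :=
      (integrable_const _).add (hZi.const_mul _)
    have ib : Integrable (fun X => ∑ i ∈ Finset.range n, h * g (i * h, X i) +
        T * (L' * (2 * h) + (L' + 4) * eulerDefect c h n X)) Q :=
      (integrable_finsetSum _ fun i _ => ig i).add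
        (iZ.const_mul T)
    have hsum : ∫ X, ∑ i ∈ Finset.range n, h * g (i * h, X i) ∂Q ≤
        (∫ σ in (0 : ℝ)..T, ∫ x, g (σ, x) ∂κ σ) + 2 * (L + L') * h * T := by
      rw [integral_finsetSum _ fun i _ => ig i]
      have hstep : ∀ i ∈ Finset.range n, ∫ X, h * g (i * h, X i) ∂Q ≤
          (∫ σ in ((i : ℝ) * h)..((i + 1 : ℕ) * h), ∫ x, g (σ, x) ∂κ σ) +
            2 * (L + L') * h * h := fun i hi => by
        have := hs.mul_integral_le hgL hgc (node_le hh.le i)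
        rw [show ((i + 1 : ℕ) : ℝ) * h - i * h = h by push_cast; ring] at this
        rw [integral_const_mul, hinteg i (Finset.mem_range.1 hi).le _ (hgs _)]
        simpa using this
      refine (Finset.sum_le_sum hstep).trans (le_of_eq ?_)
      rw [Finset.sum_add_distrib,
        intervalIntegral.sum_integral_adjacent_intervals (a := fun i : ℕ => (i : ℝ) * h)
          fun k _ => intervalIntegrable_integral hgL.continuous.measurable hg4 _ _]
      simp only [Finset.sum_const, Finset.card_range, nsmul_eq_mul, Nat.cast_zero, zero_mul]
      rw [hnh]
      congr 1
      linear_combination (2 * (L + L') * h) * hnh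
    have htri : ∫ σ in (0 : ℝ)..T, ∫ x, g (σ, x) ∂κ σ ≤
        ε + ∫ σ in (0 : ℝ)..T, ∫ x, ‖V σ x - c' (σ, x)‖ ∂κ σ := by
      have j1 := hs.intervalIntegrable_norm_sub hcc hc.norm_le 0 T
      have j2 := hs.intervalIntegrable_norm_sub hcc' hc'.norm_le 0 T
      have := intervalIntegral.integral_mono_on hT.le
        (intervalIntegrable_integral (κ := κ) hgL.continuous.measurable hg4 _ _)
        (j1.add j2) (fun σ _ => ?_)
      · rw [intervalIntegral.integral_add j1 j2] at this
        linarith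
      · have k1 := hs.integrable_norm_sub (c := fun x => c (σ, x))
          (hc.lipschitz_right σ).continuous (fun x => hc.norm_le _) σ σ
        have k2 := hs.integrable_norm_sub (c := fun x => c' (σ, x))
          (hc'.lipschitz_right σ).continuous (fun x => hc'.norm_le _) σ σ
        rw [← integral_add k1 k2]
        refine integral_mono (Integrable.of_bound (hgs σ).aestronglyMeasurable 4
          (Eventually.of_forall fun X => hg4 _)) (k1.add k2) fun x => ?_
        have := norm_sub_le (V σ x - c' (σ, x)) (V σ x - c (σ, x))
        rw [sub_sub_sub_cancel_left] at this
        simp only [g]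
        linarith
    calc ∫ X, ‖odeDefect hT.le c' t (Γ X)‖ ∂Q
        ≤ ∫ X, (∑ i ∈ Finset.range n, h * g (i * h, X i) +
          T * (L' * (2 * h) + (L' + 4) * eulerDefect c h n X)) ∂Q :=
          integral_mono_of_nonneg (Eventually.of_forall fun X => norm_nonneg _) ib
            (Eventually.of_forall hpt)
      _ = ∫ X, ∑ i ∈ Finset.range n, h * g (i * h, X i) ∂Q +
          T * (L' * (2 * h) + (L' + 4) * ∫ X, eulerDefect c h n X ∂Q) := by
          rw [integral_add (integrable_finsetSum _ fun i _ => ig i)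
            (iZ.const_mul T), integral_const_mul,
            integral_add (integrable_const _) (hZi.const_mul _), integral_const,
            integral_const_mul, probReal_univ, one_smul]
      _ ≤ (ε + (∫ σ in (0 : ℝ)..T, ∫ x, ‖V σ x - c' (σ, x)‖ ∂κ σ) + 2 * (L + L') * h * T) +
          T * (L' * (2 * ε) + (L' + 4) * (4 * ε)) := by
          gcongr
          exact hsum.trans (by linarith)
      _ ≤ _ := by
          have : L' * T * h ≤ L' * T * ε := by gcongr
          nlinarith

end ApproxPath

section PathLimit
variable {E : Type*} [NormedAddCommGroup E] [NormedSpace ℝ E] [MeasurableSpace E]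
  [BorelSpace E] [FiniteDimensional ℝ E] {V : ℝ → E → E} {κ : Kernel ℝ E} {T : ℝ}

theorem isCompact_lipschitz_paths {X Y : Type*} [PseudoMetricSpace X] [CompactSpace X]
    [MetricSpace Y] [ProperSpace Y] (x₀ : X) (C : ℝ≥0) {K : Set Y} (hK : IsCompact K) :
    IsCompact {γ : C(X, Y) | LipschitzWith C γ ∧ γ x₀ ∈ K} := by
  set S := {γ : C(X, Y) | LipschitzWith C γ ∧ γ x₀ ∈ K} with hS
  have himg : ContinuousMap.toFun '' S = {f : X → Y | LipschitzWith C f ∧ f x₀ ∈ K} := by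
    ext f
    constructor
    · rintro ⟨γ, hγ, rfl⟩
      exact hγ
    · rintro ⟨hf, hf₀⟩
      exact ⟨⟨f, hf.continuous⟩, ⟨hf, hf₀⟩, rfl⟩
  refine ArzelaAscoli.isCompact_of_equicontinuous S ?_ ?_
  · rw [himg]
    have hc : IsCompact (univ.pi fun _ : X => cthickening (C * diam (univ : Set X)) K) :=
      isCompact_univ_pi fun _ => hK.cthickening
    refine hc.of_isClosed_subset ?_ ?_
    · have h : IsClosed {f : X → Y | LipschitzWith C f} := by
        simp only [lipschitzWith_iff_dist_le_mul, ofPred_forall]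
        exact isClosed_iInter fun x => isClosed_iInter fun y => isClosed_le
          ((continuous_apply x).dist (continuous_apply y)) continuous_const
      exact h.inter (hK.isClosed.preimage (continuous_apply x₀))
    · rintro f ⟨hf, hf₀⟩ x -
      refine mem_cthickening_of_dist_le _ _ _ _ hf₀ ((hf.dist_le_mul x x₀).trans ?_)
      gcongr
      exact dist_le_diam_of_mem isCompact_univ.isBounded (mem_univ _) (mem_univ _)
  · exact (LipschitzWith.uniformEquicontinuous _ C fun γ : S => γ.2.1).equicontinuous

theorem exists_tendsto_of_lipschitz {X Y : Type*} [PseudoMetricSpace X] [CompactSpace X]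
    [MetricSpace Y] [ProperSpace Y] [MeasurableSpace Y] [BorelSpace Y]
    [MeasurableSpace C(X, Y)] [BorelSpace C(X, Y)] (x₀ : X) (C : ℝ≥0) (μ : Measure Y)
    [IsFiniteMeasure μ] (ν : ℕ → ProbabilityMeasure C(X, Y))
    (hν : ∀ n, (ν n : Measure C(X, Y)).map (fun γ => γ x₀) = μ)
    (hL : ∀ n, ∀ᵐ γ : C(X, Y) ∂(ν n : Measure C(X, Y)), LipschitzWith C γ) :
    ∃ (ν' : ProbabilityMeasure C(X, Y)) (l : Filter ℕ), l.NeBot ∧ l ≤ atTop ∧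
      Tendsto ν l (𝓝 ν') := by
  have htight : IsTightMeasureSet
      {((ρ : ProbabilityMeasure C(X, Y)) : Measure C(X, Y)) | ρ ∈ range ν} := by
    rw [isTightMeasureSet_iff_exists_isCompact_measure_compl_le]
    intro ε hε
    have h1 : IsTightMeasureSet {μ} := isTightMeasureSet_singleton
    rw [isTightMeasureSet_iff_exists_isCompact_measure_compl_le] at h1
    obtain ⟨K, hK, hKε⟩ := h1 ε hε
    refine ⟨_, isCompact_lipschitz_paths x₀ C hK, ?_⟩
    rintro _ ⟨_, ⟨n, rfl⟩, rfl⟩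
    calc (ν n : Measure C(X, Y)) {γ : C(X, Y) | LipschitzWith C γ ∧ γ x₀ ∈ K}ᶜ
        ≤ (ν n : Measure C(X, Y)) ((fun γ : C(X, Y) => γ x₀) ⁻¹' Kᶜ) := by
          refine measure_mono_ae ?_
          filter_upwards [hL n] with γ hγ h
          exact fun h' => h ⟨hγ, h'⟩
      _ = μ Kᶜ := by
          rw [← hν n, Measure.map_apply (continuous_eval_const x₀).measurable
            hK.isClosed.measurableSet.compl]
      _ ≤ ε := hKε _ rfl
  have hc := isCompact_closure_of_isTightMeasureSet htight
  let U : Ultrafilter ℕ := Ultrafilter.of atTop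
  obtain ⟨ν', -, h⟩ := hc.ultrafilter_le_nhds (U.map ν) (by
    rw [le_principal_iff]
    exact mem_of_superset (range_mem_map) subset_closure)
  exact ⟨ν', U, inferInstance, Ultrafilter.of_le _, h⟩

theorem measurable_odeDefect_integrand (hT : 0 ≤ T) [MeasurableSpace C(Icc (0 : ℝ) T, E)]
    [BorelSpace C(Icc (0 : ℝ) T, E)] {F : Type*} [MeasurableSpace F] {c : ℝ × E → F}
    (hc : Measurable c) :
    Measurable fun p : C(Icc (0 : ℝ) T, E) × ℝ => c (p.2, p.1 (projIcc 0 T hT p.2)) := by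
  have hs2 : SecondCountableTopology E := secondCountable_of_proper
  have h : Continuous fun p : C(Icc (0 : ℝ) T, E) × ℝ => p.1 (projIcc 0 T hT p.2) :=
    continuous_eval.comp (continuous_fst.prodMk ((continuous_projIcc (h := hT)).comp continuous_snd))
  exact hc.comp (measurable_snd.prodMk h.measurable)

theorem measurable_odeDefect (hT : 0 ≤ T) [MeasurableSpace C(Icc (0 : ℝ) T, E)]
    [BorelSpace C(Icc (0 : ℝ) T, E)] {c : ℝ × E → E} (hc : Measurable c)
    (t : Icc (0 : ℝ) T) : Measurable (odeDefect hT c t) := by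
  have hs2 : SecondCountableTopology E := secondCountable_of_proper
  refine ((continuous_eval_const t).measurable.sub (continuous_eval_const _).measurable).sub ?_
  simp only [intervalIntegral.integral_of_le t.2.1]
  exact (measurable_odeDefect_integrand hT hc).stronglyMeasurable.integral_prod_right'.measurable

theorem lintegral_path_eq (hT : 0 ≤ T) [MeasurableSpace C(Icc (0 : ℝ) T, E)]
    [BorelSpace C(Icc (0 : ℝ) T, E)] {ν : Measure C(Icc (0 : ℝ) T, E)} [SFinite ν]
    (hν : ∀ t : Icc (0 : ℝ) T, ν.map (fun γ => γ t) = κ t) {f : ℝ × E → ℝ≥0∞}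
    (hf : Measurable f) :
    ∫⁻ γ, (∫⁻ r in Ioc 0 T, f (r, γ (projIcc 0 T hT r))) ∂ν =
      ∫⁻ r in Ioc 0 T, ∫⁻ x, f (r, x) ∂κ r := by
  rw [lintegral_lintegral_swap (measurable_odeDefect_integrand hT hf).aemeasurable]
  refine setLIntegral_congr_fun measurableSet_Ioc fun r hr => ?_
  have hr' : r ∈ Icc 0 T := Ioc_subset_Icc_self hr
  simp only [projIcc_of_mem hT hr']
  rw [← hν ⟨r, hr'⟩, lintegral_map (f := fun x => f (r, x)) (hf.comp measurable_prodMk_left)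
    (continuous_eval_const _).measurable]

theorem integral_norm_odeDefect_sub_le (hT : 0 ≤ T) [IsMarkovKernel κ]
    [MeasurableSpace C(Icc (0 : ℝ) T, E)]
    [BorelSpace C(Icc (0 : ℝ) T, E)] {ν : Measure C(Icc (0 : ℝ) T, E)} [IsProbabilityMeasure ν]
    (hν : ∀ t : Icc (0 : ℝ) T, ν.map (fun γ => γ t) = κ t) {c c' : ℝ × E → E}
    (hc : Measurable c) (hc' : Measurable c') {C : ℝ} (hC : ∀ z, ‖c z‖ ≤ C) (hC' : ∀ z, ‖c' z‖ ≤ C)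
    (t : Icc (0 : ℝ) T) :
    ∫ γ, ‖odeDefect hT c t γ - odeDefect hT c' t γ‖ ∂ν ≤
      ∫ σ in (0 : ℝ)..T, ∫ x, ‖c (σ, x) - c' (σ, x)‖ ∂κ σ := by
  have hs2 : SecondCountableTopology E := secondCountable_of_proper
  have hd : Measurable fun z => ‖c z - c' z‖ := (hc.sub hc').norm
  have hb : ∀ z, ‖c z - c' z‖ ≤ C + C := fun z =>
    (norm_sub_le _ _).trans (add_le_add (hC z) (hC' z))
  have hm := measurable_odeDefect_integrand (E := E) hT hd
  have hi : ∀ (c : ℝ × E → E), Measurable c → (∀ z, ‖c z‖ ≤ C) → ∀ γ : C(Icc (0 : ℝ) T, E),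
      ∀ t, IntervalIntegrable (fun r => c (r, γ (projIcc 0 T hT r))) volume 0 t := by
    intro c hc hC γ t
    refine (intervalIntegrable_const (c := C)).mono_fun
      ((measurable_odeDefect_integrand hT hc).comp measurable_prodMk_left).aestronglyMeasurable
      (Eventually.of_forall fun r => ?_)
    exact (hC _).trans (le_abs_self _)
  have hle : ∀ γ : C(Icc (0 : ℝ) T, E), ‖odeDefect hT c t γ - odeDefect hT c' t γ‖ ≤
      ∫ r in Ioc 0 T, ‖c (r, γ (projIcc 0 T hT r)) - c' (r, γ (projIcc 0 T hT r))‖ := by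
    intro γ
    rw [← intervalIntegral.integral_of_le hT]
    have h1 : odeDefect hT c t γ - odeDefect hT c' t γ =
        -∫ r in (0 : ℝ)..t, (c (r, γ (projIcc 0 T hT r)) - c' (r, γ (projIcc 0 T hT r))) := by
      rw [intervalIntegral.integral_sub (hi c hc hC γ t) (hi c' hc' hC' γ t)]
      simp only [odeDefect]
      abel
    rw [h1, norm_neg]
    refine (intervalIntegral.norm_integral_le_integral_norm t.2.1).trans ?_
    exact intervalIntegral.integral_mono_interval le_rfl t.2.1 t.2.2
      (Eventually.of_forall fun _ => norm_nonneg _)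
      ((hi c hc hC γ T).sub (hi c' hc' hC' γ T)).norm
  have hinteg : Integrable (fun p : C(Icc (0 : ℝ) T, E) × ℝ =>
      ‖c (p.2, p.1 (projIcc 0 T hT p.2)) - c' (p.2, p.1 (projIcc 0 T hT p.2))‖)
      (ν.prod (volume.restrict (Ioc 0 T))) :=
    Integrable.of_bound hm.aestronglyMeasurable (C + C) (Eventually.of_forall fun p => by
      rw [norm_norm]; exact hb _)
  calc ∫ γ, ‖odeDefect hT c t γ - odeDefect hT c' t γ‖ ∂ν
      ≤ ∫ γ, (∫ r in Ioc 0 T,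
          ‖c (r, γ (projIcc 0 T hT r)) - c' (r, γ (projIcc 0 T hT r))‖) ∂ν := by
        refine integral_mono_of_nonneg (Eventually.of_forall fun _ => norm_nonneg _)
          hinteg.integral_prod_left (Eventually.of_forall hle)
    _ = ∫ r in Ioc 0 T, ∫ γ, ‖c (r, γ (projIcc 0 T hT r)) - c' (r, γ (projIcc 0 T hT r))‖ ∂ν :=
        integral_integral_swap hinteg
    _ = ∫ σ in (0 : ℝ)..T, ∫ x, ‖c (σ, x) - c' (σ, x)‖ ∂κ σ := by
        rw [intervalIntegral.integral_of_le hT]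
        refine setIntegral_congr_fun measurableSet_Ioc fun r hr => ?_
        have hr' : r ∈ Icc 0 T := Ioc_subset_Icc_self hr
        simp only [projIcc_of_mem hT hr']
        rw [← hν ⟨r, hr'⟩, integral_map (f := fun x => ‖c (r, x) - c' (r, x)‖)
          (continuous_eval_const _).measurable.aemeasurable (hd.comp measurable_prodMk_left).aestronglyMeasurable]

theorem continuous_odeDefect_time (hT : 0 ≤ T) {c : ℝ × E → E} (hc : Measurable c) {g : ℝ → ℝ}
    (hg : ∀ a b, IntervalIntegrable g volume a b) (hcg : ∀ r x, ‖c (r, x)‖ ≤ g r)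
    (γ : C(Icc (0 : ℝ) T, E)) : Continuous fun t => odeDefect hT c t γ := by
  have hs2 : SecondCountableTopology E := secondCountable_of_proper
  refine (γ.continuous.sub continuous_const).sub ?_
  have h := intervalIntegral.continuous_primitive (μ := volume)
    (f := fun r => c (r, γ (projIcc 0 T hT r))) (fun a b => ?_) 0
  · exact h.comp continuous_subtype_val
  · have hm : Measurable fun r => c (r, γ (projIcc 0 T hT r)) :=
      hc.comp (measurable_id.prodMk (γ.continuous.comp continuous_projIcc).measurable)
    exact (hg a b).mono_fun hm.aestronglyMeasurable
      (Eventually.of_forall fun r => (hcg _ _).trans (le_abs_self _))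

theorem ae_forall_odeDefect_eq_zero (hT : 0 ≤ T) {c : ℝ × E → E} (hc : Measurable c) {g : ℝ → ℝ}
    (hg : ∀ a b, IntervalIntegrable g volume a b) (hcg : ∀ r x, ‖c (r, x)‖ ≤ g r)
    [MeasurableSpace C(Icc (0 : ℝ) T, E)] {ν : Measure C(Icc (0 : ℝ) T, E)}
    (h : ∀ t, ∀ᵐ γ ∂ν, odeDefect hT c t γ = 0) : ∀ᵐ γ ∂ν, ∀ t, odeDefect hT c t γ = 0 := by
  obtain ⟨D, hDc, hDd⟩ := TopologicalSpace.exists_countable_dense (Icc (0 : ℝ) T)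
  filter_upwards [(ae_ball_iff hDc).2 fun t _ => h t] with γ hγ t
  exact congrFun ((continuous_odeDefect_time hT hc hg hcg γ).ext_on hDd continuous_const hγ) t

theorem norm_integral_odeDefect_le (hT : 0 ≤ T) {c : ℝ × E → E} {C : ℝ} (hC : ∀ z, ‖c z‖ ≤ C)
    (t : Icc (0 : ℝ) T) (γ : C(Icc (0 : ℝ) T, E)) :
    ‖∫ r in (0 : ℝ)..t, c (r, γ (projIcc 0 T hT r))‖ ≤ C * T := by
  refine (intervalIntegral.norm_integral_le_of_norm_le_const fun r _ => hC _).trans ?_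
  rw [sub_zero, abs_of_nonneg t.2.1]
  exact mul_le_mul_of_nonneg_left t.2.2 ((norm_nonneg _).trans (hC 0))

/-- The superposition principle for a vector field bounded by one. -/
theorem IsCESolution.exists_path_measure [IsMarkovKernel κ] (hs : IsCESolution V κ)
    (hT : 0 < T) [MeasurableSpace C(Icc (0 : ℝ) T, E)] [BorelSpace C(Icc (0 : ℝ) T, E)] :
    ∃ ν : Measure C(Icc (0 : ℝ) T, E), IsProbabilityMeasure ν ∧
      (∀ t : Icc (0 : ℝ) T, ν.map (fun γ => γ t) = κ t) ∧
      ∀ᵐ γ ∂ν, ∀ t, odeDefect hT.le (Function.uncurry V) t γ = 0 := by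
  have hs2 : SecondCountableTopology E := secondCountable_of_proper
  choose ν hνp hν0 hνL hνm hνd using fun n : ℕ =>
    hs.exists_approx_path_measure hT (Nat.one_div_pos_of_nat (α := ℝ) (n := n))
  let P : ℕ → ProbabilityMeasure C(Icc (0 : ℝ) T, E) := fun n => ⟨ν n, hνp n⟩
  obtain ⟨ν', l, hl, hlt, hlim⟩ := exists_tendsto_of_lipschitz _ 2 (κ 0) P hν0 hνL
  replace hlim := ProbabilityMeasure.tendsto_iff_forall_integral_tendsto.1 hlim
  have hε : Tendsto (fun n : ℕ => 1 / ((n : ℝ) + 1)) l (𝓝 0) :=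
    tendsto_one_div_add_atTop_nhds_zero_nat.mono_left hlt
  have hmarg : ∀ t : Icc (0 : ℝ) T,
      (ν' : Measure C(Icc (0 : ℝ) T, E)).map (fun γ => γ t) = κ t := by
    intro t
    have het : Continuous fun γ : C(Icc (0 : ℝ) T, E) => γ t := continuous_eval_const t
    refine measure_ext_of_test fun u hu huc hu01 => ?_
    rw [integral_map het.measurable.aemeasurable hu.continuous.aestronglyMeasurable]
    obtain ⟨K, hK⟩ := hu.lipschitzWith_of_hasCompactSupport huc (by simp)
    have hK1 : (0 : ℝ) < K + 1 := by positivity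
    let f : E → ℝ := fun x => (K + 1 : ℝ)⁻¹ * u x
    have hf01 : ∀ x, f x ∈ Icc 0 1 := fun x =>
      ⟨mul_nonneg (by positivity) (hu01 x).1, mul_le_one₀ (inv_le_one_of_one_le₀ (by simp))
        (hu01 x).1 (hu01 x).2⟩
    have hfc : Continuous f := continuous_const.mul hu.continuous
    have hfL : LipschitzWith 1 f := by
      refine LipschitzWith.of_dist_le_mul fun x y => ?_
      rw [NNReal.coe_one, one_mul, Real.dist_eq, ← mul_sub, abs_mul, abs_of_pos (by positivity),
        inv_mul_le_iff₀ hK1, ← Real.dist_eq]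
      refine (hK.dist_le_mul x y).trans ?_
      gcongr
      linarith
    have h1 : Tendsto (fun n => ∫ γ, f (γ t) ∂ν n) l
        (𝓝 (∫ γ, f (γ t) ∂(ν' : Measure C(Icc (0 : ℝ) T, E)))) :=
      hlim (BoundedContinuousFunction.ofNormedAddCommGroup (fun γ => f (γ t)) (hfc.comp het) 1
        fun γ => by
          rw [Real.norm_eq_abs, abs_of_nonneg (hf01 _).1]
          exact (hf01 _).2)
    have h2 : Tendsto (fun n => ∫ γ, f (γ t) ∂ν n) l (𝓝 (∫ x, f x ∂κ t)) := by
      rw [tendsto_iff_norm_sub_tendsto_zero]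
      refine squeeze_zero (fun _ => norm_nonneg _)
        (fun n => hνm n f hfL (huc.mul_left (f := fun _ => (K + 1 : ℝ)⁻¹)) hf01 t) ?_
      simpa using hε.const_mul 7
    have h3 := tendsto_nhds_unique h1 h2
    simp only [f, integral_const_mul] at h3
    exact mul_left_cancel₀ (by positivity) h3
  refine ⟨ν', inferInstance, hmarg, ?_⟩
  have hzero : ∀ t : Icc (0 : ℝ) T, ∀ᵐ γ ∂(ν' : Measure C(Icc (0 : ℝ) T, E)),
      odeDefect hT.le (Function.uncurry V) t γ = 0 := by
    intro t
    have hmV := measurable_odeDefect hT.le hs.measurable t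
    have hbound : ∀ g : C(Icc (0 : ℝ) T, E) → E, Measurable g →
        Integrable (fun γ => min ‖g γ‖ 1) (ν' : Measure C(Icc (0 : ℝ) T, E)) := fun g hg =>
      Integrable.of_bound (hg.norm.min measurable_const).aestronglyMeasurable 1
        (Eventually.of_forall fun γ => by
          rw [Real.norm_eq_abs, abs_of_nonneg (by positivity)]
          exact min_le_right _ _)
    have hδ : ∀ δ > 0, ∫ γ, min ‖odeDefect hT.le (Function.uncurry V) t γ‖ 1 ∂ν' ≤ 2 * δ := by
      intro δ hδ
      obtain ⟨c, L, hc, hcV⟩ := hs.exists_isSmoothField hT.le hδ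
      have hcm := hc.contDiff.continuous.measurable
      have hcont := continuous_odeDefect hT.le hc t
      have h1 : Tendsto (fun n => ∫ γ, min ‖odeDefect hT.le c t γ‖ 1 ∂ν n) l
          (𝓝 (∫ γ, min ‖odeDefect hT.le c t γ‖ 1 ∂ν')) :=
        hlim (BoundedContinuousFunction.ofNormedAddCommGroup
          (fun γ => min ‖odeDefect hT.le c t γ‖ 1) (hcont.norm.min continuous_const) 1
          fun γ => by
            rw [Real.norm_eq_abs, abs_of_nonneg (by positivity)]
            exact min_le_right _ _)
      have h2 : Tendsto (fun n : ℕ => δ + (3 + 8 * T * L + 16 * T) * (1 / ((n : ℝ) + 1))) l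
          (𝓝 δ) := by
        simpa using (hε.const_mul (3 + 8 * T * L + 16 * T)).const_add δ
      have h3 : ∫ γ, min ‖odeDefect hT.le c t γ‖ 1 ∂ν' ≤ δ := by
        refine le_of_tendsto_of_tendsto' h1 h2 fun n => ?_
        have hinteg : Integrable (fun γ => ‖odeDefect hT.le c t γ‖) (ν n) := by
          refine Integrable.of_bound hcont.norm.aestronglyMeasurable (2 * T + 2 * T) ?_
          filter_upwards [hνL n] with γ hγ
          rw [norm_norm]
          refine (norm_sub_le _ _).trans (add_le_add ?_
            (norm_integral_odeDefect_le hT.le hc.norm_le t γ))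
          rw [← dist_eq_norm]
          refine (hγ.dist_le_mul _ _).trans ?_
          rw [Subtype.dist_eq, Real.dist_eq, sub_zero, abs_of_nonneg t.2.1]
          exact mul_le_mul_of_nonneg_left t.2.2 zero_le_two
        exact (integral_mono_of_nonneg (Eventually.of_forall fun _ => by positivity) hinteg
          (Eventually.of_forall fun _ => min_le_left _ _)).trans
          ((hνd n c L hc t).trans (by gcongr))
      have h4 := integral_norm_odeDefect_sub_le hT.le hmarg hs.measurable hcm (C := 2)
        (fun z => (hs.norm_le _ _).trans one_le_two) hc.norm_le t
      have h5 : ∀ γ, min ‖odeDefect hT.le (Function.uncurry V) t γ‖ 1 ≤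
          min ‖odeDefect hT.le c t γ‖ 1 +
          ‖odeDefect hT.le (Function.uncurry V) t γ - odeDefect hT.le c t γ‖ := by
        intro γ
        have := norm_le_norm_add_norm_sub' (odeDefect hT.le (Function.uncurry V) t γ)
          (odeDefect hT.le c t γ)
        have h0 := norm_nonneg (odeDefect hT.le (Function.uncurry V) t γ - odeDefect hT.le c t γ)
        rcases min_cases ‖odeDefect hT.le c t γ‖ 1 with h | h
        · exact (min_le_left _ _).trans (by rw [h.1]; exact this)
        · exact (min_le_right _ _).trans (by rw [h.1]; linarith)
      have hmc := measurable_odeDefect hT.le hcm t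
      have hinteg : Integrable (fun γ => ‖odeDefect hT.le (Function.uncurry V) t γ -
          odeDefect hT.le c t γ‖) (ν' : Measure C(Icc (0 : ℝ) T, E)) := by
        refine Integrable.of_bound (hmV.sub hmc).norm.aestronglyMeasurable (2 * T + 2 * T)
          (Eventually.of_forall fun γ => ?_)
        rw [norm_norm, odeDefect, odeDefect, sub_sub_sub_cancel_left]
        exact (norm_sub_le _ _).trans (add_le_add
          (norm_integral_odeDefect_le hT.le hc.norm_le t γ)
          (norm_integral_odeDefect_le hT.le (fun z => (hs.norm_le _ _).trans one_le_two) t γ))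
      have h6 := integral_mono_of_nonneg (μ := (ν' : Measure C(Icc (0 : ℝ) T, E)))
        (Eventually.of_forall fun _ => by positivity) ((hbound _ hmc).add hinteg)
        (Eventually.of_forall h5)
      have h7 := integral_add (hbound _ hmc) hinteg
      simp only [Pi.add_apply, Function.uncurry_apply_pair] at h4 h6 h7
      linarith
    have h0 : ∫ γ, min ‖odeDefect hT.le (Function.uncurry V) t γ‖ 1 ∂ν' = 0 := by
      refine le_antisymm (le_of_forall_pos_le_add fun δ hδ' => ?_)
        (integral_nonneg fun _ => by positivity)
      have := hδ (δ / 2) (by positivity)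
      linarith
    rw [integral_eq_zero_iff_of_nonneg (fun _ => by positivity) (hbound _ hmV)] at h0
    filter_upwards [h0] with γ hγ
    rcases min_cases ‖odeDefect hT.le (Function.uncurry V) t γ‖ 1 with h | h
    · exact norm_eq_zero.1 (h.1.symm.trans hγ)
    · exact absurd (h.1.symm.trans hγ) one_ne_zero
  exact ae_forall_odeDefect_eq_zero hT.le hs.measurable (g := fun _ => 1)
    (fun _ _ => intervalIntegrable_const) hs.norm_le hzero

end PathLimit

section TimeChange

theorem isSFiniteKernel_of_finite {α β : Type*} [MeasurableSpace α] [MeasurableSpace β]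
    (κ : Kernel α β) (h : ∀ a, IsFiniteMeasure (κ a)) : IsSFiniteKernel κ := by
  have hm : Measurable fun a => ⌊(κ a univ).toReal⌋₊ :=
    Nat.measurable_floor.comp (κ.measurable_coe MeasurableSet.univ).ennreal_toReal
  have hs : ∀ n : ℕ, MeasurableSet ((fun a => ⌊(κ a univ).toReal⌋₊) ⁻¹' {n}) :=
    fun n => hm (measurableSet_singleton n)
  classical
  let η : ℕ → Kernel α β := fun n => Kernel.piecewise (hs n) κ 0
  have hη : ∀ n, IsFiniteKernel (η n) := by
    intro n
    refine ⟨⟨ENNReal.ofReal (n + 1), ENNReal.ofReal_lt_top, fun a => ?_⟩⟩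
    simp only [η, Kernel.piecewise_apply']
    split_ifs with ha
    · rw [← ENNReal.ofReal_toReal (measure_ne_top (κ a) univ)]
      have ha' : ⌊(κ a univ).toReal⌋₊ = n := ha
      rw [← ha']
      exact ENNReal.ofReal_le_ofReal (Nat.lt_floor_add_one _).le
    · simp
  have hsum : Kernel.sum η = κ := by
    ext a s hs'
    rw [Kernel.sum_apply' _ _ hs', tsum_eq_single ⌊(κ a univ).toReal⌋₊]
    · simp [η, Kernel.piecewise_apply']
    · intro n hn
      have : a ∉ (fun a => ⌊(κ a univ).toReal⌋₊) ⁻¹' {n} := fun h' => hn h'.symm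
      simp only [η, Kernel.piecewise_apply', if_neg this]
      simp
  rw [← hsum]
  infer_instance

/-- A possibly nonmeasurable integrable bound for `f` can be replaced by a measurable one, at the
price of exceptional null sets. -/
theorem exists_measurable_bound {α E : Type*} [MeasurableSpace α] [MeasurableSpace E]
    {κ : Kernel α E} [IsSFiniteKernel κ] (hκ : ∀ a, IsFiniteMeasure (κ a)) {μ : Measure α}
    {f : α → E → ℝ≥0∞} (hf : Measurable (Function.uncurry f))
    (hfin : ∫⁻ a, ⨆ x, f a x ∂μ ≠ ⊤) :
    ∃ g : α → ℝ≥0∞, Measurable g ∧ ∫⁻ a, g a ∂μ ≠ ⊤ ∧ ∀ᵐ a ∂μ, ∀ᵐ x ∂κ a, f a x ≤ g a := by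
  obtain ⟨g, hg, hgle, hgeq⟩ := exists_measurable_le_lintegral_eq (μ := μ) fun a => ⨆ x, f a x
  refine ⟨g, hg, hgeq ▸ hfin, ?_⟩
  have hd : Measurable fun p : α × E => f p.1 p.2 - g p.1 := hf.sub (hg.comp measurable_fst)
  have hF : Measurable fun a => ∫⁻ x, (f a x - g a) ∂κ a := hd.lintegral_kernel_prod_right'
  have hM : Measurable fun a => (1 + κ a univ)⁻¹ :=
    (measurable_const.add (κ.measurable_coe MeasurableSet.univ)).inv
  have hle : ∀ a, g a + (1 + κ a univ)⁻¹ * ∫⁻ x, (f a x - g a) ∂κ a ≤ ⨆ x, f a x := by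
    intro a
    have h1 : ∫⁻ x, (f a x - g a) ∂κ a ≤ ((⨆ x, f a x) - g a) * (1 + κ a univ) := by
      calc ∫⁻ x, (f a x - g a) ∂κ a ≤ ∫⁻ _, ((⨆ x, f a x) - g a) ∂κ a :=
            lintegral_mono fun x => tsub_le_tsub_right (le_iSup (f a) x) _
        _ = ((⨆ x, f a x) - g a) * κ a univ := lintegral_const _
        _ ≤ _ := by gcongr; exact le_add_self
    calc g a + (1 + κ a univ)⁻¹ * ∫⁻ x, (f a x - g a) ∂κ a
        ≤ g a + ((⨆ x, f a x) - g a) := by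
          gcongr
          rw [mul_comm, ← div_eq_mul_inv]
          exact ENNReal.div_le_of_le_mul h1
      _ = _ := add_tsub_cancel_of_le (hgle a)
  have h0 : ∫⁻ a, (1 + κ a univ)⁻¹ * ∫⁻ x, (f a x - g a) ∂κ a ∂μ = 0 := by
    have h2 := lintegral_mono (μ := μ) hle
    rw [lintegral_add_left hg, hgeq] at h2
    have h3 : ∫⁻ a, g a ∂μ ≠ ⊤ := hgeq ▸ hfin
    simpa using (ENNReal.add_le_add_iff_left h3).1 (h2.trans_eq (add_zero _).symm)
  rw [lintegral_eq_zero_iff (f := fun a => (1 + κ a univ)⁻¹ * ∫⁻ x, (f a x - g a) ∂κ a)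
    (hM.mul hF)] at h0
  filter_upwards [h0] with a ha
  have ha' : ∫⁻ x, (f a x - g a) ∂κ a = 0 := by
    refine (mul_eq_zero.1 ha).resolve_left (ENNReal.inv_ne_zero.2 ?_)
    exact ENNReal.add_ne_top.2 ⟨ENNReal.one_ne_top, measure_ne_top _ _⟩
  rw [lintegral_eq_zero_iff (f := fun x => f a x - g a) (hd.comp measurable_prodMk_left)] at ha'
  filter_upwards [ha'] with x hx
  exact tsub_eq_zero_iff_le.1 hx

theorem preimage_orderIso_Ioc (G : ℝ ≃o ℝ) (s t : ℝ) : G ⁻¹' Ioc (G s) (G t) = Ioc s t := by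
  ext x
  simp

theorem exists_time_change {g : ℝ → ℝ≥0} (hg1 : ∀ t, 1 ≤ g t)
    (hgi : ∀ a b, IntervalIntegrable (fun t => (g t : ℝ)) volume a b) :
    ∃ G : ℝ ≃o ℝ, G 0 = 0 ∧ (volume.withDensity fun t => (g t : ℝ≥0∞)).map G = volume := by
  let G : ℝ → ℝ := fun t => ∫ σ in (0 : ℝ)..t, (g σ : ℝ)
  have hsub : ∀ s t, G t - G s = ∫ σ in s..t, (g σ : ℝ) := fun s t =>
    intervalIntegral.integral_interval_sub_left (hgi _ _) (hgi _ _)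
  have hge : ∀ s t, s ≤ t → t - s ≤ G t - G s := by
    intro s t hst
    rw [hsub]
    calc t - s = ∫ _ in s..t, (1 : ℝ) := by simp
      _ ≤ _ := intervalIntegral.integral_mono_on hst intervalIntegrable_const (hgi _ _)
        fun σ _ => by exact_mod_cast hg1 σ
  have hmono : StrictMono G := fun s t hst => by linarith [hge s t hst.le]
  have hcont : Continuous G := intervalIntegral.continuous_primitive hgi 0
  have h0 : G 0 = 0 := intervalIntegral.integral_same
  have hsurj : Function.Surjective G := by
    refine hcont.surjective ?_ ?_
    · refine tendsto_atTop_mono' _ ?_ tendsto_id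
      filter_upwards [eventually_ge_atTop 0] with t ht
      have := hge 0 t ht
      simp only [id]
      linarith
    · refine tendsto_atBot_mono' _ ?_ tendsto_id
      filter_upwards [eventually_le_atBot 0] with t ht
      have := hge t 0 ht
      simp only [id]
      linarith
  let e : ℝ ≃o ℝ := hmono.orderIsoOfSurjective G hsurj
  have he : ∀ t, e t = G t := fun _ => rfl
  refine ⟨e, h0, ?_⟩
  refine (Measure.ext_of_Ioc' _ _ (fun a b _ => by simp) fun a b hab => ?_).symm
  obtain ⟨s, rfl⟩ := e.surjective a
  obtain ⟨t, rfl⟩ := e.surjective b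
  have hst : s < t := e.lt_iff_lt.1 hab
  rw [Measure.map_apply e.continuous.measurable measurableSet_Ioc, preimage_orderIso_Ioc,
    withDensity_apply _ measurableSet_Ioc, Real.volume_Ioc, he, he, hsub,
    intervalIntegral.integral_of_le hst.le, ofReal_integral_eq_lintegral_ofReal
      (hgi s t).1 (Eventually.of_forall fun _ => NNReal.coe_nonneg _)]
  simp

theorem intervalIntegral_time_change {F : Type*} [NormedAddCommGroup F] [NormedSpace ℝ F]
    {g : ℝ → ℝ≥0} (hg : Measurable g) {G : ℝ ≃o ℝ}
    (hG : (volume.withDensity fun t => (g t : ℝ≥0∞)).map G = volume) (f : ℝ → F) (s t : ℝ) :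
    ∫ y in G s..G t, f y = ∫ σ in s..t, g σ • f (G σ) := by
  have hle : ∀ s t, s ≤ t → ∫ y in G s..G t, f y = ∫ σ in s..t, g σ • f (G σ) := by
    intro s t hst
    rw [intervalIntegral.integral_of_le hst, intervalIntegral.integral_of_le (G.monotone hst)]
    have he : MeasurableEmbedding G := G.toHomeomorph.measurableEmbedding
    conv_lhs => rw [← hG]
    rw [he.setIntegral_map, preimage_orderIso_Ioc,
      setIntegral_withDensity_eq_setIntegral_smul hg _ measurableSet_Ioc]
  rcases le_total s t with hst | hst
  · exact hle s t hst
  · rw [intervalIntegral.integral_symm, hle t s hst, ← intervalIntegral.integral_symm]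

end TimeChange

section Superposition
variable {E : Type*} [NormedAddCommGroup E] [NormedSpace ℝ E] [MeasurableSpace E]
  [BorelSpace E] [FiniteDimensional ℝ E] {V : ℝ → E → E} {κ : Kernel ℝ E} {T : ℝ}

/-- The superposition principle for a vector field dominated by a locally integrable function of
time. -/
theorem exists_path_measure_of_le (hV : Measurable (Function.uncurry V)) {g : ℝ → ℝ≥0}
    (hg : Measurable g) (hg1 : ∀ t, 1 ≤ g t)
    (hgi : ∀ a b, IntervalIntegrable (fun t => (g t : ℝ)) volume a b)
    (hVg : ∀ t x, ‖V t x‖ ≤ g t) (hκ : ∀ t, IsFiniteMeasure (κ t))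
    (hw : ∀ u : E → ℝ, ContDiff ℝ (⊤ : ℕ∞) u → HasCompactSupport u → ∀ s t,
      (∫ x, u x ∂κ t) - (∫ x, u x ∂κ s) = ∫ σ in s..t, ∫ x, fderiv ℝ u x (V σ x) ∂κ σ)
    {S : ℝ} (hS : IsProbabilityMeasure (κ S)) (hT : 0 < T)
    [MeasurableSpace C(Icc (0 : ℝ) T, E)] [BorelSpace C(Icc (0 : ℝ) T, E)] :
    ∃ ν : Measure C(Icc (0 : ℝ) T, E), IsProbabilityMeasure ν ∧
      (∀ t : Icc (0 : ℝ) T, ν.map (fun γ => γ t) = κ t) ∧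
      ∀ᵐ γ ∂ν, ∀ t, odeDefect hT.le (Function.uncurry V) t γ = 0 := by
  have hs2 : SecondCountableTopology E := secondCountable_of_proper
  obtain ⟨G, hG0, hG⟩ := exists_time_change hg1 hgi
  have hGm : Measurable G.symm := G.symm.continuous.measurable
  have hg0 : ∀ t, g t ≠ 0 := fun t => (zero_lt_one.trans_le (hg1 t)).ne'
  let κ' : Kernel ℝ E := κ.comap G.symm hGm
  let V' : ℝ → E → E := fun y x => (g (G.symm y))⁻¹ • V (G.symm y) x
  have hV'G : ∀ t x, g t • V' (G t) x = V t x := fun t x => by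
    simp only [V', G.symm_apply_apply]
    rw [smul_inv_smul₀ (hg0 t)]
  have hsol : IsCESolution V' κ' := by
    refine ⟨?_, fun y x => ?_, fun y => hκ _, fun u hu huc s t => ?_⟩
    · exact ((hg.comp hGm).inv.comp measurable_fst).smul
        (hV.comp ((hGm.comp measurable_fst).prodMk measurable_snd))
    · simp only [V']
      rw [NNReal.smul_def, norm_smul, NNReal.coe_inv, norm_inv, Real.norm_eq_abs, NNReal.abs_eq]
      exact inv_mul_le_one_of_le₀ (hVg _ _) (NNReal.coe_nonneg _)
    · obtain ⟨s, rfl⟩ := G.surjective s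
      obtain ⟨t, rfl⟩ := G.surjective t
      rw [intervalIntegral_time_change hg hG]
      simp only [κ', Kernel.comap_apply, G.symm_apply_apply]
      rw [hw u hu huc s t]
      refine intervalIntegral.integral_congr fun σ _ => ?_
      rw [NNReal.smul_def, smul_eq_mul, ← integral_const_mul]
      refine integral_congr_ae (Eventually.of_forall fun x => ?_)
      beta_reduce
      rw [← hV'G σ x, NNReal.smul_def, map_smul, smul_eq_mul]
  have : IsSFiniteKernel κ' := isSFiniteKernel_of_finite κ' fun y => hκ _
  have : IsMarkovKernel κ' := ⟨fun y => ⟨by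
    rw [hsol.measure_univ_eq (G S) y]
    simp only [κ', Kernel.comap_apply, G.symm_apply_apply]
    exact measure_univ⟩⟩
  have hGT : 0 < G T := hG0 ▸ G.strictMono hT
  have hGmem : ∀ t : Icc (0 : ℝ) T, G t ∈ Icc 0 (G T) := fun t =>
    ⟨hG0.symm.trans_le (G.monotone t.2.1), G.monotone t.2.2⟩
  let φ : C(Icc (0 : ℝ) T, Icc (0 : ℝ) (G T)) :=
    ⟨fun t => ⟨G t, hGmem t⟩, (G.continuous.comp continuous_subtype_val).subtype_mk _⟩
  borelize C(Icc (0 : ℝ) (G T), E)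
  obtain ⟨ν, hν, hνm, hνd⟩ := hsol.exists_path_measure hGT
  have hΦ : Measurable fun γ : C(Icc (0 : ℝ) (G T), E) => γ.comp φ :=
    (ContinuousMap.continuous_precomp φ).measurable
  refine ⟨ν.map fun γ => γ.comp φ, Measure.isProbabilityMeasure_map hΦ.aemeasurable,
    fun t => ?_, ?_⟩
  · rw [Measure.map_map (continuous_eval_const t).measurable hΦ]
    have := hνm (φ t)
    simp only [κ', Kernel.comap_apply] at this
    rw [show G.symm (φ t) = t from G.symm_apply_apply _] at this
    exact this
  · refine ae_forall_odeDefect_eq_zero hT.le hV hgi hVg fun t => ?_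
    rw [ae_map_iff hΦ.aemeasurable]
    · filter_upwards [hνd] with γ hγ
      have h1 := hγ (φ t)
      have h2 : φ ⟨0, left_mem_Icc.2 hT.le⟩ = ⟨0, left_mem_Icc.2 hGT.le⟩ := Subtype.ext hG0
      have h3 : ∫ r in (0 : ℝ)..t, V r (γ (φ (projIcc 0 T hT.le r))) =
          ∫ y in (0 : ℝ)..G t, V' y (γ (projIcc 0 (G T) hGT.le y)) := by
        have h4 := intervalIntegral_time_change hg hG
          (fun y => V' y (γ (projIcc 0 (G T) hGT.le y))) 0 t
        rw [hG0] at h4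
        rw [h4]
        refine intervalIntegral.integral_congr fun r hr => ?_
        rw [uIcc_of_le t.2.1] at hr
        have hr' : r ∈ Icc 0 T := ⟨hr.1, hr.2.trans t.2.2⟩
        simp only [hV'G]
        rw [projIcc_of_mem hT.le hr', projIcc_of_mem hGT.le (hGmem ⟨r, hr'⟩)]
        rfl
      simp only [odeDefect, Function.uncurry_apply_pair, ContinuousMap.comp_apply, h2, h3] at h1 ⊢
      exact h1
    · exact measurable_odeDefect hT.le hV t (measurableSet_singleton 0)

end Superposition

section WeakSolution
variable {E : Type*} [NormedAddCommGroup E] [NormedSpace ℝ E] [MeasurableSpace E]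
  [BorelSpace E] [FiniteDimensional ℝ E] {V : ℝ → E → E} {T : ℝ}

theorem intervalIntegral_indicator_projIcc {F : Type*} [NormedAddCommGroup F] [NormedSpace ℝ F]
    (hT : 0 ≤ T) (f : ℝ → F) (s t : ℝ) :
    ∫ σ in s..t, (Ioc 0 T).indicator f σ = ∫ σ in (projIcc 0 T hT s : ℝ)..projIcc 0 T hT t, f σ := by
  have hle : ∀ s t, s ≤ t → ∫ σ in s..t, (Ioc 0 T).indicator f σ =
      ∫ σ in (projIcc 0 T hT s : ℝ)..projIcc 0 T hT t, f σ := by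
    intro s t hst
    rw [intervalIntegral.integral_of_le hst,
      intervalIntegral.integral_of_le (monotone_projIcc hT hst), setIntegral_indicator
      measurableSet_Ioc]
    congr 2
    ext x
    simp only [mem_inter_iff, mem_Ioc, coe_projIcc, max_lt_iff, min_lt_iff, le_max_iff, le_min_iff]
    constructor
    · rintro ⟨⟨h1, h2⟩, h3, h4⟩
      exact ⟨⟨h3, Or.inr h1⟩, Or.inr ⟨h4, h2⟩⟩
    · rintro ⟨⟨h1, h2⟩, h3⟩
      rcases h3 with h3 | h3
      · exact absurd h1 h3.not_gt
      · exact ⟨⟨h2.resolve_left h3.1.not_gt, h3.2⟩, h1, h3.1⟩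
  rcases le_total s t with hst | hst
  · exact hle s t hst
  · rw [intervalIntegral.integral_symm, hle t s hst, ← intervalIntegral.integral_symm]

theorem integrable_indicator_toNNReal {g : ℝ → ℝ≥0∞} (hg : Measurable g) {A : Set ℝ}
    (hA : MeasurableSet A) (h : ∫⁻ t in A, g t ≠ ⊤) :
    Integrable (fun t => ((A.indicator (fun t => (g t).toNNReal) t : ℝ≥0) : ℝ)) := by
  have h1 : IntegrableOn (fun t => (g t).toReal) A :=
    integrable_toReal_of_lintegral_ne_top hg.aemeasurable h
  refine ((integrable_indicator_iff hA).2 h1).congr (Eventually.of_forall fun t => ?_)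
  by_cases ht : t ∈ A
  · simp [ht, ENNReal.coe_toNNReal_eq_toReal]
  · simp [ht]

/-- The superposition principle for a weak solution driven by a field with integrable supremum
norm. -/
theorem exists_path_measure_of_weak (hV : Measurable (Function.uncurry V))
    (hbound : (∫⁻ t in Icc (0 : ℝ) T, ⨆ x, (‖V t x‖₊ : ℝ≥0∞)) < ⊤) {μ : ℝ → Measure E}
    (hμ : ∀ t, IsFiniteMeasure (μ t))
    (hw : ∀ u : E → ℝ, ContDiff ℝ (⊤ : ℕ∞) u → HasCompactSupport u → ∀ s ∈ Icc (0 : ℝ) T,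
      ∀ t ∈ Icc (0 : ℝ) T, (∫ x, u x ∂μ t) - (∫ x, u x ∂μ s) =
        ∫ σ in s..t, ∫ x, fderiv ℝ u x (V σ x) ∂μ σ)
    {S : ℝ} (hS : S ∈ Icc (0 : ℝ) T) (hS1 : IsProbabilityMeasure (μ S)) (hT : 0 < T)
    [MeasurableSpace C(Icc (0 : ℝ) T, E)] [BorelSpace C(Icc (0 : ℝ) T, E)] :
    ∃ ν : Measure C(Icc (0 : ℝ) T, E), IsProbabilityMeasure ν ∧
      (∀ t : Icc (0 : ℝ) T, ν.map (fun γ => γ t) = μ t) ∧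
      ∀ᵐ γ ∂ν, ∀ t, odeDefect hT.le (Function.uncurry V) t γ = 0 := by
  have hs2 : SecondCountableTopology E := secondCountable_of_proper
  let κ : Kernel ℝ E := ⟨fun t => μ (projIcc 0 T hT.le t), measurable_of_test fun u hu huc => by
    have h := continuousOn_of_sub_eq_integral (hw u hu huc)
    exact (h.comp_continuous (continuous_subtype_val.comp (continuous_projIcc (h := hT.le)))
      fun t => (projIcc 0 T hT.le t).2).measurable⟩
  have hκdef : ∀ t, κ t = μ (projIcc 0 T hT.le t) := fun _ => rfl
  have hκμ : ∀ t ∈ Icc (0 : ℝ) T, κ t = μ t := fun t ht => by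
    rw [hκdef, projIcc_of_mem hT.le ht]
  have hκ : ∀ t, IsFiniteMeasure (κ t) := fun t => hμ _
  have : IsSFiniteKernel κ := isSFiniteKernel_of_finite κ hκ
  obtain ⟨g₀, hg₀, hg₀i, hg₀le⟩ := exists_measurable_bound (κ := κ) hκ
    (f := fun t x => (‖V t x‖₊ : ℝ≥0∞)) hV.nnnorm.coe_nnreal_ennreal hbound.ne
  let g : ℝ → ℝ≥0 := fun t => 1 + (Icc (0 : ℝ) T).indicator (fun t => (g₀ t).toNNReal) t
  have hg : Measurable g :=
    measurable_const.add (hg₀.ennreal_toNNReal.indicator measurableSet_Icc)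
  have hgi : ∀ a b, IntervalIntegrable (fun t => (g t : ℝ)) volume a b := fun a b => by
    simp only [g, NNReal.coe_add]
    exact intervalIntegrable_const.add
      (integrable_indicator_toNNReal hg₀ measurableSet_Icc hg₀i).intervalIntegrable
  let A : Set (ℝ × E) := {p | p.1 ∈ Ioc 0 T ∧ ‖V p.1 p.2‖ ≤ g p.1}
  have hA : MeasurableSet A := (measurable_fst measurableSet_Ioc).inter
    (measurableSet_le hV.norm (hg.comp measurable_fst).coe_nnreal_real)
  let V' : ℝ → E → E := fun t x => A.indicator (Function.uncurry V) (t, x)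
  have hV' : Measurable (Function.uncurry V') := hV.indicator hA
  have hVV' : ∀ᵐ t ∂volume.restrict (Ioc 0 T), ∀ᵐ x ∂κ t, V' t x = V t x := by
    have h1 := ae_restrict_of_ae_restrict_of_subset Ioc_subset_Icc_self hg₀le
    have h2 := ae_restrict_of_ae_restrict_of_subset Ioc_subset_Icc_self (ae_lt_top hg₀ hg₀i)
    filter_upwards [h1, h2, ae_restrict_mem measurableSet_Ioc] with t ht1 ht2 ht
    filter_upwards [ht1] with x hx
    have : (t, x) ∈ A := by
      refine ⟨ht, ?_⟩
      simp only [g, indicator_of_mem (Ioc_subset_Icc_self ht)]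
      have h3 : ‖V t x‖₊ ≤ (g₀ t).toNNReal := by
        rwa [← ENNReal.coe_le_coe, ENNReal.coe_toNNReal ht2.ne]
      rw [← coe_nnnorm]
      exact_mod_cast h3.trans le_add_self
    exact indicator_of_mem this _
  have hw' : ∀ u : E → ℝ, ContDiff ℝ (⊤ : ℕ∞) u → HasCompactSupport u → ∀ s t,
      (∫ x, u x ∂κ t) - (∫ x, u x ∂κ s) = ∫ σ in s..t, ∫ x, fderiv ℝ u x (V' σ x) ∂κ σ := by
    intro u hu huc s t
    rw [hκdef, hκdef, hw u hu huc _ (projIcc 0 T hT.le s).2 _ (projIcc 0 T hT.le t).2,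
      ← intervalIntegral_indicator_projIcc]
    refine intervalIntegral.integral_congr_ae ?_
    rw [ae_restrict_iff' measurableSet_Ioc] at hVV'
    filter_upwards [hVV'] with σ hσ _
    by_cases hσT : σ ∈ Ioc 0 T
    · rw [indicator_of_mem hσT, ← hκμ σ (Ioc_subset_Icc_self hσT)]
      refine integral_congr_ae ?_
      filter_upwards [hσ hσT] with x hx
      rw [hx]
    · have h0 : ∀ x, V' σ x = 0 := fun x => indicator_of_notMem (fun h => hσT h.1) _
      simp [indicator_of_notMem hσT, h0]
  have hVg : ∀ t x, ‖V' t x‖ ≤ g t := by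
    intro t x
    by_cases h : (t, x) ∈ A
    · simp only [V', indicator_of_mem h]
      exact h.2
    · simp only [V', indicator_of_notMem h, norm_zero]
      exact NNReal.coe_nonneg _
  obtain ⟨ν, hν, hνm, hνd⟩ := exists_path_measure_of_le hV' hg (fun t => le_self_add) hgi
    hVg hκ hw' (S := S) (by rwa [hκμ S hS]) hT
  refine ⟨ν, hν, fun t => by rw [hνm, hκμ t t.2], ?_⟩
  let D : Set (ℝ × E) := {p | V' p.1 p.2 ≠ V p.1 p.2}
  have hD : MeasurableSet D := (measurableSet_eq_fun hV' hV).compl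
  have hDm : Measurable (D.indicator fun _ => (1 : ℝ≥0∞)) := measurable_const.indicator hD
  have h0 := lintegral_path_eq hT.le hνm hDm
  have h1 : ∫⁻ r in Ioc 0 T, ∫⁻ x, D.indicator (fun _ => 1) (r, x) ∂κ r = 0 := by
    rw [lintegral_eq_zero_iff hDm.lintegral_kernel_prod_right']
    filter_upwards [hVV'] with r hr
    simp only [Pi.zero_apply]
    rw [lintegral_eq_zero_iff (f := fun x => D.indicator (fun _ => (1 : ℝ≥0∞)) (r, x))
      (hDm.comp measurable_prodMk_left)]
    filter_upwards [hr] with x hx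
    exact indicator_of_notMem (fun h : (r, x) ∈ D => h hx) _
  have hDp := measurable_odeDefect_integrand hT.le hDm
  rw [h1, lintegral_eq_zero_iff hDp.lintegral_prod_right'] at h0
  filter_upwards [h0, hνd] with γ hγ hγd t
  have h2 : ∀ᵐ r ∂volume.restrict (Ioc 0 T),
      D.indicator (fun _ => (1 : ℝ≥0∞)) (r, γ (projIcc 0 T hT.le r)) = 0 := by
    simp only [Pi.zero_apply] at hγ
    rwa [lintegral_eq_zero_iff
      (f := fun r => D.indicator (fun _ => (1 : ℝ≥0∞)) (r, γ (projIcc 0 T hT.le r)))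
      (hDp.comp measurable_prodMk_left)] at hγ
  rw [← hγd t]
  simp only [odeDefect, Function.uncurry_apply_pair]
  congr 1
  refine intervalIntegral.integral_congr_ae ?_
  rw [ae_restrict_iff' measurableSet_Ioc] at h2
  filter_upwards [h2] with r hr hrt
  rw [uIoc_of_le t.2.1] at hrt
  by_contra hne
  have hmem : (r, γ (projIcc 0 T hT.le r)) ∈ D := fun h => hne h.symm
  have := hr ⟨hrt.1, hrt.2.trans t.2.2⟩
  rw [indicator_of_mem hmem] at this
  exact one_ne_zero this

end WeakSolution

/-- Two measures concentrated on a set on which a continuous map is injective agree as soon as their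
images under this map agree. -/
theorem measure_ext_of_map_eq {α β : Type*} [TopologicalSpace α] [PolishSpace α]
    [MeasurableSpace α] [BorelSpace α] [TopologicalSpace β] [T2Space β] [MeasurableSpace β]
    [BorelSpace β] {ν₁ ν₂ : Measure α} {f : α → β} (hf : Continuous f) {P : α → Prop}
    (h₁ : ∀ᵐ a ∂ν₁, P a) (h₂ : ∀ᵐ a ∂ν₂, P a)
    (hinj : ∀ a b, P a → P b → f a = f b → a = b) (h : ν₁.map f = ν₂.map f) : ν₁ = ν₂ := by
  have hP : ∀ᵐ a ∂(ν₁ + ν₂), P a := ae_add_measure_iff.2 ⟨h₁, h₂⟩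
  obtain ⟨Γ, hΓ, hΓm, hΓP⟩ := hP.exists_measurable_mem
  have hΓ12 : (∀ᵐ a ∂ν₁, a ∈ Γ) ∧ ∀ᵐ a ∂ν₂, a ∈ Γ := ae_add_measure_iff.1 hΓ
  have key : ∀ ν : Measure α, (∀ᵐ a ∂ν, a ∈ Γ) → ∀ A, MeasurableSet A →
      ν A = ν.map f (f '' (A ∩ Γ)) := by
    intro ν hν A hA
    rw [Measure.map_apply hf.measurable ((hA.inter hΓm).image_of_continuousOn_injOn hf.continuousOn
      fun a ha b hb hab => hinj a b (hΓP a ha.2) (hΓP b hb.2) hab)]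
    refine measure_congr ?_
    filter_upwards [hν] with a ha
    refine propext ⟨fun haA => ⟨a, ⟨haA, ha⟩, rfl⟩, ?_⟩
    rintro ⟨b, ⟨hbA, hbΓ⟩, hab⟩
    rwa [← hinj b a (hΓP b hbΓ) (hΓP a ha) hab]
  refine Measure.ext fun A hA => ?_
  rw [key ν₁ hΓ12.1 A hA, key ν₂ hΓ12.2 A hA, h]

end ContinuityEquation

/-- if for every `x` in a Borel set `B` there is at most one
ODE solution through `(S,x)`, and `μ` is a probability measure concentrated
on `B`, then there is at most one nonnegative-measure-valued solution of the
continuity equation with value `μ` at time `S`. -/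
theorem stmt10 (d : ℕ) (T : ℝ) (hT : 0 ≤ T)
    (V : ℝ → EuclideanSpace ℝ (Fin d) → EuclideanSpace ℝ (Fin d))
    (hV : Measurable (Function.uncurry V))
    (hbound : (∫⁻ t in Set.Icc (0:ℝ) T, ⨆ x, (‖V t x‖₊ : ℝ≥0∞)) < ⊤)
    (S : ℝ) (hS : S ∈ Set.Icc (0:ℝ) T)
    (B : Set (EuclideanSpace ℝ (Fin d))) (hB : MeasurableSet B)
    (huniq : ∀ x ∈ B, ∀ γ γ' : C(Set.Icc (0:ℝ) T, EuclideanSpace ℝ (Fin d)),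
      IsSolution T hT V γ → IsSolution T hT V γ' →
      γ ⟨S, hS⟩ = x → γ' ⟨S, hS⟩ = x → γ = γ')
    (μ : Measure (EuclideanSpace ℝ (Fin d))) (hμ : IsProbabilityMeasure μ)
    (hconc : μ Bᶜ = 0) :
    ∀ μ₁ μ₂ : ℝ → Measure (EuclideanSpace ℝ (Fin d)),
      (∀ t, IsFiniteMeasure (μ₁ t)) → (∀ t, IsFiniteMeasure (μ₂ t)) →
      IsMeasureSolution T V μ₁ → IsMeasureSolution T V μ₂ →
      μ₁ S = μ → μ₂ S = μ →
      ∀ t ∈ Set.Icc (0:ℝ) T, μ₁ t = μ₂ t := by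
  intro μ₁ μ₂ hμ₁ hμ₂ hs₁ hs₂ hS₁ hS₂ t ht
  rcases hT.eq_or_lt with rfl | hT0
  · have h1 : t = 0 := le_antisymm ht.2 ht.1
    have h2 : S = 0 := le_antisymm hS.2 hS.1
    rw [h1, ← h2, hS₁, hS₂]
  borelize C(Set.Icc (0 : ℝ) T, EuclideanSpace ℝ (Fin d))
  obtain ⟨ν₁, hν₁, hm₁, ho₁⟩ := ContinuityEquation.exists_path_measure_of_weak hV hbound hμ₁ hs₁ hS
    (hS₁ ▸ hμ) hT0
  obtain ⟨ν₂, hν₂, hm₂, ho₂⟩ := ContinuityEquation.exists_path_measure_of_weak hV hbound hμ₂ hs₂ hS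
    (hS₂ ▸ hμ) hT0
  have heval : Continuous fun γ : C(Set.Icc (0 : ℝ) T, EuclideanSpace ℝ (Fin d)) => γ ⟨S, hS⟩ :=
    ContinuousEvalConst.continuous_eval_const _
  have hB₀ : ∀ ν : Measure C(Set.Icc (0 : ℝ) T, EuclideanSpace ℝ (Fin d)),
      ν.map (fun γ => γ ⟨S, hS⟩) = μ → ∀ᵐ γ ∂ν, γ ⟨S, hS⟩ ∈ B := fun ν hν =>
    ae_of_ae_map heval.measurable.aemeasurable (hν ▸ mem_ae_iff.2 hconc)
  have heq₁ := (hm₁ ⟨S, hS⟩).trans hS₁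
  have heq₂ := (hm₂ ⟨S, hS⟩).trans hS₂
  have hν : ν₁ = ν₂ := ContinuityEquation.measure_ext_of_map_eq heval (ho₁.and (hB₀ ν₁ heq₁))
    (ho₂.and (hB₀ ν₂ heq₂))
    (fun γ γ' hγ hγ' hx => huniq _ hγ.2 γ γ' (fun t => sub_eq_zero.1 (hγ.1 t))
      (fun t => sub_eq_zero.1 (hγ'.1 t)) rfl hx.symm) (heq₁.trans heq₂.symm)
  rw [← hm₁ ⟨t, ht⟩, ← hm₂ ⟨t, ht⟩, hν]
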